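/- arXiv:2502.16039 — 3 statements merged into one kernel-verified Lean document; each statement's English description precedes it below -/
import Mathlib

section
/- Let n ≥ 2 be an integer and p > 0. Let f : [0,∞) × (0,∞) → (0,∞) be continuous and satisfy Condition (F). Then every positive C¹ solution u of the integral equation (IE) is radially symmetric about the origin (i.e. u(y) = u(z) whenever y, z ∈ ℝⁿ ∖ {0} and |y| = |z|) and is monotone nondecreasing with respect to the origin (i.e. for every unit vector e, the map t ↦ u(te) is nondecreasing on (0,∞)). -/
/-!
The proof is by the method of moving spheres. Off the origin a solution `u` equals the potential
`v x = ∫ |x - z|^p F(z) dz` of the density `F z = f (|z|, u z)`. Since `u > 0`, the integral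
converges at every `x ≠ 0`, hence at every `x` (`density_of_integrable`), and `v` is continuous and
positive on all of `ℝⁿ`. Write `v_{x,l}(ξ) = (|ξ-x|/l)^p v(ξ^{x,l})` for the Kelvin transform of
`v`. The claim from which everything follows is `v ≤ v_{x,l}` outside the sphere of radius `l`
centered at `x`, for all `0 < l < |x|` (`Good`, `good_all`).

Folding the integral onto the exterior of the sphere (`fold_antisymm`) gives
`v_{x,l}(ξ) - v(ξ) = ∫ K(ξ,z) (F(z) - (l/|z-x|)^{p + 2 n} F(z^{x,l})) dz` over `|z-x| > l`, where `K`
is positive for `|ξ-x| > l` (`kelvinKernel_pos`). If `v ≤ v_{x,l}`, Condition (F), with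
`a = u z` and `b = v_{x,l}(z)`, says precisely that the second factor is positive. So `v ≤ v_{x,l}`
improves itself, in three ways:
* it is strict outside the sphere (`kelvin_lt`);
* it is strict in the limit at infinity, after division by `|ξ-x|^p` (`kelvin_lt_infty`);
* the difference grows linearly away from the sphere (`kelvin_linear_growth`), which forces a strict
  sign of `∇v(y)·(y-x) - (p/2) v(y)` on the sphere (`radialDeriv_neg_of_sphere`), a Hopf lemma.

Conversely, if this expression is negative near a point of the sphere, or near the center `x`, then
`v ≤ v_{x,l'}` holds there for the relevant `l'`, by integration along rays
(`kelvin_le_of_radialDeriv`). At the center it equals `-(p/2) v(x) < 0`, so small spheres are good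
(`good_small`). The three strict inequalities and compactness show that the set of good radii
is open to the right (`good_larger`). It is closed by continuity, so it is all of `(0, |x|)`.

Finally, the sphere of radius `τ⁻¹ - s` centered at `τ⁻¹ e`, with `|e| = 1` and `s > 0`, tends to the
hyperplane `{⟨·, e⟩ = s}` as `τ → 0`, and the inequality becomes `v y ≤ v y'` for `⟨y, e⟩ < s`, with
`y'` the reflection of `y` (`pot_le_reflection`). Letting `s → 0` gives symmetry, as two points of
equal norm are exchanged by such a reflection; `y` on the ray through `e` gives monotonicity.
-/

open MeasureTheory

noncomputable section

/-- Inversion of `ξ` about the sphere of radius `l` centered at `x`. -/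
def inversion {n : ℕ} (x : EuclideanSpace ℝ (Fin n)) (l : ℝ)
    (ξ : EuclideanSpace ℝ (Fin n)) : EuclideanSpace ℝ (Fin n) :=
  x + (l ^ 2 / ‖ξ - x‖ ^ 2) • (ξ - x)


open Filter Topology Set Metric

namespace MovingSpheres

variable {n : ℕ}

local notation "𝔼" => EuclideanSpace ℝ (Fin n)

/-! ### Inversions -/

lemma inversion_eq (x : 𝔼) (l : ℝ) (z : 𝔼) :
    inversion x l z = EuclideanGeometry.inversion x l z := by
  simp [inversion, EuclideanGeometry.inversion, dist_eq_norm, div_pow, add_comm]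

lemma norm_inversion_sub (x : 𝔼) (l : ℝ) (z : 𝔼) :
    ‖inversion x l z - x‖ = l ^ 2 / ‖z - x‖ := by
  rw [inversion_eq, ← dist_eq_norm, EuclideanGeometry.dist_inversion_center, dist_eq_norm]

lemma inversion_inversion (x : 𝔼) {l : ℝ} (hl : 0 < l) (z : 𝔼) :
    inversion x l (inversion x l z) = z := by
  rw [inversion_eq, inversion_eq, EuclideanGeometry.inversion_inversion _ hl.ne']

lemma ne_center {x z : 𝔼} {l : ℝ} (hl : 0 < l) (hz : l < ‖z - x‖) : z ≠ x := by
  rintro rfl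
  simp at hz
  linarith

lemma norm_inversion_sub_inversion {x ξ z : 𝔼} {l : ℝ} (hξ : ξ ≠ x) (hz : z ≠ x) :
    ‖inversion x l ξ - inversion x l z‖ = l ^ 2 / (‖ξ - x‖ * ‖z - x‖) * ‖ξ - z‖ := by
  simp only [inversion_eq, ← dist_eq_norm]
  exact EuclideanGeometry.dist_inversion_inversion hξ hz l

lemma norm_inversion_sub_lt {x z : 𝔼} {l : ℝ} (hl : 0 < l) (hz : l < ‖z - x‖) :
    ‖inversion x l z - x‖ < l := by
  rw [norm_inversion_sub, div_lt_iff₀ (hl.trans hz)]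
  nlinarith

/-- The inverse of an exterior point is not the origin, since the sphere does not enclose it. -/
lemma inversion_ne_zero {x z : 𝔼} {l : ℝ} (hl : 0 < l) (hlx : l ≤ ‖x‖) (hz : l < ‖z - x‖) :
    inversion x l z ≠ 0 := by
  intro h
  have := norm_inversion_sub_lt hl hz
  rw [h, zero_sub, norm_neg] at this
  linarith

lemma tendsto_inversion {x y : 𝔼} {l : ℝ} (hy : y ≠ x) :
    Tendsto (fun q : ℝ × 𝔼 => inversion x q.1 q.2) (𝓝 (l, y)) (𝓝 (inversion x l y)) := by
  simp only [inversion_eq]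
  exact tendsto_const_nhds.inversion (continuous_fst.tendsto (l, y)) (continuous_snd.tendsto (l, y)) hy

/-- The image of the exterior of a sphere is the punctured open ball. -/
lemma image_inversion {x : 𝔼} {l : ℝ} (hl : 0 < l) :
    (inversion x l) '' {z | l < ‖z - x‖} = ball x l \ {x} := by
  ext w
  simp only [mem_image, mem_ofPred_eq, Set.mem_sdiff, mem_ball, dist_eq_norm, mem_singleton_iff]
  constructor
  · rintro ⟨z, hz, rfl⟩
    refine ⟨norm_inversion_sub_lt hl hz, fun h => ?_⟩
    have h1 := norm_inversion_sub x l z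
    rw [h, sub_self, norm_zero] at h1
    have : 0 < l ^ 2 / ‖z - x‖ := div_pos (by positivity) (hl.trans hz)
    linarith
  · rintro ⟨hw, hwx⟩
    refine ⟨inversion x l w, ?_, inversion_inversion x hl w⟩
    have : 0 < ‖w - x‖ := norm_pos_iff.2 (sub_ne_zero.2 hwx)
    rw [norm_inversion_sub, lt_div_iff₀ this]
    nlinarith

lemma measurableSet_ext (x : 𝔼) (l : ℝ) : MeasurableSet {z : 𝔼 | l < ‖z - x‖} :=
  measurableSet_lt measurable_const (by fun_prop)

/-! ### Change of variables -/

/-- The Jacobian of the inversion, which is a multiple of a reflection. -/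
lemma abs_det_fderiv (x : 𝔼) {l : ℝ} (hl : 0 < l) (z : 𝔼) :
    |((l / dist z x) ^ 2 • ((ℝ ∙ (z - x))ᗮ.reflection : 𝔼 →L[ℝ] 𝔼)).det| =
      (l / ‖z - x‖) ^ (2 * n) := by
  have h1 : |((ℝ ∙ (z - x))ᗮ.reflection : 𝔼 →L[ℝ] 𝔼).det| = 1 := by
    have := Submodule.det_reflection (ℝ ∙ (z - x))ᗮ
    have h2 : ((ℝ ∙ (z - x))ᗮ.reflection : 𝔼 →L[ℝ] 𝔼).det = 
      (-1) ^ Module.finrank ℝ ((ℝ ∙ (z - x))ᗮᗮ : Submodule ℝ 𝔼) := this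
    rw [h2]; simp
  have h2 : ((l / dist z x) ^ 2 • ((ℝ ∙ (z - x))ᗮ.reflection : 𝔼 →L[ℝ] 𝔼)).det =
     ((l / dist z x) ^ 2) ^ n * ((ℝ ∙ (z - x))ᗮ.reflection : 𝔼 →L[ℝ] 𝔼).det := by
    have := LinearMap.det_smul ((l / dist z x) ^ 2) (((ℝ ∙ (z - x))ᗮ.reflection : 𝔼 →L[ℝ] 𝔼) : 𝔼 →ₗ[ℝ] 𝔼)
    rw [finrank_euclideanSpace_fin] at this
    exact this
  rw [h2, abs_mul, h1, mul_one, dist_eq_norm, ← pow_mul, abs_of_nonneg]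
  exact pow_nonneg (div_nonneg hl.le (norm_nonneg _)) _

/-- An integral over the whole space, folded onto the exterior of a sphere by inversion. -/
lemma fold_integral (hn : 2 ≤ n) (x : 𝔼) {l : ℝ} (hl : 0 < l) {G : 𝔼 → ℝ} (hG : Integrable G) :
    IntegrableOn (fun z => (l / ‖z - x‖) ^ (2 * n) * G (inversion x l z)) {z | l < ‖z - x‖} ∧
    ∫ z, G z = ∫ z in {z | l < ‖z - x‖},
      (G z + (l / ‖z - x‖) ^ (2 * n) * G (inversion x l z)) := by
  have hm := measurableSet_ext x l
  have hinj : InjOn (inversion x l) {z | l < ‖z - x‖} := fun a _ b _ hab => by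
    rw [← inversion_inversion x hl a, hab, inversion_inversion x hl b]
  have hder : ∀ z ∈ {z : 𝔼 | l < ‖z - x‖}, HasFDerivWithinAt (inversion x l)
      ((l / dist z x) ^ 2 • ((ℝ ∙ (z - x))ᗮ.reflection : 𝔼 →L[ℝ] 𝔼)) {z | l < ‖z - x‖} z := by
    intro z hz
    have : inversion x l = EuclideanGeometry.inversion x l := funext (inversion_eq x l)
    rw [this]
    exact (EuclideanGeometry.hasFDerivAt_inversion (ne_center hl hz)).hasFDerivWithinAt
  have key1 := integrableOn_image_iff_integrableOn_abs_det_fderiv_smul volume hm hder hinj G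
  have key2 := integral_image_eq_integral_abs_det_fderiv_smul volume hm hder hinj G
  simp only [abs_det_fderiv x hl, smul_eq_mul, image_inversion hl] at key1 key2
  have hI := key1.1 hG.integrableOn
  refine ⟨hI, ?_⟩
  rw [integral_add hG.integrableOn hI, ← key2, ← integral_add_compl hm hG]
  congr 1
  -- the complement of the exterior is the punctured ball, up to the sphere and its center
  refine setIntegral_congr_set ?_
  have : Nontrivial 𝔼 := by
    have : Nonempty (Fin n) := ⟨⟨0, by omega⟩⟩
    infer_instance
  have h1 : ∀ᵐ z : 𝔼, z ∉ sphere x l :=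
    measure_eq_zero_iff_ae_notMem.1 (Measure.addHaar_sphere volume x l)
  have h2 : ∀ᵐ z : 𝔼, z ∉ ({x} : Set 𝔼) :=
    measure_eq_zero_iff_ae_notMem.1 (measure_singleton x)
  filter_upwards [h1, h2] with z hz1 hz2
  apply propext
  change z ∈ {z | l < ‖z - x‖}ᶜ ↔ z ∈ ball x l \ {x}
  simp only [mem_sphere, dist_eq_norm, mem_singleton_iff] at hz1 hz2
  simp only [mem_compl_iff, mem_ofPred_eq, not_lt, Set.mem_sdiff, mem_ball, dist_eq_norm,
    mem_singleton_iff, hz2, not_false_eq_true, and_true]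
  exact ⟨fun h => lt_of_le_of_ne h hz1, le_of_lt⟩

/-- If a kernel `k` is antisymmetric under inversion, up to the conformal factor, then the integral
of `k F` reduces to the exterior of the sphere, with `F` replaced by its excess over its
Kelvin transform. -/
lemma fold_antisymm (hn : 2 ≤ n) {p : ℝ} (x : 𝔼) {l : ℝ} (hl : 0 < l) {F k : 𝔼 → ℝ}
    (hG : Integrable (fun z => k z * F z))
    (hk : ∀ z, l < ‖z - x‖ → k (inversion x l z) = - ((l / ‖z - x‖) ^ p * k z)) :
    IntegrableOn (fun z => k z *
      (F z - (l / ‖z - x‖) ^ (p + 2 * (n : ℝ)) * F (inversion x l z))) {z | l < ‖z - x‖} ∧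
    ∫ z, k z * F z = ∫ z in {z | l < ‖z - x‖}, k z *
      (F z - (l / ‖z - x‖) ^ (p + 2 * (n : ℝ)) * F (inversion x l z)) := by
  obtain ⟨h1, h2⟩ := fold_integral hn x hl hG
  have heq : ∀ z ∈ {z : 𝔼 | l < ‖z - x‖}, k z * F z + (l / ‖z - x‖) ^ (2 * n) *
      (k (inversion x l z) * F (inversion x l z)) = k z *
      (F z - (l / ‖z - x‖) ^ (p + 2 * (n : ℝ)) * F (inversion x l z)) := by
    intro z hz
    have : (l / ‖z - x‖) ^ (p + 2 * (n : ℝ)) = (l / ‖z - x‖) ^ p * (l / ‖z - x‖) ^ (2 * n) := by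
      rw [Real.rpow_add (div_pos hl (hl.trans hz)), ← Real.rpow_natCast _ (2 * n)]
      push_cast
      rfl
    rw [hk z hz, this]
    ring
  have hm := measurableSet_ext x l
  exact ⟨(hG.integrableOn.add h1).congr_fun heq hm, h2.trans (setIntegral_congr_fun hm heq)⟩

/-! ### The Kelvin kernel -/

/-- The kernel of `v_{x,l}(ξ) - v(ξ)`, where `v_{x,l}(ξ) = (|ξ-x|/l)^p v(ξ^{x,l})` is the Kelvin
transform of a potential `v(ξ) = ∫ |ξ-z|^p F(z) dz`. -/
def kelvinKernel (p : ℝ) (x : EuclideanSpace ℝ (Fin n)) (l : ℝ)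
    (ξ z : EuclideanSpace ℝ (Fin n)) : ℝ :=
  (‖ξ - x‖ / l) ^ p * ‖inversion x l ξ - z‖ ^ p - ‖ξ - z‖ ^ p

/-- The identity behind the sign of the Kelvin kernel: it is positive when `ξ` and `z` lie on the
same side of the sphere. -/
lemma kernel_sq_identity {x ξ z : 𝔼} {l : ℝ} (hl : 0 < l) (hξ : ξ ≠ x) :
    (‖ξ - x‖ / l * ‖inversion x l ξ - z‖) ^ 2 - ‖ξ - z‖ ^ 2 =
      (‖ξ - x‖ ^ 2 - l ^ 2) * (‖z - x‖ ^ 2 - l ^ 2) / l ^ 2 := by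
  have ha : ‖ξ - x‖ ≠ 0 := norm_ne_zero_iff.2 (sub_ne_zero.2 hξ)
  have e1 : inversion x l ξ - z = (l ^ 2 / ‖ξ - x‖ ^ 2) • (ξ - x) - (z - x) := by
    simp only [inversion]; abel
  have e2 : ξ - z = (ξ - x) - (z - x) := by abel
  rw [e1, e2]
  generalize ξ - x = a at *
  generalize z - x = b at *
  rw [mul_pow, norm_sub_sq_real, norm_sub_sq_real, norm_smul, real_inner_smul_left,
    mul_pow, Real.norm_eq_abs, sq_abs]
  field_simp
  ring

/-- Quantitative strict monotonicity of `t ↦ t ^ p`. -/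
lemma rpow_sub_rpow_ge {p A B : ℝ} (hp : 0 < p) (hB : 0 ≤ B) (hA : 0 < A) :
    p / 2 * B ^ p * ((A ^ 2 - B ^ 2) / A ^ 2) ≤ A ^ p - B ^ p := by
  rcases hB.eq_or_lt with rfl | hB
  · rw [Real.zero_rpow hp.ne']
    have := Real.rpow_nonneg hA.le p
    simpa using this
  have h1 : A ^ p = B ^ p * Real.exp (p / 2 * Real.log (A ^ 2 / B ^ 2)) := by
    rw [Real.log_div (by positivity) (by positivity), Real.log_pow, Real.log_pow,
      Real.rpow_def_of_pos hA, Real.rpow_def_of_pos hB, ← Real.exp_add]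
    congr 1
    push_cast
    ring
  have h2 := Real.add_one_le_exp (p / 2 * Real.log (A ^ 2 / B ^ 2))
  have h3 := Real.one_sub_inv_le_log_of_pos (x := A ^ 2 / B ^ 2) (by positivity)
  have h4 : (A ^ 2 - B ^ 2) / A ^ 2 = 1 - (A ^ 2 / B ^ 2)⁻¹ := by field_simp
  have hBp := Real.rpow_pos_of_pos hB p
  rw [h4, h1]
  have h5 : p / 2 * (1 - (A ^ 2 / B ^ 2)⁻¹) ≤ Real.exp (p / 2 * Real.log (A ^ 2 / B ^ 2)) - 1 := by
    have := mul_le_mul_of_nonneg_left h3 (by positivity : 0 ≤ p / 2)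
    linarith
  calc _ = B ^ p * (p / 2 * (1 - (A ^ 2 / B ^ 2)⁻¹)) := by ring
    _ ≤ B ^ p * _ := mul_le_mul_of_nonneg_left h5 hBp.le
    _ = _ := by ring

lemma kelvinKernel_eq {p : ℝ} {x : 𝔼} {l : ℝ} (hl : 0 < l) (ξ z : 𝔼) :
    kelvinKernel p x l ξ z = (‖ξ - x‖ / l * ‖inversion x l ξ - z‖) ^ p - ‖ξ - z‖ ^ p := by
  rw [kelvinKernel, Real.mul_rpow (by positivity) (by positivity)]

lemma kelvinKernel_pos {p : ℝ} (hp : 0 < p) {x ξ z : 𝔼} {l : ℝ} (hl : 0 < l)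
    (hξ : l < ‖ξ - x‖) (hz : l < ‖z - x‖) : 0 < kelvinKernel p x l ξ z := by
  rw [kelvinKernel_eq hl, sub_pos]
  apply Real.rpow_lt_rpow (norm_nonneg _) _ hp
  apply lt_of_pow_lt_pow_left₀ 2 (by positivity)
  have h := kernel_sq_identity (z := z) hl (ne_center hl hξ)
  have : 0 < (‖ξ - x‖ ^ 2 - l ^ 2) * (‖z - x‖ ^ 2 - l ^ 2) / l ^ 2 := by
    have h1 : 0 < ‖ξ - x‖ ^ 2 - l ^ 2 := by nlinarith
    have h2 : 0 < ‖z - x‖ ^ 2 - l ^ 2 := by nlinarith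
    positivity
  linarith

lemma kelvinKernel_antisymm {p : ℝ} {x ξ z : 𝔼} {l : ℝ} (hl : 0 < l)
    (hξ : l < ‖ξ - x‖) (hz : l < ‖z - x‖) :
    kelvinKernel p x l ξ (inversion x l z) = - ((l / ‖z - x‖) ^ p * kelvinKernel p x l ξ z) := by
  have hξx := ne_center hl hξ
  have hzx := ne_center hl hz
  have ha : 0 < ‖ξ - x‖ := hl.trans hξ
  have hb : 0 < ‖z - x‖ := hl.trans hz
  have hIx : inversion x l ξ ≠ x := fun h => by
    have := norm_inversion_sub x l ξ
    rw [h, sub_self, norm_zero] at this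
    have h2 : 0 < l ^ 2 / ‖ξ - x‖ := by positivity
    linarith
  have e1 : ‖ξ - x‖ / l * ‖inversion x l ξ - inversion x l z‖ = l / ‖z - x‖ * ‖ξ - z‖ := by
    rw [norm_inversion_sub_inversion hξx hzx]; field_simp
  have e2 : ‖ξ - inversion x l z‖ =
      l / ‖z - x‖ * (‖ξ - x‖ / l * ‖inversion x l ξ - z‖) := by
    have := norm_inversion_sub_inversion (l := l) hIx hzx
    rw [inversion_inversion x hl, norm_inversion_sub] at this
    rw [this]; field_simp
  rw [kelvinKernel_eq hl, kelvinKernel_eq hl, e1, e2,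
    Real.mul_rpow (by positivity) (by positivity) (x := l / ‖z - x‖),
    Real.mul_rpow (by positivity) (by positivity) (x := l / ‖z - x‖)]
  ring

/-- On an annulus away from the sphere, the kernel is bounded below by the distance of `ξ` to the
sphere. This is the quantitative ingredient of the Hopf lemma. -/
lemma kelvinKernel_lower {p : ℝ} (hp : 0 < p) (x : 𝔼) {l : ℝ} (hl : 0 < l) :
    ∃ c > 0, ∀ ξ z : 𝔼, l < ‖ξ - x‖ → ‖ξ - x‖ < l + 1 / 2 → l + 1 < ‖z - x‖ → ‖z - x‖ < l + 2 →
      c * (‖ξ - x‖ - l) ≤ kelvinKernel p x l ξ z := by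
  set A0 : ℝ := (l + 1 / 2) / l * (2 * l + 2) with hA0
  have hA0p : 0 < A0 := by positivity
  refine ⟨p / 2 * (1 / 2) ^ p * (2 / l / A0 ^ 2), by positivity, fun ξ z h1 h2 h3 h4 => ?_⟩
  rw [kelvinKernel_eq hl]
  have hid := kernel_sq_identity (z := z) hl (ne_center hl h1)
  set A := ‖ξ - x‖ / l * ‖inversion x l ξ - z‖ with hA
  set B := ‖ξ - z‖ with hB
  have hI := norm_inversion_sub_lt hl h1
  have t1 : ‖inversion x l ξ - z‖ ≤ ‖inversion x l ξ - x‖ + ‖z - x‖ := by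
    rw [norm_sub_rev z x]; exact norm_sub_le_norm_sub_add_norm_sub _ _ _
  have t2 : ‖z - x‖ ≤ ‖inversion x l ξ - z‖ + ‖inversion x l ξ - x‖ := by
    rw [norm_sub_rev _ z]; exact norm_sub_le_norm_sub_add_norm_sub _ _ _
  have t3 : ‖z - x‖ ≤ B + ‖ξ - x‖ := by
    rw [hB, norm_sub_rev ξ z]; exact norm_sub_le_norm_sub_add_norm_sub _ _ _
  have ha : 0 < ‖ξ - x‖ := hl.trans h1
  have hAp : 0 < A := mul_pos (by positivity) (by linarith)
  have hAle : A ≤ A0 := by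
    rw [hA, hA0]
    gcongr
    linarith
  have hBge : 1 / 2 ≤ B := by linarith
  refine le_trans ?_ (rpow_sub_rpow_ge hp (by linarith) hAp)
  have hε : 2 / l * (‖ξ - x‖ - l) ≤ A ^ 2 - B ^ 2 := by
    rw [hid, le_div_iff₀ (by positivity)]
    have e1 : 2 * l * (‖ξ - x‖ - l) ≤ ‖ξ - x‖ ^ 2 - l ^ 2 := by nlinarith
    have e2 : 1 ≤ ‖z - x‖ ^ 2 - l ^ 2 := by nlinarith
    have e3 : 0 ≤ 2 * l * (‖ξ - x‖ - l) := by
      have := sub_pos.2 h1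
      positivity
    calc 2 / l * (‖ξ - x‖ - l) * l ^ 2 = 2 * l * (‖ξ - x‖ - l) := by field_simp
      _ ≤ 2 * l * (‖ξ - x‖ - l) * (‖z - x‖ ^ 2 - l ^ 2) := le_mul_of_one_le_right e3 e2
      _ ≤ _ := mul_le_mul_of_nonneg_right e1 (by linarith)
  have hd : 0 ≤ ‖ξ - x‖ - l := by linarith
  have hε0 : 0 ≤ A ^ 2 - B ^ 2 := le_trans (by positivity) hε
  calc p / 2 * (1 / 2) ^ p * (2 / l / A0 ^ 2) * (‖ξ - x‖ - l)
      = p / 2 * (1 / 2) ^ p * ((2 / l * (‖ξ - x‖ - l)) / A0 ^ 2) := by ring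
    _ ≤ p / 2 * B ^ p * ((A ^ 2 - B ^ 2) / A ^ 2) := by gcongr

/-! ### Potentials -/

/-- A density whose potential `∫ |x-z|^p F(z) dz` converges everywhere. Positivity is only required
off the origin, since `F` stands for `z ↦ f (|z|, u z)`, where `u 0` is arbitrary. -/
structure Density (p : ℝ) (F : EuclideanSpace ℝ (Fin n) → ℝ) : Prop where
  pos : ∀ z, z ≠ 0 → 0 < F z
  integrable : Integrable F
  integrable_mul : ∀ x, Integrable fun z => ‖x - z‖ ^ p * F z

/-- The potential of `F`; for the density of a solution it extends `u` continuously to `0`. -/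
def pot (p : ℝ) (F : EuclideanSpace ℝ (Fin n) → ℝ) (x : EuclideanSpace ℝ (Fin n)) : ℝ :=
  ∫ z, ‖x - z‖ ^ p * F z

lemma ae_ne (hn : 2 ≤ n) (a : 𝔼) : ∀ᵐ z : 𝔼, z ≠ a := by
  have : Nontrivial 𝔼 := by
    have : Nonempty (Fin n) := ⟨⟨0, by omega⟩⟩
    infer_instance
  exact measure_eq_zero_iff_ae_notMem.1 (measure_singleton a)

lemma rpow_norm_sub_le {p : ℝ} (hp : 0 < p) (x y z : 𝔼) :
    ‖y - z‖ ^ p ≤ 2 ^ p * (‖y - x‖ ^ p + ‖x - z‖ ^ p) := by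
  have h1 : ‖y - z‖ ≤ 2 * max ‖y - x‖ ‖x - z‖ := by
    have := norm_sub_le_norm_sub_add_norm_sub y x z
    have := le_max_left ‖y - x‖ ‖x - z‖
    have := le_max_right ‖y - x‖ ‖x - z‖
    linarith
  have ha := Real.rpow_nonneg (norm_nonneg (y - x)) p
  have hb := Real.rpow_nonneg (norm_nonneg (x - z)) p
  calc ‖y - z‖ ^ p ≤ (2 * max ‖y - x‖ ‖x - z‖) ^ p :=
        Real.rpow_le_rpow (norm_nonneg _) h1 hp.le
    _ = 2 ^ p * (max ‖y - x‖ ‖x - z‖) ^ p := Real.mul_rpow (by norm_num) (by positivity)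
    _ ≤ _ := by
        gcongr
        rcases max_choice ‖y - x‖ ‖x - z‖ with h | h <;> rw [h] <;> linarith

section Potential

variable {p : ℝ} {F : EuclideanSpace ℝ (Fin n) → ℝ}

lemma pot_pos (hn : 2 ≤ n) (hF : Density p F) (x : 𝔼) : 0 < pot p F x := by
  have hpos : ∀ᵐ z : 𝔼, 0 < ‖x - z‖ ^ p * F z := by
    filter_upwards [ae_ne hn 0, ae_ne hn x] with z h0 hx
    exact mul_pos (Real.rpow_pos_of_pos (norm_pos_iff.2 (sub_ne_zero.2 hx.symm)) _) (hF.pos z h0)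
  rw [pot, integral_pos_iff_support_of_nonneg_ae (hpos.mono fun z h => h.le) (hF.integrable_mul x)]
  have : (Function.support fun z => ‖x - z‖ ^ p * F z) =ᵐ[volume] univ :=
    eventuallyEq_univ.2 (hpos.mono fun z h => h.ne')
  rw [measure_congr this]
  exact Measure.measure_univ_pos.2 (NeZero.ne _)

lemma continuous_pot (hn : 2 ≤ n) (hp : 0 < p) (hF : Density p F) : Continuous (pot p F) := by
  rw [continuous_iff_continuousAt]
  intro x
  refine continuousAt_of_dominated (bound := fun z => 2 ^ p * (1 * F z + ‖x - z‖ ^ p * F z))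
    (Eventually.of_forall fun y => (hF.integrable_mul y).aestronglyMeasurable) ?_
    (((hF.integrable.const_mul 1).add (hF.integrable_mul x)).const_mul _) ?_
  · filter_upwards [ball_mem_nhds x one_pos] with y hy
    filter_upwards [ae_ne hn 0] with z hz
    have h := hF.pos z hz
    rw [Real.norm_of_nonneg (by positivity)]
    rw [mem_ball, dist_eq_norm] at hy
    have h1 : ‖y - x‖ ^ p ≤ 1 := Real.rpow_le_one (norm_nonneg _) hy.le hp.le
    calc _ ≤ 2 ^ p * (‖y - x‖ ^ p + ‖x - z‖ ^ p) * F z := by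
          gcongr; exact rpow_norm_sub_le hp x y z
      _ ≤ 2 ^ p * (1 + ‖x - z‖ ^ p) * F z := by gcongr
      _ = _ := by ring
  · refine Eventually.of_forall fun z => ?_
    exact (((continuous_id.sub continuous_const).norm.rpow_const fun _ => Or.inr hp.le).mul
      continuous_const).continuousAt

lemma pot_growth (hn : 2 ≤ n) (hp : 0 < p) (hF : Density p F) (x : 𝔼) {r : ℝ} (hr : 0 < r) :
    ∃ C > 0, ∀ y, r ≤ ‖y - x‖ → pot p F y ≤ C * ‖y - x‖ ^ p := by
  have hM : 0 ≤ ∫ z, F z := integral_nonneg_of_ae ((ae_ne hn 0).mono fun z hz => (hF.pos z hz).le)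
  have hv := pot_pos hn hF x
  have hrp := Real.rpow_pos_of_pos hr p
  refine ⟨2 ^ p * ((∫ z, F z) + pot p F x / r ^ p), by positivity, fun y hy => ?_⟩
  have h1 : pot p F y ≤ 2 ^ p * (‖y - x‖ ^ p * (∫ z, F z) + pot p F x) := by
    have hi := ((hF.integrable.const_mul (‖y - x‖ ^ p)).add (hF.integrable_mul x)).const_mul (2 ^ p)
    calc pot p F y ≤ ∫ z, 2 ^ p * (‖y - x‖ ^ p * F z + ‖x - z‖ ^ p * F z) := by
          refine integral_mono_ae (hF.integrable_mul y) hi ?_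
          filter_upwards [ae_ne hn 0] with z hz
          have h := hF.pos z hz
          calc _ ≤ 2 ^ p * (‖y - x‖ ^ p + ‖x - z‖ ^ p) * F z := by
                gcongr; exact rpow_norm_sub_le hp x y z
            _ = _ := by ring
      _ = _ := by
          rw [integral_const_mul, integral_add (hF.integrable.const_mul _) (hF.integrable_mul x),
            integral_const_mul, pot]
  have h2 : pot p F x ≤ pot p F x / r ^ p * ‖y - x‖ ^ p := by
    rw [div_mul_eq_mul_div, le_div_iff₀ hrp]
    gcongr
  calc _ ≤ _ := h1
    _ ≤ 2 ^ p * (‖y - x‖ ^ p * (∫ z, F z) + pot p F x / r ^ p * ‖y - x‖ ^ p) := by gcongr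
    _ = _ := by ring

lemma pot_tendsto (hn : 2 ≤ n) (hp : 0 < p) (hF : Density p F) (x : 𝔼) :
    Tendsto (fun y => pot p F y / ‖y - x‖ ^ p) (Bornology.cobounded 𝔼) (𝓝 (∫ z, F z)) := by
  have hcg : (Bornology.cobounded 𝔼).IsCountablyGenerated := by
    rw [← comap_norm_atTop]; infer_instance
  have hnorm : Tendsto (fun y : 𝔼 => ‖y - x‖) (Bornology.cobounded 𝔼) atTop := by
    refine tendsto_atTop_mono (fun y => norm_sub_norm_le y x) ?_
    exact tendsto_atTop_add_const_right _ _ tendsto_norm_cobounded_atTop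
  have heq : (fun y => pot p F y / ‖y - x‖ ^ p) =
      fun y => ∫ z, (‖y - z‖ ^ p / ‖y - x‖ ^ p) * F z := by
    funext y
    rw [pot, ← integral_div]
    congr 1
    funext z
    ring
  rw [heq]
  refine tendsto_integral_filter_of_dominated_convergence
    (fun z => 2 ^ p * (1 * F z + ‖x - z‖ ^ p * F z)) ?_ ?_
    (((hF.integrable.const_mul 1).add (hF.integrable_mul x)).const_mul _) ?_
  · refine Eventually.of_forall fun y => ?_
    have := ((hF.integrable_mul y).div_const (‖y - x‖ ^ p)).aestronglyMeasurable
    refine this.congr (Eventually.of_forall fun z => ?_)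
    dsimp only
    ring
  · filter_upwards [hnorm.eventually_ge_atTop 1] with y hy
    filter_upwards [ae_ne hn 0] with z hz
    have h := hF.pos z hz
    rw [Real.norm_of_nonneg (by positivity)]
    have h1 : 1 ≤ ‖y - x‖ ^ p := Real.one_le_rpow hy hp.le
    have h2 : ‖y - z‖ ^ p / ‖y - x‖ ^ p ≤ 2 ^ p * (1 + ‖x - z‖ ^ p) := by
      rw [div_le_iff₀ (by positivity)]
      refine (rpow_norm_sub_le hp x y z).trans ?_
      rw [mul_assoc]
      gcongr
      have := mul_le_mul_of_nonneg_left h1 (Real.rpow_nonneg (norm_nonneg (x - z)) p)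
      linarith
    calc _ ≤ 2 ^ p * (1 + ‖x - z‖ ^ p) * F z := by gcongr
      _ = _ := by ring
  · refine Eventually.of_forall fun z => ?_
    have h1 : Tendsto (fun y : 𝔼 => ‖y - z‖ / ‖y - x‖) (Bornology.cobounded 𝔼) (𝓝 1) := by
      have h0 : Tendsto (fun y : 𝔼 => ‖x - z‖ / ‖y - x‖) (Bornology.cobounded 𝔼) (𝓝 0) :=
        hnorm.const_div_atTop _
      rw [tendsto_iff_norm_sub_tendsto_zero]
      refine squeeze_zero' (Eventually.of_forall fun _ => norm_nonneg _) ?_ h0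
      filter_upwards [hnorm.eventually_gt_atTop 0] with y hy
      rw [div_sub_one hy.ne', norm_div, norm_norm]
      gcongr
      have := abs_norm_sub_norm_le (y - z) (y - x)
      rwa [sub_sub_sub_cancel_left] at this
    have h2 := (h1.rpow_const (p := p) (Or.inl one_ne_zero)).mul_const (F z)
    rw [Real.one_rpow, one_mul] at h2
    refine h2.congr fun y => ?_
    rw [Real.div_rpow (norm_nonneg _) (norm_nonneg _)]

end Potential

/-! ### The difference between a potential and its Kelvin transform -/

/-- The excess of a density `F` over its Kelvin transform. -/
def excess (p : ℝ) (x : EuclideanSpace ℝ (Fin n)) (l : ℝ) (F : EuclideanSpace ℝ (Fin n) → ℝ)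
    (z : EuclideanSpace ℝ (Fin n)) : ℝ :=
  F z - (l / ‖z - x‖) ^ (p + 2 * (n : ℝ)) * F (inversion x l z)

/-- The moving sphere inequality `v ≤ v_{x,l}` outside the sphere, for the potential `v` of `F`. -/
def Good (p : ℝ) (F : EuclideanSpace ℝ (Fin n) → ℝ) (x : EuclideanSpace ℝ (Fin n))
    (l : ℝ) : Prop :=
  ∀ y, l < ‖y - x‖ → pot p F y ≤ (‖y - x‖ / l) ^ p * pot p F (inversion x l y)

section Comparison

variable {p : ℝ} {F : EuclideanSpace ℝ (Fin n) → ℝ}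

lemma kelvin_sub (hn : 2 ≤ n) (hF : Density p F) {x ξ : 𝔼} {l : ℝ} (hl : 0 < l)
    (hξ : l < ‖ξ - x‖) :
    IntegrableOn (fun z => kelvinKernel p x l ξ z * excess p x l F z) {z | l < ‖z - x‖} ∧
    (‖ξ - x‖ / l) ^ p * pot p F (inversion x l ξ) - pot p F ξ =
      ∫ z in {z | l < ‖z - x‖}, kelvinKernel p x l ξ z * excess p x l F z := by
  have i1 := (hF.integrable_mul (inversion x l ξ)).const_mul ((‖ξ - x‖ / l) ^ p)
  have heq : (fun z => kelvinKernel p x l ξ z * F z) = fun z =>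
      (‖ξ - x‖ / l) ^ p * (‖inversion x l ξ - z‖ ^ p * F z) - ‖ξ - z‖ ^ p * F z := by
    funext z; rw [kelvinKernel]; ring
  have hG : Integrable fun z => kelvinKernel p x l ξ z * F z := by
    rw [heq]; exact i1.sub (hF.integrable_mul ξ)
  obtain ⟨h1, h2⟩ := fold_antisymm hn x hl hG fun z hz => kelvinKernel_antisymm hl hξ hz
  refine ⟨h1, ?_⟩
  simp only [excess]
  rw [← h2, heq, integral_sub i1 (hF.integrable_mul ξ), integral_const_mul, pot, pot]

/-- The limit of `kelvin_sub` as `ξ` tends to infinity, after division by `|ξ-x|^p`. -/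
lemma kelvin_sub_infty (hn : 2 ≤ n) (hF : Density p F) (x : 𝔼) {l : ℝ} (hl : 0 < l) :
    IntegrableOn (fun z => ((‖z - x‖ / l) ^ p - 1) * excess p x l F z) {z | l < ‖z - x‖} ∧
    (1 / l) ^ p * pot p F x - ∫ z, F z =
      ∫ z in {z | l < ‖z - x‖}, ((‖z - x‖ / l) ^ p - 1) * excess p x l F z := by
  have i1 := (hF.integrable_mul x).const_mul ((1 / l) ^ p)
  have heq : (fun z => ((‖z - x‖ / l) ^ p - 1) * F z) = fun z =>
      (1 / l) ^ p * (‖x - z‖ ^ p * F z) - F z := by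
    funext z
    rw [norm_sub_rev x z, div_eq_mul_one_div, Real.mul_rpow (by positivity) (by positivity)]
    ring
  have hG : Integrable fun z => ((‖z - x‖ / l) ^ p - 1) * F z := by
    rw [heq]; exact i1.sub hF.integrable
  obtain ⟨h1, h2⟩ := fold_antisymm (p := p) hn x hl hG fun z hz => by
    have hb : 0 < ‖z - x‖ := hl.trans hz
    have e1 : ‖inversion x l z - x‖ / l = l / ‖z - x‖ := by
      rw [norm_inversion_sub]; field_simp
    have e2 : (l / ‖z - x‖) ^ p * (‖z - x‖ / l) ^ p = 1 := by
      rw [← Real.mul_rpow (by positivity) (by positivity)]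
      field_simp
      exact Real.one_rpow p
    rw [e1]
    linear_combination e2
  refine ⟨h1, ?_⟩
  simp only [excess]
  rw [← h2, heq, integral_sub i1 hF.integrable, integral_const_mul, pot]

lemma setIntegral_pos_of_pos (hn : 2 ≤ n) {s : Set 𝔼} (hs : IsOpen s) (hne : s.Nonempty)
    {g : 𝔼 → ℝ} (hg : IntegrableOn g s) (hpos : ∀ z ∈ s, z ≠ 0 → 0 < g z) :
    0 < ∫ z in s, g z := by
  have h0 : ∀ᵐ z ∂(volume.restrict s), 0 < g z := by
    filter_upwards [ae_restrict_mem hs.measurableSet, ae_restrict_of_ae (ae_ne hn 0)] with z h1 h2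
    exact hpos z h1 h2
  rw [setIntegral_pos_iff_support_of_nonneg_ae (h0.mono fun z h => h.le) hg]
  have : (Function.support g ∩ s : Set 𝔼) =ᵐ[volume] s := by
    filter_upwards [ae_ne hn 0] with z hz
    exact propext ⟨fun h => h.2, fun h => ⟨(hpos z h hz).ne', h⟩⟩
  rw [measure_congr this]
  exact hs.measure_pos _ hne

lemma isOpen_ext (x : 𝔼) (l : ℝ) : IsOpen {z : 𝔼 | l < ‖z - x‖} :=
  isOpen_lt continuous_const (by fun_prop)

lemma exists_norm_sub_eq (hn : 2 ≤ n) (x : 𝔼) {r : ℝ} (hr : 0 ≤ r) : ∃ z, ‖z - x‖ = r :=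
  ⟨x + r • EuclideanSpace.single ⟨0, by omega⟩ 1, by
    simp [norm_smul, abs_of_nonneg hr]⟩

lemma ext_nonempty (hn : 2 ≤ n) (x : 𝔼) {l : ℝ} (hl : 0 < l) :
    {z : 𝔼 | l < ‖z - x‖}.Nonempty := by
  obtain ⟨z, hz⟩ := exists_norm_sub_eq hn x (r := l + 1) (by linarith)
  exact ⟨z, by simp [hz]⟩

lemma kelvin_lt (hn : 2 ≤ n) (hp : 0 < p) (hF : Density p F) {x : 𝔼} {l : ℝ} (hl : 0 < l)
    (hD : ∀ z, z ≠ 0 → l < ‖z - x‖ → 0 < excess p x l F z) {ξ : 𝔼} (hξ : l < ‖ξ - x‖) :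
    pot p F ξ < (‖ξ - x‖ / l) ^ p * pot p F (inversion x l ξ) := by
  obtain ⟨h1, h2⟩ := kelvin_sub hn hF hl hξ
  rw [← sub_pos, h2]
  exact setIntegral_pos_of_pos hn (isOpen_ext x l) (ext_nonempty hn x hl) h1
    fun z hz h0 => mul_pos (kelvinKernel_pos hp hl hξ hz) (hD z h0 hz)

lemma infty_kernel_pos (hp : 0 < p) {x z : 𝔼} {l : ℝ} (hl : 0 < l) (hz : l < ‖z - x‖) :
    0 < (‖z - x‖ / l) ^ p - 1 :=
  sub_pos.2 (Real.one_lt_rpow ((one_lt_div hl).2 hz) hp)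

lemma kelvin_lt_infty (hn : 2 ≤ n) (hp : 0 < p) (hF : Density p F) {x : 𝔼} {l : ℝ} (hl : 0 < l)
    (hD : ∀ z, z ≠ 0 → l < ‖z - x‖ → 0 < excess p x l F z) :
    ∫ z, F z < (1 / l) ^ p * pot p F x := by
  obtain ⟨h1, h2⟩ := kelvin_sub_infty hn hF x hl
  rw [← sub_pos, h2]
  exact setIntegral_pos_of_pos hn (isOpen_ext x l) (ext_nonempty hn x hl) h1
    fun z hz h0 => mul_pos (infty_kernel_pos hp hl hz) (hD z h0 hz)

/-- Linear growth of the difference away from the sphere (an integral form of the Hopf lemma). -/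
lemma kelvin_linear_growth (hn : 2 ≤ n) (hp : 0 < p) (hF : Density p F) {x : 𝔼} {l : ℝ}
    (hl : 0 < l) (hD : ∀ z, z ≠ 0 → l < ‖z - x‖ → 0 < excess p x l F z) :
    ∃ c > 0, ∀ ξ : 𝔼, l < ‖ξ - x‖ → ‖ξ - x‖ < l + 1 / 2 → c * (‖ξ - x‖ - l) ≤
      (‖ξ - x‖ / l) ^ p * pot p F (inversion x l ξ) - pot p F ξ := by
  obtain ⟨c, hc, hker⟩ := kelvinKernel_lower hp x hl
  set S : Set 𝔼 := {z | l + 1 < ‖z - x‖} ∩ {z | ‖z - x‖ < l + 2} with hS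
  have hSo : IsOpen S := (isOpen_ext x _).inter (isOpen_lt (by fun_prop) continuous_const)
  have hSsub : S ⊆ {z | l < ‖z - x‖} := fun z hz => by
    have : l + 1 < ‖z - x‖ := hz.1
    change l < ‖z - x‖
    linarith
  have hSne : S.Nonempty := by
    obtain ⟨z, hz⟩ := exists_norm_sub_eq hn x (r := l + 3 / 2) (by linarith)
    exact ⟨z, by change l + 1 < ‖z - x‖; linarith, by change ‖z - x‖ < l + 2; linarith⟩
  -- the kernel at infinity is used as a weight, since its product with the excess is integrable
  obtain ⟨hI, -⟩ := kelvin_sub_infty hn hF x hl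
  have hIS := hI.mono_set hSsub
  have hδ := setIntegral_pos_of_pos hn hSo hSne hIS
    fun z hz h0 => mul_pos (infty_kernel_pos hp hl (hSsub hz)) (hD z h0 (hSsub hz))
  set δ := ∫ z in S, ((‖z - x‖ / l) ^ p - 1) * excess p x l F z
  set m := ((l + 2) / l) ^ p with hm
  have hmp : 0 < m := by positivity
  refine ⟨c / m * δ, by positivity, fun ξ h1 h2 => ?_⟩
  obtain ⟨k1, k2⟩ := kelvin_sub hn hF hl h1
  have hd : 0 ≤ ‖ξ - x‖ - l := by linarith
  rw [k2]
  calc c / m * δ * (‖ξ - x‖ - l)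
      = ∫ z in S, c / m * (‖ξ - x‖ - l) * (((‖z - x‖ / l) ^ p - 1) * excess p x l F z) := by
        rw [integral_const_mul]; ring
    _ ≤ ∫ z in S, kelvinKernel p x l ξ z * excess p x l F z := by
        refine setIntegral_mono_on_ae (hIS.const_mul _) (k1.mono_set hSsub) hSo.measurableSet ?_
        filter_upwards [ae_ne hn 0] with z h0 hz
        have hD' := hD z h0 (hSsub hz)
        have hz1 : l + 1 < ‖z - x‖ := hz.1
        have hz2 : ‖z - x‖ < l + 2 := hz.2
        have hm' : (‖z - x‖ / l) ^ p - 1 ≤ m := by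
          have : (‖z - x‖ / l) ^ p ≤ m := by rw [hm]; gcongr
          linarith
        rw [← mul_assoc]
        refine mul_le_mul_of_nonneg_right ?_ hD'.le
        calc c / m * (‖ξ - x‖ - l) * ((‖z - x‖ / l) ^ p - 1) ≤ c / m * (‖ξ - x‖ - l) * m := by
              gcongr
          _ = c * (‖ξ - x‖ - l) := by field_simp
          _ ≤ _ := hker ξ z h1 h2 hz1 hz2
    _ ≤ _ := by
        refine setIntegral_mono_set k1 ?_ hSsub.eventuallyLE
        filter_upwards [ae_restrict_mem (measurableSet_ext x l),
          ae_restrict_of_ae (ae_ne hn 0)] with z hz h0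
        exact (mul_pos (kelvinKernel_pos hp hl h1 hz) (hD z h0 hz)).le

end Comparison

/-! ### Radial derivatives -/

/-- Up to a positive factor, the derivative of `t ↦ e^{-pt/2} v(x + e^t ζ)` at `y = x + e^t ζ`;
its sign governs the comparison of `v` with its Kelvin transform near the sphere. -/
def radialDeriv (p : ℝ) (v : EuclideanSpace ℝ (Fin n) → ℝ) (x y : EuclideanSpace ℝ (Fin n)) : ℝ :=
  fderiv ℝ v y (y - x) - p / 2 * v y

section Radial

variable {p : ℝ} {v : EuclideanSpace ℝ (Fin n) → ℝ}

lemma continuousAt_radialDeriv (hv : ContDiffOn ℝ 1 v {(0 : 𝔼)}ᶜ) (x : 𝔼) {y : 𝔼} (hy : y ≠ 0) :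
    ContinuousAt (radialDeriv p v x) y := by
  have hc : ContDiffAt ℝ 1 v y := hv.contDiffAt (isOpen_compl_singleton.mem_nhds hy)
  have h1 : ContinuousAt (fderiv ℝ v) y := hc.continuousAt_fderiv one_ne_zero
  exact (h1.clm_apply (continuousAt_id.sub continuousAt_const)).sub
    (continuousAt_const.mul hc.continuousAt)

lemma hasDerivAt_radial (hv : ContDiffOn ℝ 1 v {(0 : 𝔼)}ᶜ) (x ζ : 𝔼) {t : ℝ}
    (h0 : x + Real.exp t • ζ ≠ 0) :
    HasDerivAt (fun t => Real.exp (-(p / 2 * t)) * v (x + Real.exp t • ζ))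
      (Real.exp (-(p / 2 * t)) * radialDeriv p v x (x + Real.exp t • ζ)) t := by
  have hd : HasFDerivAt v (fderiv ℝ v (x + Real.exp t • ζ)) (x + Real.exp t • ζ) :=
    ((hv.contDiffAt (isOpen_compl_singleton.mem_nhds h0)).differentiableAt one_ne_zero).hasFDerivAt
  have h1 : HasDerivAt (fun t : ℝ => x + Real.exp t • ζ) (Real.exp t • ζ) t :=
    ((Real.hasDerivAt_exp t).smul_const ζ).const_add x
  have h2 := hd.comp_hasDerivAt t h1
  have h3 : HasDerivAt (fun t => Real.exp (-(p / 2 * t))) (Real.exp (-(p / 2 * t)) * -(p / 2)) t := by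
    have := (((hasDerivAt_id t).const_mul (p / 2)).neg).exp
    simpa using this
  refine (h3.mul h2).congr_deriv ?_
  simp only [radialDeriv, add_sub_cancel_left, Function.comp]
  ring

/-- The moving sphere inequality at `y`, when `radialDeriv` is nonpositive between `y` and its
inverse. -/
lemma kelvin_le_of_radialDeriv (hv : ContDiffOn ℝ 1 v {(0 : 𝔼)}ᶜ) {x y : 𝔼} {l : ℝ} (hl : 0 < l)
    (hy : l < ‖y - x‖) {C : Set 𝔼} (hC : Convex ℝ C) (hyC : y ∈ C) (hIC : inversion x l y ∈ C)
    (h0 : ∀ z ∈ C, z ≠ 0) (hH : ∀ z ∈ C, radialDeriv p v x z ≤ 0) :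
    v y ≤ (‖y - x‖ / l) ^ p * v (inversion x l y) := by
  have ha : 0 < ‖y - x‖ := hl.trans hy
  set T := 2 * Real.log (‖y - x‖ / l) with hT
  have hTpos : 0 < T := by
    have := Real.log_pos ((one_lt_div hl).2 hy)
    positivity
  have hexpT : Real.exp (-T) = l ^ 2 / ‖y - x‖ ^ 2 := by
    rw [Real.exp_neg, hT, two_mul, Real.exp_add, Real.exp_log (by positivity)]
    field_simp
  have e0 : x + Real.exp 0 • (y - x) = y := by simp
  have eT : x + Real.exp (-T) • (y - x) = inversion x l y := by rw [hexpT, inversion]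
  have hpre : Convex ℝ {s : ℝ | x + s • (y - x) ∈ C} := by
    intro s hs t ht a b ha hb hab
    have := hC hs ht ha hb hab
    change x + (a • s + b • t) • (y - x) ∈ C
    convert this using 1
    have hx : x = (a + b) • x := by rw [hab, one_smul]
    nth_rewrite 1 [hx]
    simp only [smul_eq_mul]
    module
  have hmem : ∀ t ∈ Icc (-T) 0, x + Real.exp t • (y - x) ∈ C := by
    intro t ht
    refine hpre.ordConnected.out (x := Real.exp (-T)) (y := Real.exp 0) ?_ ?_
      ⟨Real.exp_le_exp.2 ht.1, Real.exp_le_exp.2 ht.2⟩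
    · change _ ∈ C; rwa [eT]
    · change _ ∈ C; rwa [e0]
  have hder := fun t (ht : t ∈ Icc (-T) 0) =>
    hasDerivAt_radial (p := p) hv x (y - x) (h0 _ (hmem t ht))
  have hanti : AntitoneOn (fun t => Real.exp (-(p / 2 * t)) * v (x + Real.exp t • (y - x)))
      (Icc (-T) 0) := by
    refine antitoneOn_of_deriv_nonpos (convex_Icc _ _)
      (fun t ht => (hder t ht).continuousAt.continuousWithinAt)
      (fun t ht => (hder t (interior_subset ht)).differentiableAt.differentiableWithinAt)
      fun t ht => ?_
    rw [(hder t (interior_subset ht)).deriv]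
    exact mul_nonpos_of_nonneg_of_nonpos (Real.exp_nonneg _)
      (hH _ (hmem t (interior_subset ht)))
  have h := hanti (left_mem_Icc.2 (by linarith)) (right_mem_Icc.2 (by linarith)) (by linarith)
  simp only [e0, eT] at h
  simp only [mul_zero, neg_zero, Real.exp_zero, one_mul] at h
  refine h.trans (le_of_eq ?_)
  rw [Real.rpow_def_of_pos (by positivity), hT]
  congr 2
  ring

end Radial

section Sphere

variable {p : ℝ} {F : EuclideanSpace ℝ (Fin n) → ℝ}

/-- The Hopf lemma on the sphere. -/
lemma radialDeriv_neg_of_sphere (hn : 2 ≤ n) (hp : 0 < p) (hF : Density p F)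
    (hv : ContDiffOn ℝ 1 (pot p F) {(0 : 𝔼)}ᶜ) {x : 𝔼} {l : ℝ} (hl : 0 < l)
    (hD : ∀ z, z ≠ 0 → l < ‖z - x‖ → 0 < excess p x l F z) {y : 𝔼} (hy : ‖y - x‖ = l)
    (hy0 : y ≠ 0) : radialDeriv p (pot p F) x y < 0 := by
  obtain ⟨c, hc, hgrow⟩ := kelvin_linear_growth hn hp hF hl hD
  set h : ℝ → ℝ := fun t => Real.exp (-(p / 2 * t)) * pot p F (x + Real.exp t • (y - x)) with hh
  have e0 : x + Real.exp 0 • (y - x) = y := by simp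
  have hd : HasDerivAt h (radialDeriv p (pot p F) x y) 0 := by
    have := hasDerivAt_radial (p := p) hv x (y - x) (t := 0) (by rwa [e0])
    rw [e0] at this
    simpa only [mul_zero, neg_zero, Real.exp_zero, one_mul] using this
  have hd' : HasDerivAt (fun t => h (-t) - h t) (-2 * radialDeriv p (pot p F) x y) 0 := by
    have h1 : HasDerivAt (fun t => h (-t)) (-radialDeriv p (pot p F) x y) 0 := by
      have h2 : HasDerivAt h (radialDeriv p (pot p F) x y) (-(0 : ℝ)) := by rwa [neg_zero]
      have := h2.comp (0 : ℝ) (hasDerivAt_neg (0 : ℝ))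
      simpa [Function.comp_def] using this
    exact (h1.sub hd).congr_deriv (by ring)
  have hlim := hd'.tendsto_slope_zero_right
  have hlow : ∀ᶠ t in 𝓝[>] (0 : ℝ), Real.exp (-(p / 2)) * (c * l) ≤
      t⁻¹ • ((fun t => h (-t) - h t) (0 + t) - (fun t => h (-t) - h t) 0) := by
    have hsmall : ∀ᶠ t in 𝓝 (0 : ℝ), Real.exp t * l < l + 1 / 2 := by
      have : Tendsto (fun t : ℝ => Real.exp t * l) (𝓝 0) (𝓝 (Real.exp 0 * l)) :=
        ((Real.continuous_exp.mul continuous_const).tendsto 0)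
      refine this.eventually_lt_const ?_
      rw [Real.exp_zero]; linarith
    filter_upwards [self_mem_nhdsWithin, nhdsWithin_le_nhds hsmall,
      nhdsWithin_le_nhds (Iio_mem_nhds one_pos)] with t ht hts ht1
    have ht : 0 < t := ht
    have ht1 : t < 1 := ht1
    simp only [zero_add, neg_zero, sub_self, sub_zero, smul_eq_mul]
    rw [inv_mul_eq_div, le_div_iff₀ ht]
    have hexp : t + 1 ≤ Real.exp t := Real.add_one_le_exp t
    set ξ := x + Real.exp t • (y - x) with hξ
    have hξx : ξ - x = Real.exp t • (y - x) := by simp [hξ]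
    have hnξ : ‖ξ - x‖ = Real.exp t * l := by
      rw [hξx, norm_smul, hy, Real.norm_of_nonneg (Real.exp_nonneg _)]
    have hlt : l < ‖ξ - x‖ := by rw [hnξ]; nlinarith
    have hI : inversion x l ξ = x + Real.exp (-t) • (y - x) := by
      rw [inversion, hξx, norm_smul, hy, Real.norm_of_nonneg (Real.exp_nonneg _), smul_smul,
        Real.exp_neg]
      congr 2
      field_simp
    have hg := hgrow ξ hlt (by rwa [hnξ])
    have hpw : (‖ξ - x‖ / l) ^ p = Real.exp (p * t) := by
      rw [hnξ, mul_div_assoc, div_self hl.ne', mul_one, ← Real.exp_mul, mul_comm]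
    have hdiff : h (-t) - h t = Real.exp (-(p / 2 * t)) *
        ((‖ξ - x‖ / l) ^ p * pot p F (inversion x l ξ) - pot p F ξ) := by
      rw [hpw, hI, mul_sub, ← mul_assoc, ← Real.exp_add, hh]
      simp only [hξ]
      congr 3
      ring
    rw [hdiff]
    calc Real.exp (-(p / 2)) * (c * l) * t = Real.exp (-(p / 2)) * (c * (l * t)) := by ring
      _ ≤ Real.exp (-(p / 2 * t)) * (c * (‖ξ - x‖ - l)) := by
        have : l * t ≤ ‖ξ - x‖ - l := by rw [hnξ]; nlinarith
        have h3 : -(p / 2) ≤ -(p / 2 * t) := by nlinarith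
        have := Real.exp_le_exp.2 h3
        gcongr
      _ ≤ _ := by gcongr
  have := ge_of_tendsto hlim hlow
  have hpos : 0 < Real.exp (-(p / 2)) * (c * l) := by positivity
  linarith

/-! ### Moving the spheres -/

lemma tendsto_kelvin (hn : 2 ≤ n) (hp : 0 < p) (hF : Density p F) {x y : 𝔼} {l : ℝ} (hl : 0 < l)
    (hy : y ≠ x) :
    Tendsto (fun q : ℝ × 𝔼 => (‖q.2 - x‖ / q.1) ^ p * pot p F (inversion x q.1 q.2)) (𝓝 (l, y))
      (𝓝 ((‖y - x‖ / l) ^ p * pot p F (inversion x l y))) := by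
  have h1 : Tendsto (fun q : ℝ × 𝔼 => ‖q.2 - x‖ / q.1) (𝓝 (l, y)) (𝓝 (‖y - x‖ / l)) :=
    Tendsto.div ((continuous_snd.sub continuous_const).norm.tendsto (l, y))
      (continuous_fst.tendsto (l, y)) hl.ne'
  exact (h1.rpow_const (Or.inr hp.le)).mul
    (((continuous_pot hn hp hF).tendsto _).comp (tendsto_inversion hy))

/-- The moving spheres start: small spheres are good. -/
lemma good_small (hn : 2 ≤ n) (hp : 0 < p) (hF : Density p F)
    (hv : ContDiffOn ℝ 1 (pot p F) {(0 : 𝔼)}ᶜ) {x : 𝔼} (hx : x ≠ 0) :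
    ∀ᶠ l in 𝓝[>] (0 : ℝ), Good p F x l := by
  have hvx := pot_pos hn hF x
  have hHx : radialDeriv p (pot p F) x x < 0 := by
    simp only [radialDeriv, sub_self, map_zero, zero_sub]
    have : 0 < p / 2 * pot p F x := by positivity
    linarith
  have hnear : ∀ᶠ y in 𝓝 x, y ≠ 0 ∧ radialDeriv p (pot p F) x y < 0 ∧ pot p F x / 2 < pot p F y :=
    (eventually_ne_nhds hx).and
      (((continuousAt_radialDeriv hv x hx).eventually_lt_const hHx).and
        ((continuous_pot hn hp hF).continuousAt.eventually_const_lt (by linarith)))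
  obtain ⟨r, hr, hball⟩ := Metric.eventually_nhds_iff_ball.1 hnear
  obtain ⟨C, hC, hgrow⟩ := pot_growth hn hp hF x hr
  have hlp : ∀ᶠ l in 𝓝 (0 : ℝ), l ^ p * C < pot p F x / 2 := by
    have : Tendsto (fun l : ℝ => l ^ p * C) (𝓝 0) (𝓝 (0 ^ p * C)) :=
      ((continuous_id.rpow_const fun _ => Or.inr hp.le).mul continuous_const).tendsto (0 : ℝ)
    refine this.eventually_lt_const ?_
    rw [Real.zero_rpow hp.ne', zero_mul]
    linarith
  filter_upwards [self_mem_nhdsWithin, nhdsWithin_le_nhds hlp,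
    nhdsWithin_le_nhds (Iio_mem_nhds hr)] with l hl hlC hlr y hy
  have hl : 0 < l := hl
  have hlr : l < r := hlr
  have hIb : inversion x l y ∈ ball x r := by
    rw [mem_ball, dist_eq_norm]
    exact (norm_inversion_sub_lt hl hy).trans hlr
  rcases lt_or_ge ‖y - x‖ r with h | h
  · exact kelvin_le_of_radialDeriv hv hl hy (convex_ball x r)
      (by rwa [mem_ball, dist_eq_norm]) hIb (fun z hz => (hball z hz).1)
      fun z hz => (hball z hz).2.1.le
  · refine (hgrow y h).trans ?_
    have hlp0 := Real.rpow_pos_of_pos hl p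
    have h1 := (hball _ hIb).2.2
    rw [Real.div_rpow (norm_nonneg _) hl.le, div_mul_eq_mul_div, le_div_iff₀ hlp0]
    calc C * ‖y - x‖ ^ p * l ^ p = ‖y - x‖ ^ p * (l ^ p * C) := by ring
      _ ≤ ‖y - x‖ ^ p * pot p F (inversion x l y) := by
        gcongr
        linarith

/-- The moving spheres continue: slightly larger spheres than a strictly good one are good. -/
lemma good_larger (hn : 2 ≤ n) (hp : 0 < p) (hF : Density p F)
    (hv : ContDiffOn ℝ 1 (pot p F) {(0 : 𝔼)}ᶜ) {x : 𝔼} {l : ℝ} (hl : 0 < l) (hlx : l < ‖x‖)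
    (hD : ∀ z, z ≠ 0 → l < ‖z - x‖ → 0 < excess p x l F z) :
    ∀ᶠ l' in 𝓝[>] l, Good p F x l' := by
  have hcont := continuous_pot hn hp hF
  -- the inequality near infinity
  have hfar : ∀ᶠ q in 𝓝 l ×ˢ Bornology.cobounded 𝔼, 0 < q.1 ∧ 0 < ‖q.2 - x‖ ∧
      pot p F q.2 / ‖q.2 - x‖ ^ p < (1 / q.1) ^ p * pot p F (inversion x q.1 q.2) := by
    have hnorm : Tendsto (fun q : ℝ × 𝔼 => ‖q.2 - x‖) (𝓝 l ×ˢ Bornology.cobounded 𝔼) atTop := by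
      have h : Tendsto (fun y : 𝔼 => ‖y - x‖) (Bornology.cobounded 𝔼) atTop :=
        tendsto_atTop_mono (fun y => norm_sub_norm_le y x)
          (tendsto_atTop_add_const_right _ _ tendsto_norm_cobounded_atTop)
      exact h.comp tendsto_snd
    have hfst : Tendsto (fun q : ℝ × 𝔼 => q.1) (𝓝 l ×ˢ Bornology.cobounded 𝔼) (𝓝 l) := tendsto_fst
    have hI : Tendsto (fun q : ℝ × 𝔼 => inversion x q.1 q.2) (𝓝 l ×ˢ Bornology.cobounded 𝔼)
        (𝓝 x) := by
      rw [tendsto_iff_norm_sub_tendsto_zero]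
      simp only [norm_inversion_sub]
      exact (hfst.pow 2).div_atTop hnorm
    have h1 := (pot_tendsto hn hp hF x).comp
      (tendsto_snd (f := 𝓝 l) (g := Bornology.cobounded 𝔼))
    have hinv : Tendsto (fun q : ℝ × 𝔼 => 1 / q.1) (𝓝 l ×ˢ Bornology.cobounded 𝔼)
        (𝓝 (1 / l)) := tendsto_const_nhds.div hfst hl.ne'
    have h2 := (hinv.rpow_const (p := p) (Or.inr hp.le)).mul
      ((hcont.tendsto x).comp hI)
    exact (hfst.eventually_const_lt hl).and
      ((hnorm.eventually_gt_atTop 0).and (h1.eventually_lt h2 (kelvin_lt_infty hn hp hF hl hD)))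
  obtain ⟨pa, hpa, pb, hpb, hab⟩ := eventually_prod_iff.1 hfar
  obtain ⟨R, -, hR⟩ := (Metric.hasBasis_cobounded_compl_closedBall x).eventually_iff.1 hpb
  -- the inequality in a compact region
  have hK : IsCompact (closedBall x R ∩ {y | l ≤ ‖y - x‖}) :=
    (isCompact_closedBall x R).inter_right (isClosed_le continuous_const (by fun_prop))
  have hmid : ∀ᶠ l' in 𝓝 l, ∀ y ∈ closedBall x R ∩ {y | l ≤ ‖y - x‖}, l' < ‖y - x‖ →
      pot p F y ≤ (‖y - x‖ / l') ^ p * pot p F (inversion x l' y) := by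
    refine hK.eventually_forall_of_forall_eventually fun y hy => ?_
    have hly : l ≤ ‖y - x‖ := hy.2
    have hyx : y ≠ x := by
      rintro rfl
      simp at hly
      linarith
    rcases hly.lt_or_eq with h | h
    · have h1 : Tendsto (fun q : ℝ × 𝔼 => pot p F q.2) (𝓝 (l, y)) (𝓝 (pot p F y)) :=
        (hcont.comp continuous_snd).tendsto (l, y)
      exact (h1.eventually_lt (tendsto_kelvin hn hp hF hl hyx)
        (kelvin_lt hn hp hF hl hD h)).mono fun q hq _ => hq.le
    · have hy0 : y ≠ 0 := by
        rintro rfl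
        rw [zero_sub, norm_neg] at h
        linarith
      have hH := radialDeriv_neg_of_sphere hn hp hF hv hl hD h.symm hy0
      have hnear : ∀ᶠ z in 𝓝 y, z ≠ 0 ∧ radialDeriv p (pot p F) x z < 0 :=
        (eventually_ne_nhds hy0).and
          ((continuousAt_radialDeriv hv x hy0).eventually_lt_const hH)
      obtain ⟨r, hr, hball⟩ := Metric.eventually_nhds_iff_ball.1 hnear
      have hIy : inversion x l y = y := by
        rw [inversion, ← h, div_self (by positivity), one_smul, add_sub_cancel]
      have t1 := tendsto_inversion (l := l) hyx
      rw [hIy] at t1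
      have t2 : Tendsto (fun q : ℝ × 𝔼 => q.2) (𝓝 (l, y)) (𝓝 y) := continuous_snd.tendsto (l, y)
      have t3 : Tendsto (fun q : ℝ × 𝔼 => q.1) (𝓝 (l, y)) (𝓝 l) := continuous_fst.tendsto (l, y)
      filter_upwards [t1.eventually (ball_mem_nhds y hr), t2.eventually (ball_mem_nhds y hr),
        t3.eventually_const_lt hl] with q q1 q2 q3 hq
      exact kelvin_le_of_radialDeriv hv q3 hq (convex_ball y r) q2 q1
        (fun z hz => (hball z hz).1) fun z hz => (hball z hz).2.le
  filter_upwards [self_mem_nhdsWithin, nhdsWithin_le_nhds hpa, nhdsWithin_le_nhds hmid]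
    with l' hl' ha hm y hy
  have hl' : l < l' := hl'
  by_cases hyR : y ∈ closedBall x R
  · exact hm y ⟨hyR, (hl'.trans hy).le⟩ hy
  · obtain ⟨b1, b2, b3⟩ := hab ha (hR hyR)
    have hpw := Real.rpow_pos_of_pos b2 p
    dsimp only at b1 b2 b3
    rw [div_lt_iff₀ hpw] at b3
    refine b3.le.trans (le_of_eq ?_)
    rw [div_eq_mul_one_div ‖y - x‖, Real.mul_rpow b2.le (by positivity)]
    ring

/-- All spheres that do not enclose the origin are good. -/
lemma good_all (hn : 2 ≤ n) (hp : 0 < p) (hF : Density p F)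
    (hv : ContDiffOn ℝ 1 (pot p F) {(0 : 𝔼)}ᶜ)
    (hD : ∀ (x : 𝔼) (l : ℝ), 0 < l → l < ‖x‖ → Good p F x l →
      ∀ z, z ≠ 0 → l < ‖z - x‖ → 0 < excess p x l F z)
    {x : 𝔼} {l : ℝ} (hl : 0 < l) (hlx : l < ‖x‖) : Good p F x l := by
  have hx : x ≠ 0 := by
    rintro rfl
    simp at hlx
    linarith
  obtain ⟨a, ⟨ha, hal⟩, hag⟩ := ((Ioo_mem_nhdsGT hl : Ioo 0 l ∈ 𝓝[>] (0 : ℝ)) |>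
    fun h => ((show ∀ᶠ a in 𝓝[>] (0 : ℝ), a ∈ Ioo 0 l from h).and
      (good_small hn hp hF hv hx)).exists)
  have hclosed : IsClosed ({l | Good p F x l} ∩ Icc a l) := by
    refine IsSeqClosed.isClosed fun s b hs hsb => ?_
    have hb : b ∈ Icc a l := isClosed_Icc.mem_of_tendsto hsb (Eventually.of_forall fun k => (hs k).2)
    refine ⟨fun y hy => ?_, hb⟩
    have hb0 : 0 < b := ha.trans_le hb.1
    have h1 : Tendsto (fun k => (s k, y)) atTop (𝓝 (b, y)) := hsb.prodMk_nhds tendsto_const_nhds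
    have h2 := (tendsto_kelvin hn hp hF hb0 (ne_center hb0 hy)).comp h1
    refine ge_of_tendsto h2 ?_
    filter_upwards [hsb.eventually_lt_const hy] with k hk
    exact (hs k).1 y hk
  refine hclosed.Icc_subset_of_forall_mem_nhdsWithin hag (fun b hb => ?_) (right_mem_Icc.2 hal.le)
  have hb0 : 0 < b := ha.trans_le hb.2.1
  have hbx : b < ‖x‖ := hb.2.2.trans hlx
  exact good_larger hn hp hF hv hb0 hbx (hD x b hb0 hbx hb.1)

/-! ### Spheres degenerating to hyperplanes -/

/-- The limit of the moving sphere inequality as the sphere of radius `τ⁻¹ - s` centered at `τ⁻¹ e`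
tends to the hyperplane `{⟨·, e⟩ = s}`. -/
lemma pot_le_reflection (hn : 2 ≤ n) (hp : 0 < p) (hF : Density p F)
    (hgood : ∀ (x : 𝔼) (l : ℝ), 0 < l → l < ‖x‖ → Good p F x l) {e y : 𝔼} (he : ‖e‖ = 1) {s : ℝ}
    (hs : 0 < s) (hy : inner ℝ y e < s) :
    pot p F y ≤ pot p F (y + (2 * (s - inner ℝ y e)) • e) := by
  set a := inner ℝ y e with ha
  -- rescaled squared distance from `y` to the center
  set N : ℝ → ℝ := fun τ => ‖y‖ ^ 2 * τ ^ 2 - 2 * τ * a + 1 with hN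
  have hNc : Continuous N := by fun_prop
  have hN0 : N 0 = 1 := by simp [hN]
  have hNpos : ∀ᶠ τ in 𝓝 (0 : ℝ), 0 < N τ :=
    (hNc.tendsto 0).eventually_const_lt (by rw [hN0]; norm_num)
  have hlim : Tendsto (fun τ : ℝ => (N τ / (1 - s * τ) ^ 2) ^ (p / 2) *
      pot p F (((1 - s * τ) ^ 2 / N τ) • y +
        ((‖y‖ ^ 2 * τ + 2 * (s - a) - s ^ 2 * τ) / N τ) • e)) (𝓝[>] 0)
      (𝓝 (pot p F (y + (2 * (s - a)) • e))) := by
    have h1 : ContinuousAt (fun τ : ℝ => (N τ / (1 - s * τ) ^ 2) ^ (p / 2)) 0 := by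
      refine ContinuousAt.rpow_const (hNc.continuousAt.div (by fun_prop) (by simp)) ?_
      right; positivity
    have h2 : ContinuousAt (fun τ : ℝ => (((1 - s * τ) ^ 2 / N τ) • y +
        ((‖y‖ ^ 2 * τ + 2 * (s - a) - s ^ 2 * τ) / N τ) • e)) 0 := by
      have hne : N 0 ≠ 0 := by rw [hN0]; norm_num
      have c1 : ContinuousAt (fun τ : ℝ => (1 - s * τ) ^ 2 / N τ) 0 :=
        ContinuousAt.div (by fun_prop) hNc.continuousAt hne
      have c2 : ContinuousAt (fun τ : ℝ => (‖y‖ ^ 2 * τ + 2 * (s - a) - s ^ 2 * τ) / N τ) 0 :=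
        ContinuousAt.div (by fun_prop) hNc.continuousAt hne
      exact (c1.smul continuousAt_const).add (c2.smul continuousAt_const)
    have h3 := (h1.mul ((continuous_pot hn hp hF).continuousAt.comp h2)).tendsto
    have hval : pot p F (y + (2 * (s - a)) • e) = (N 0 / (1 - s * 0) ^ 2) ^ (p / 2) *
        pot p F (((1 - s * 0) ^ 2 / N 0) • y +
          ((‖y‖ ^ 2 * 0 + 2 * (s - a) - s ^ 2 * 0) / N 0) • e) := by
      rw [hN0]
      simp
    rw [hval]
    exact h3.mono_left nhdsWithin_le_nhds
  refine ge_of_tendsto hlim ?_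
  have hτs : ∀ᶠ τ in 𝓝 (0 : ℝ), 0 < 1 - s * τ := by
    have : Tendsto (fun τ : ℝ => 1 - s * τ) (𝓝 0) (𝓝 (1 - s * 0)) :=
      (by fun_prop : Continuous fun τ : ℝ => 1 - s * τ).tendsto 0
    exact this.eventually_const_lt (by simp)
  have hτd : ∀ᶠ τ in 𝓝 (0 : ℝ), 0 < ‖y‖ ^ 2 * τ + 2 * (s - a) - s ^ 2 * τ := by
    have : Tendsto (fun τ : ℝ => ‖y‖ ^ 2 * τ + 2 * (s - a) - s ^ 2 * τ) (𝓝 0)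
        (𝓝 (‖y‖ ^ 2 * 0 + 2 * (s - a) - s ^ 2 * 0)) :=
      (by fun_prop : Continuous fun τ : ℝ => ‖y‖ ^ 2 * τ + 2 * (s - a) - s ^ 2 * τ).tendsto 0
    exact this.eventually_const_lt (by simp; linarith)
  filter_upwards [self_mem_nhdsWithin, nhdsWithin_le_nhds hNpos, nhdsWithin_le_nhds hτs,
    nhdsWithin_le_nhds hτd] with τ hτ hNτ h1 h2
  have hτ : 0 < τ := hτ
  have hl : 0 < τ⁻¹ - s := by
    have : τ⁻¹ - s = (1 - s * τ) / τ := by field_simp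
    rw [this]; positivity
  have hlx : τ⁻¹ - s < ‖τ⁻¹ • e‖ := by
    rw [norm_smul, he, Real.norm_of_nonneg (by positivity)]; linarith
  have hnsq : ‖y - τ⁻¹ • e‖ ^ 2 = N τ / τ ^ 2 := by
    rw [norm_sub_sq_real, real_inner_smul_right, norm_smul, he, mul_one, Real.norm_eq_abs, sq_abs,
      ← ha]
    simp only [hN]
    field_simp
  have hly : τ⁻¹ - s < ‖y - τ⁻¹ • e‖ := by
    apply lt_of_pow_lt_pow_left₀ 2 (norm_nonneg _)
    rw [hnsq, lt_div_iff₀ (by positivity)]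
    have : (τ⁻¹ - s) ^ 2 * τ ^ 2 = (1 - s * τ) ^ 2 := by field_simp
    rw [this]
    simp only [hN]
    nlinarith
  have hg := hgood _ _ hl hlx y hly
  have e1 : (‖y - τ⁻¹ • e‖ / (τ⁻¹ - s)) ^ p = (N τ / (1 - s * τ) ^ 2) ^ (p / 2) := by
    have hb : 0 ≤ ‖y - τ⁻¹ • e‖ / (τ⁻¹ - s) := by positivity
    have : N τ / (1 - s * τ) ^ 2 = (‖y - τ⁻¹ • e‖ / (τ⁻¹ - s)) ^ 2 := by
      rw [div_pow, hnsq]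
      have h3 : τ⁻¹ - s = (1 - s * τ) / τ := by field_simp
      rw [h3]
      field_simp
    rw [this, ← Real.rpow_natCast, ← Real.rpow_mul hb]
    congr 1
    push_cast
    ring
  have e2 : inversion (τ⁻¹ • e) (τ⁻¹ - s) y = ((1 - s * τ) ^ 2 / N τ) • y +
        ((‖y‖ ^ 2 * τ + 2 * (s - a) - s ^ 2 * τ) / N τ) • e := by
    have h3 : (τ⁻¹ - s) ^ 2 / ‖y - τ⁻¹ • e‖ ^ 2 = (1 - s * τ) ^ 2 / N τ := by
      rw [hnsq]
      have h3 : τ⁻¹ - s = (1 - s * τ) / τ := by field_simp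
      rw [h3]
      field_simp
    have h4 : (‖y‖ ^ 2 * τ + 2 * (s - a) - s ^ 2 * τ) / N τ =
        τ⁻¹ - (1 - s * τ) ^ 2 / N τ * τ⁻¹ := by
      field_simp
      simp only [hN]
      ring
    rw [inversion, h3, h4]
    module
  rwa [e1, e2] at hg

lemma pot_le_of_norm_eq (hn : 2 ≤ n) (hp : 0 < p) (hF : Density p F)
    (hgood : ∀ (x : 𝔼) (l : ℝ), 0 < l → l < ‖x‖ → Good p F x l) {y z : 𝔼} (h : ‖y‖ = ‖z‖) :
    pot p F y ≤ pot p F z := by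
  by_cases hyz : y = z
  · rw [hyz]
  have hd : 0 < ‖z - y‖ := norm_pos_iff.2 (sub_ne_zero.2 (Ne.symm hyz))
  -- the unit normal of the hyperplane through the origin that exchanges `y` and `z`
  set e := ‖z - y‖⁻¹ • (z - y) with he
  have hen : ‖e‖ = 1 := by
    rw [he, norm_smul, norm_inv, norm_norm, inv_mul_cancel₀ hd.ne']
  have hin : inner ℝ y e = - (‖z - y‖ / 2) := by
    have h1 := norm_sub_sq_real z y
    rw [he, real_inner_smul_right, inner_sub_right, real_inner_self_eq_norm_sq,
      real_inner_comm z y]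
    field_simp
    rw [h] at h1 ⊢
    rw [real_inner_comm] at h1 ⊢
    linarith
  have hrefl : ∀ s : ℝ, y + (2 * (s - inner ℝ y e)) • e = z + (2 * s) • e := by
    intro s
    have hz : y + ‖z - y‖ • e = z := by
      rw [he, smul_smul, mul_inv_cancel₀ hd.ne', one_smul, add_sub_cancel]
    calc y + (2 * (s - inner ℝ y e)) • e = (y + ‖z - y‖ • e) + (2 * s) • e := by
          rw [hin]; module
      _ = z + (2 * s) • e := by rw [hz]
  have hlim : Tendsto (fun s : ℝ => pot p F (z + (2 * s) • e)) (𝓝[>] 0) (𝓝 (pot p F z)) := by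
    have : Continuous fun s : ℝ => pot p F (z + (2 * s) • e) :=
      (continuous_pot hn hp hF).comp (by fun_prop)
    have h1 := this.tendsto 0
    simp only [mul_zero, zero_smul, add_zero] at h1
    exact h1.mono_left nhdsWithin_le_nhds
  refine ge_of_tendsto hlim ?_
  filter_upwards [self_mem_nhdsWithin] with s hs
  rw [← hrefl s]
  have hs : 0 < s := hs
  exact pot_le_reflection hn hp hF hgood hen hs (by rw [hin]; linarith)

lemma pot_mono (hn : 2 ≤ n) (hp : 0 < p) (hF : Density p F)
    (hgood : ∀ (x : 𝔼) (l : ℝ), 0 < l → l < ‖x‖ → Good p F x l) {e : 𝔼} (he : ‖e‖ = 1)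
    {s t : ℝ} (hs : 0 < s) (hst : s ≤ t) : pot p F (s • e) ≤ pot p F (t • e) := by
  rcases hst.eq_or_lt with rfl | hst
  · rfl
  have hin : inner ℝ (s • e) e = s := by
    rw [real_inner_smul_left, real_inner_self_eq_norm_sq, he]; ring
  have := pot_le_reflection hn hp hF hgood (y := s • e) he (s := (s + t) / 2) (by linarith)
    (by rw [hin]; linarith)
  rw [hin] at this
  convert this using 2
  module

end Sphere

/-! ### The density of a solution -/

/-- Convergence of the potential off the origin gives integrability of `F`, because
`|w - z|^p + |-w - z|^p` is bounded below, and then convergence at the origin. -/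
lemma density_of_integrable {p : ℝ} (hp : 0 < p) {F : 𝔼 → ℝ} (hpos : ∀ z, z ≠ 0 → 0 < F z)
    (hn : 2 ≤ n) (hm : AEStronglyMeasurable F)
    (hi : ∀ x : 𝔼, x ≠ 0 → Integrable fun z => ‖x - z‖ ^ p * F z) : Density p F := by
  obtain ⟨w, hw⟩ := exists_norm_sub_eq hn (0 : 𝔼) (r := 1) zero_le_one
  rw [sub_zero] at hw
  have hw0 : w ≠ 0 := by
    rintro rfl
    simp at hw
  have hint : Integrable F := by
    have h1 := ((hi w hw0).add (hi (-w) (neg_ne_zero.2 hw0))).const_mul (2 ^ p / 2 ^ p)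
    refine h1.mono' hm ?_
    filter_upwards [ae_ne hn 0] with z hz
    have h := hpos z hz
    have h2 := rpow_norm_sub_le hp z w (-w)
    have h3 : ‖w - -w‖ = 2 := by
      rw [sub_neg_eq_add, ← two_smul ℝ, norm_smul, hw]; norm_num
    rw [h3, norm_sub_rev z (-w)] at h2
    rw [Real.norm_of_nonneg h.le, div_self (by positivity), one_mul]
    have h2p : (0 : ℝ) < 2 ^ p := by positivity
    have h4 : 1 ≤ ‖w - z‖ ^ p + ‖-w - z‖ ^ p := by
      by_contra! hcon
      nlinarith
    calc F z ≤ (‖w - z‖ ^ p + ‖-w - z‖ ^ p) * F z := le_mul_of_one_le_left h.le h4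
      _ = _ := by simp only [Pi.add_apply]; ring
  refine ⟨hpos, hint, fun x => ?_⟩
  have h1 := ((hint.const_mul (‖x - w‖ ^ p)).add (hi w hw0)).const_mul (2 ^ p)
  refine h1.mono' (AEStronglyMeasurable.mul ?_ hm) ?_
  · exact ((continuous_const.sub continuous_id).norm.rpow_const
      fun _ => Or.inr hp.le).aestronglyMeasurable
  filter_upwards [ae_ne hn 0] with z hz
  have h := hpos z hz
  rw [Real.norm_of_nonneg (by positivity)]
  calc _ ≤ 2 ^ p * (‖x - w‖ ^ p + ‖w - z‖ ^ p) * F z := by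
        gcongr; exact rpow_norm_sub_le hp w x z
    _ = _ := by simp only [Pi.add_apply]; ring

end MovingSpheres

open MovingSpheres in
theorem stmt_0 {n : ℕ} (hn : 2 ≤ n) (p : ℝ) (hp : 0 < p)
    (f : ℝ → ℝ → ℝ)
    (hf_cont : ContinuousOn (fun q : ℝ × ℝ => f q.1 q.2) (Set.Ici 0 ×ˢ Set.Ioi 0))
    (hf_pos : ∀ α : ℝ, 0 ≤ α → ∀ β : ℝ, 0 < β → 0 < f α β)
    (hF : ∀ x : EuclideanSpace ℝ (Fin n), x ≠ 0 → ∀ l : ℝ, 0 < l → l < ‖x‖ →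
      ∀ z : EuclideanSpace ℝ (Fin n), l < ‖z - x‖ → ∀ a b : ℝ, 0 < a → a ≤ b →
      f ‖z‖ a >
        (l / ‖z - x‖) ^ (p + 2 * (n : ℝ)) *
          f ‖inversion x l z‖ ((l / ‖z - x‖) ^ p * b))
    (u : EuclideanSpace ℝ (Fin n) → ℝ)
    (hu_pos : ∀ x : EuclideanSpace ℝ (Fin n), x ≠ 0 → 0 < u x)
    (hu_C1 : ContDiffOn ℝ 1 u {(0 : EuclideanSpace ℝ (Fin n))}ᶜ)
    (hIE : ∀ x : EuclideanSpace ℝ (Fin n), x ≠ 0 →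
      u x = ∫ y : EuclideanSpace ℝ (Fin n), ‖x - y‖ ^ p * f ‖y‖ (u y)) :
    (∀ y z : EuclideanSpace ℝ (Fin n), y ≠ 0 → z ≠ 0 → ‖y‖ = ‖z‖ → u y = u z) ∧
    (∀ e : EuclideanSpace ℝ (Fin n), ‖e‖ = 1 →
      ∀ s t : ℝ, 0 < s → s ≤ t → u (s • e) ≤ u (t • e)) := by
  set F : EuclideanSpace ℝ (Fin n) → ℝ := fun z => f ‖z‖ (u z) with hFdef
  have hpos : ∀ z, z ≠ 0 → 0 < F z := fun z hz => hf_pos _ (norm_nonneg _) _ (hu_pos z hz)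
  have hFc : ContinuousOn F {(0 : EuclideanSpace ℝ (Fin n))}ᶜ :=
    hf_cont.comp (continuous_norm.continuousOn.prodMk hu_C1.continuousOn)
      fun z hz => ⟨norm_nonneg _, hu_pos z hz⟩
  have hm : AEStronglyMeasurable F := by
    have h1 := hFc.aestronglyMeasurable (μ := volume) (MeasurableSet.singleton _).compl
    have h2 : volume.restrict {(0 : EuclideanSpace ℝ (Fin n))}ᶜ = volume :=
      Measure.restrict_eq_self_of_ae_mem (by filter_upwards [ae_ne hn 0] with z hz using hz)
    rwa [h2] at h1
  -- a divergent integral would have the junk value `0`, against the positivity of `u`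
  have hi : ∀ x : EuclideanSpace ℝ (Fin n), x ≠ 0 → Integrable fun z => ‖x - z‖ ^ p * F z := by
    intro x hx
    by_contra hcon
    have := hIE x hx
    rw [integral_undef hcon] at this
    exact (hu_pos x hx).ne' this
  have hF' : Density p F := density_of_integrable hp hpos hn hm hi
  have hu : ∀ x, x ≠ 0 → u x = pot p F x := hIE
  have hv : ContDiffOn ℝ 1 (pot p F) {(0 : EuclideanSpace ℝ (Fin n))}ᶜ :=
    hu_C1.congr fun x hx => (hu x hx).symm
  have hgood : ∀ (x : EuclideanSpace ℝ (Fin n)) (l : ℝ), 0 < l → l < ‖x‖ → Good p F x l := by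
    intro x l hl hlx
    refine good_all hn hp hF' hv (fun x l hl hlx hg z hz hzx => ?_) hl hlx
    have hx : x ≠ 0 := by
      rintro rfl
      simp at hlx
      linarith
    have hI := inversion_ne_zero hl hlx.le hzx
    have hle := hg z hzx
    rw [← hu z hz, ← hu _ hI] at hle
    have h := hF x hx l hl hlx z hzx (u z) _ (hu_pos z hz) hle
    have hb : 0 < ‖z - x‖ := hl.trans hzx
    have e : (l / ‖z - x‖) ^ p * ((‖z - x‖ / l) ^ p * u (inversion x l z)) =
        u (inversion x l z) := by
      rw [← mul_assoc, ← Real.mul_rpow (by positivity) (by positivity)]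
      have : l / ‖z - x‖ * (‖z - x‖ / l) = 1 := by field_simp
      rw [this, Real.one_rpow, one_mul]
    rw [e] at h
    exact sub_pos.2 h
  refine ⟨fun y z hy hz h => ?_, fun e he s t hs hst => ?_⟩
  · rw [hu y hy, hu z hz]
    exact le_antisymm (pot_le_of_norm_eq hn hp hF' hgood h)
      (pot_le_of_norm_eq hn hp hF' hgood h.symm)
  · have he0 : e ≠ 0 := by
      rintro rfl
      simp at he
    rw [hu _ (smul_ne_zero hs.ne' he0), hu _ (smul_ne_zero (hs.trans_le hst).ne' he0)]
    exact pot_mono hn hp hF' hgood he hs hst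
end
end

section
/- Let n ≥ 2 be an integer, p > 0 and 0 < q < (p+2n)/p. Then every positive C¹ function u : ℝⁿ ∖ {0} → ℝ satisfying u(x) = ∫_{ℝⁿ} |x−y|^p (1+|y|²)^{(pq−p−2n)/2} u(y)^{−q} dy for all x ∈ ℝⁿ ∖ {0} is radially symmetric about the origin (u(y) = u(z) whenever |y| = |z| ≠ 0) and monotone nondecreasing with respect to the origin (for every unit vector e, t ↦ u(te) is nondecreasing on (0,∞)). -/
/-!
Method of moving planes, in integral form. Put `a = (p + 2n - pq) / 2`; subcriticality of `q` says
exactly that `a > 0`, i.e. that the weight `(1 + |y|²)^{-a}` is strictly radially decreasing.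

Finiteness of the potential at `±e` gives `∫ (1 + |y|)^p f < ∞` for `f = (1 + |y|²)^{-a} u^{-q}`, so
the right-hand side of the equation defines a continuous solution `U` on all of `ℝⁿ`, equal to `u`
off the origin and bounded below by a multiple of `(1 + |x|)^p` (`exists_isSol`).

Fix a unit vector `e` and let `R` be the reflection in `{⟪e, ·⟫ = l}`, `l ≤ 0`. Averaging the
equation with its reflected form (`integrable_G`),
`U x - U (R x) = 1/2 ∫ (|x - y|^p - |R x - y|^p) (f y - f (R y)) dy`.
The first factor is negative when `x, y` are both in the half-space `{⟪e, ·⟫ < l}`, so only the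
points `y` of the bad set `{U < U ∘ R}` in that half-space, and their reflections, contribute
negatively. There the convexity of `t ↦ t^{-q}` and the lower bound on `U` give
`f y - f (R y) ≤ N (q / c) f y` whenever `U ∘ R - U ≤ N (1 + |y|)^p`. Hence if the bad set has
mass at most `c / (2q)` for the finite measure `(1 + |y|)^p f dy`, such a bound with constant `N`
improves to `N / 2`, and by iteration `U ∘ R ≤ U` on the half-space (`good_of_small`).

The mass of the bad set tends to `0` as `l → -∞`, which starts the planes, and also as `l → l₀ < 0`
when the comparison holds at `l₀`, because it is then strict there (`strict_of_good`). So the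
comparison holds at every `l ≤ 0` (`good`). The level `l = 0`, used for `e` and `-e`, gives radial
symmetry; negative levels give monotonicity along rays. Of the regularity of `u`, only continuity
off the origin is needed.
-/

open MeasureTheory

noncomputable section

open Set Filter Topology

namespace MovingPlane

/-! ### Reflections -/

/-- Euclidean `n`-space. -/
abbrev E (n : ℕ) := EuclideanSpace ℝ (Fin n)

variable {n : ℕ}

/-- The reflection of `x` in the hyperplane `{y | ⟪e, y⟫ = l}`, for a unit vector `e`. -/
def refl (e : E n) (l : ℝ) (x : E n) : E n := x + (2 * (l - inner ℝ e x)) • e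

lemma inner_refl {e : E n} (he : ‖e‖ = 1) (l : ℝ) (x : E n) :
    inner ℝ e (refl e l x) = 2 * l - inner ℝ e x := by
  simp only [refl, inner_add_right, inner_smul_right, real_inner_self_eq_norm_sq, he]
  ring

lemma refl_refl {e : E n} (he : ‖e‖ = 1) (l : ℝ) (x : E n) :
    refl e l (refl e l x) = x := by
  conv_lhs => rw [refl, inner_refl he]
  rw [refl, add_assoc, ← add_smul]
  ring_nf
  simp

/-- The squared distances from `y` to `refl e l x` and to `x` differ by four times the product of
the signed distances of `x` and `y` to the hyperplane. -/
lemma norm_refl_sub_sq {e : E n} (he : ‖e‖ = 1) (l : ℝ) (x y : E n) :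
    ‖refl e l x - y‖ ^ 2 = ‖x - y‖ ^ 2 + 4 * (l - inner ℝ e x) * (l - inner ℝ e y) := by
  have h : refl e l x - y = (x - y) + (2 * (l - inner ℝ e x)) • e := by
    rw [refl]; abel
  rw [h, norm_add_sq_real, inner_smul_right, norm_smul, mul_pow, he, inner_sub_left,
    real_inner_comm e x, real_inner_comm e y, Real.norm_eq_abs, sq_abs]
  ring

lemma norm_refl_sub_refl {e : E n} (he : ‖e‖ = 1) (l : ℝ) (x y : E n) :
    ‖refl e l x - refl e l y‖ = ‖x - y‖ := by
  rw [← sq_eq_sq₀ (norm_nonneg _) (norm_nonneg _), norm_refl_sub_sq he, inner_refl he,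
    norm_sub_rev x, norm_refl_sub_sq he, norm_sub_rev y x]
  ring

lemma norm_sub_refl {e : E n} (he : ‖e‖ = 1) (l : ℝ) (x y : E n) :
    ‖x - refl e l y‖ = ‖refl e l x - y‖ := by
  rw [← norm_refl_sub_refl he l, refl_refl he]

lemma norm_refl_le {e : E n} (he : ‖e‖ = 1) {l : ℝ} (hl : l ≤ 0) {x : E n}
    (hx : inner ℝ e x ≤ l) : ‖refl e l x‖ ≤ ‖x‖ := by
  have := norm_refl_sub_sq he l x 0
  simp only [sub_zero, inner_zero_right] at this
  rw [← sq_le_sq₀ (norm_nonneg _) (norm_nonneg _)]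
  nlinarith [mul_nonneg (sub_nonneg.2 hx) (neg_nonneg.2 hl)]

lemma norm_refl_lt {e : E n} (he : ‖e‖ = 1) {l : ℝ} (hl : l < 0) {x : E n}
    (hx : inner ℝ e x < l) : ‖refl e l x‖ < ‖x‖ := by
  have := norm_refl_sub_sq he l x 0
  simp only [sub_zero, inner_zero_right] at this
  rw [← sq_lt_sq₀ (norm_nonneg _) (norm_nonneg _)]
  nlinarith [mul_pos (sub_pos.2 hx) (neg_pos.2 hl)]

lemma norm_sub_lt_refl {e : E n} (he : ‖e‖ = 1) {l : ℝ} {x y : E n}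
    (hx : inner ℝ e x < l) (hy : inner ℝ e y < l) : ‖x - y‖ < ‖refl e l x - y‖ := by
  have := norm_refl_sub_sq he l x y
  rw [← sq_lt_sq₀ (norm_nonneg _) (norm_nonneg _)]
  nlinarith [mul_pos (sub_pos.2 hx) (sub_pos.2 hy)]

lemma continuous_refl_uncurry (e : E n) : Continuous fun z : ℝ × E n => refl e z.1 z.2 := by
  unfold refl; fun_prop

lemma continuous_refl (e : E n) (l : ℝ) : Continuous (refl e l) := by
  unfold refl; fun_prop

lemma measurableEmbedding_refl {e : E n} (he : ‖e‖ = 1) (l : ℝ) :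
    MeasurableEmbedding (refl e l) := by
  have : Isometry (refl e l) := Isometry.of_dist_eq fun x y => by
    rw [dist_eq_norm, dist_eq_norm, norm_refl_sub_refl he]
  exact this.isClosedEmbedding.measurableEmbedding

lemma measurePreserving_refl {e : E n} (he : ‖e‖ = 1) (l : ℝ) :
    MeasurePreserving (refl e l) (volume : Measure (E n)) volume := by
  have h : refl e l = (fun x => (2 * l) • e + x) ∘ ((ℝ ∙ e)ᗮ.reflection) := by
    funext x
    rw [Function.comp_apply, Submodule.reflection_orthogonal_apply,
      Submodule.reflection_singleton_apply, refl, he, mul_sub, sub_smul]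
    simp only [RCLike.ofReal_real_eq_id, id_eq, one_pow, div_one, two_smul]
    module
  rw [h]
  exact (measurePreserving_add_left volume _).comp
    (LinearIsometryEquiv.measurePreserving _)

lemma hyperplane_null {e : E n} (he : ‖e‖ = 1) (l : ℝ) :
    volume {y : E n | inner ℝ e y = l} = 0 := by
  have h : {y : E n | inner ℝ e y = l} = (fun y => (-l) • e + y) ⁻¹' ((ℝ ∙ e)ᗮ : Submodule ℝ (E n)) := by
    ext y
    simp only [mem_ofPred_eq, mem_preimage, SetLike.mem_coe,
      Submodule.mem_orthogonal_singleton_iff_inner_right, inner_add_right, inner_smul_right, real_inner_self_eq_norm_sq, he]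
    constructor <;> intro h <;> linarith
  rw [h, measure_preimage_add]
  refine Measure.addHaar_submodule _ _ fun htop => ?_
  have : e ∈ (ℝ ∙ e)ᗮ := by rw [htop]; trivial
  rw [Submodule.mem_orthogonal_singleton_iff_inner_right, real_inner_self_eq_norm_sq, he] at this
  norm_num at this

lemma rpow_norm_sub_le {p : ℝ} (hp : 0 < p) (x y : E n) :
    ‖x - y‖ ^ p ≤ (1 + ‖x‖) ^ p * (1 + ‖y‖) ^ p := by
  rw [← Real.mul_rpow (by positivity) (by positivity)]
  refine Real.rpow_le_rpow (norm_nonneg _) ?_ hp.le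
  nlinarith [norm_sub_le x y, mul_nonneg (norm_nonneg x) (norm_nonneg y)]

/-! ### Solutions on the whole space -/

/-- The density `(1 + |y|²)^{-a} U(y)^{-q}`. -/
def dens (a q : ℝ) (U : E n → ℝ) (y : E n) : ℝ := (1 + ‖y‖ ^ 2) ^ (-a) * U y ^ (-q)

/-- `U` is a continuous solution on the whole space of
`U x = ∫ |x - y|^p (1 + |y|²)^{-a} U(y)^{-q} dy`, with `U x ≥ c (1 + |x|)^p` and with finite `p`-th
moment of the density. -/
structure IsSol (p a q c : ℝ) (U : E n → ℝ) : Prop where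
  hp : 0 < p
  ha : 0 < a
  hq : 0 < q
  hc : 0 < c
  cont : Continuous U
  lower : ∀ x, c * (1 + ‖x‖) ^ p ≤ U x
  int : Integrable fun y => (1 + ‖y‖) ^ p * dens a q U y
  eq : ∀ x, U x = ∫ y, ‖x - y‖ ^ p * dens a q U y

variable {p a q c : ℝ} {U : E n → ℝ}

namespace IsSol

lemma pos (h : IsSol p a q c U) (x : E n) : 0 < U x :=
  (mul_pos h.hc (by positivity)).trans_le (h.lower x)

lemma dens_pos (h : IsSol p a q c U) (x : E n) : 0 < dens a q U x :=
  mul_pos (by positivity) (Real.rpow_pos_of_pos (h.pos x) _)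

lemma dens_cont (h : IsSol p a q c U) : Continuous (dens a q U) := by
  unfold dens
  refine Continuous.mul ?_ ?_
  · exact Continuous.rpow_const (by fun_prop) fun x => Or.inl (by positivity)
  · exact Continuous.rpow_const h.cont fun x => Or.inl (h.pos x).ne'

lemma integrable (h : IsSol p a q c U) (x : E n) :
    Integrable fun y => ‖x - y‖ ^ p * dens a q U y := by
  refine (h.int.const_mul ((1 + ‖x‖) ^ p)).mono' ?_ (ae_of_all _ fun y => ?_)
  · exact (((continuous_const.sub continuous_id).norm.rpow_const
      fun _ => Or.inr h.hp.le).mul h.dens_cont).aestronglyMeasurable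
  · rw [Real.norm_of_nonneg (mul_nonneg (by positivity) (h.dens_pos y).le), ← mul_assoc]
    exact mul_le_mul_of_nonneg_right (rpow_norm_sub_le h.hp x y) (h.dens_pos y).le

lemma upper (h : IsSol p a q c U) (x : E n) :
    U x ≤ (∫ y, (1 + ‖y‖) ^ p * dens a q U y) * (1 + ‖x‖) ^ p := by
  rw [h.eq x, mul_comm, ← integral_const_mul]
  refine integral_mono (h.integrable x) (h.int.const_mul _) fun y => ?_
  simp only
  rw [← mul_assoc]
  exact mul_le_mul_of_nonneg_right (rpow_norm_sub_le h.hp x y) (h.dens_pos y).le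

/-! ### The antisymmetrised equation and the narrow region principle -/

/-- The integrand of the antisymmetrised representation of `U x - U (refl e l x)`. -/
def G (p a q : ℝ) (U : E n → ℝ) (e : E n) (l : ℝ) (x y : E n) : ℝ :=
  (‖x - y‖ ^ p - ‖refl e l x - y‖ ^ p) * (dens a q U y - dens a q U (refl e l y))

lemma G_refl {e : E n} (he : ‖e‖ = 1) (l : ℝ) (x y : E n) :
    G p a q U e l x (refl e l y) = G p a q U e l x y := by
  unfold G
  rw [refl_refl he, norm_sub_refl he, norm_refl_sub_refl he]
  ring

lemma integrable_G (h : IsSol p a q c U) {e : E n} (he : ‖e‖ = 1) (l : ℝ) (x : E n) :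
    Integrable (G p a q U e l x) ∧ ∫ y, G p a q U e l x y = 2 * (U x - U (refl e l x)) := by
  have i1 := h.integrable x
  have i2 := h.integrable (refl e l x)
  have hm := measurePreserving_refl he l
  have hem := measurableEmbedding_refl he l
  have i3 := (hm.integrable_comp_emb hem).2 i1
  have i4 := (hm.integrable_comp_emb hem).2 i2
  have e3 := hm.integral_comp hem fun y => ‖x - y‖ ^ p * dens a q U y
  have e4 := hm.integral_comp hem fun y => ‖refl e l x - y‖ ^ p * dens a q U y
  have key : G p a q U e l x = fun y =>
      (‖x - y‖ ^ p * dens a q U y - ‖refl e l x - y‖ ^ p * dens a q U y)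
      + (((fun y => ‖x - y‖ ^ p * dens a q U y) ∘ refl e l) y
        - ((fun y => ‖refl e l x - y‖ ^ p * dens a q U y) ∘ refl e l) y) := by
    funext y
    simp only [G, Function.comp_apply, norm_refl_sub_refl he, norm_sub_refl he]
    ring
  rw [key]
  refine ⟨(i1.sub i2).add (i3.sub i4), ?_⟩
  have e1 := integral_add (i1.sub i2) (i3.sub i4)
  simp only [Pi.sub_apply] at e1
  rw [e1, integral_sub i1 i2, integral_sub i3 i4]
  simp only [Function.comp_apply]
  rw [e3, e4, ← h.eq x, ← h.eq (refl e l x)]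
  ring

/-- The part of the half-space `{⟪e, ·⟫ < l}` on which the desired comparison
`U ∘ refl e l ≤ U` fails. -/
def bad (U : E n → ℝ) (e : E n) (l : ℝ) : Set (E n) :=
  {y | inner ℝ e y < l ∧ U y < U (refl e l y)}

lemma measurableSet_bad (h : IsSol p a q c U) (e : E n) (l : ℝ) :
    MeasurableSet (bad U e l) := by
  have h1 : IsOpen {y : E n | inner ℝ e y < l} := isOpen_lt (by fun_prop) continuous_const
  exact (h1.inter (isOpen_lt h.cont (h.cont.comp (continuous_refl e l)))).measurableSet

lemma weight_le {e : E n} (ha : 0 < a) (he : ‖e‖ = 1) {l : ℝ} (hl : l ≤ 0) {y : E n}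
    (hy : inner ℝ e y ≤ l) :
    (1 + ‖y‖ ^ 2) ^ (-a) ≤ (1 + ‖refl e l y‖ ^ 2) ^ (-a) := by
  have := norm_refl_le he hl hy
  exact Real.rpow_le_rpow_of_nonpos (by positivity) (by gcongr) (by linarith)

lemma weight_lt {e : E n} (ha : 0 < a) (he : ‖e‖ = 1) {l : ℝ} (hl : l < 0) {y : E n}
    (hy : inner ℝ e y < l) :
    (1 + ‖y‖ ^ 2) ^ (-a) < (1 + ‖refl e l y‖ ^ 2) ^ (-a) := by
  have := norm_refl_lt he hl hy
  exact Real.rpow_lt_rpow_of_neg (by positivity) (by gcongr) (by linarith)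

/-- Convexity of `t ↦ t^{-q}`, in tangent-line form. -/
lemma rpow_neg_sub_le {q s t : ℝ} (hq : 0 < q) (hs : 0 < s) (ht : 0 < t) :
    s ^ (-q) - t ^ (-q) ≤ q * s ^ (-q) * s⁻¹ * (t - s) := by
  have hb : 1 + (-q) * (t / s - 1) ≤ (t / s) ^ (-q) := by
    have hts := div_pos ht hs
    have h1 := mul_le_mul_of_nonneg_left (Real.log_le_sub_one_of_pos hts) hq.le
    rw [Real.rpow_def_of_pos hts]
    have h2 := Real.add_one_le_exp (Real.log (t / s) * -q)
    linarith
  rw [Real.div_rpow ht.le hs.le] at hb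
  have hsq : 0 < s ^ (-q) := Real.rpow_pos_of_pos hs _
  have h2 := mul_le_mul_of_nonneg_left hb hsq.le
  rw [mul_div_cancel₀ _ hsq.ne'] at h2
  have : s ^ (-q) * (1 + -q * (t / s - 1)) = s ^ (-q) - q * s ^ (-q) * s⁻¹ * (t - s) := by
    field_simp
    ring
  linarith

/-- On the half-space, the integrand `G` is bounded below by a contribution carried by the bad
set, if the deficit `U ∘ refl e l - U` is at most `N (1 + |y|)^p`. -/
lemma G_lower (h : IsSol p a q c U) {e : E n} (he : ‖e‖ = 1) {l : ℝ} (hl : l ≤ 0) {N : ℝ}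
    (hN : ∀ y, inner ℝ e y < l → U (refl e l y) - U y ≤ N * (1 + ‖y‖) ^ p)
    {x y : E n} (hx : inner ℝ e x < l) (hy : inner ℝ e y < l) :
    -(N * (q / c) * (1 + ‖x‖) ^ p *
      (bad U e l).indicator (fun y => (1 + ‖y‖) ^ p * dens a q U y) y) ≤ G p a q U e l x y := by
  have hp := h.hp
  have hk : ‖x - y‖ ^ p ≤ ‖refl e l x - y‖ ^ p :=
    Real.rpow_le_rpow (norm_nonneg _) (norm_sub_lt_refl he hx hy).le hp.le
  have hw := weight_le (y := y) h.ha he hl hy.le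
  have hw0 : 0 < (1 + ‖y‖ ^ 2) ^ (-a) := by positivity
  have hUy := h.pos y
  have hUr := h.pos (refl e l y)
  have hrq : 0 < U (refl e l y) ^ (-q) := Real.rpow_pos_of_pos hUr _
  have hd1 : dens a q U y - dens a q U (refl e l y) ≤
      (1 + ‖y‖ ^ 2) ^ (-a) * (U y ^ (-q) - U (refl e l y) ^ (-q)) := by
    unfold dens
    nlinarith [mul_le_mul_of_nonneg_right hw hrq.le]
  by_cases hb : y ∈ bad U e l
  · rw [indicator_of_mem hb]
    have hk2 : ‖refl e l x - y‖ ^ p - ‖x - y‖ ^ p ≤ (1 + ‖x‖) ^ p * (1 + ‖y‖) ^ p := by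
      have h1 := rpow_norm_sub_le hp (refl e l x) y
      have h2 : (1 + ‖refl e l x‖) ^ p ≤ (1 + ‖x‖) ^ p :=
        Real.rpow_le_rpow (by positivity) (by linarith [norm_refl_le he hl hx.le]) hp.le
      have h3 : 0 ≤ ‖x - y‖ ^ p := by positivity
      have h4 : 0 ≤ (1 + ‖y‖) ^ p := by positivity
      nlinarith [mul_le_mul_of_nonneg_right h2 h4]
    have hD : dens a q U y - dens a q U (refl e l y) ≤ N * (q / c) * dens a q U y := by
      refine hd1.trans ?_
      have h1 := rpow_neg_sub_le h.hq hUy hUr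
      have h2 := hN y hy
      have h3 : (U y)⁻¹ * (U (refl e l y) - U y) ≤ N / c := by
        have hNp : 0 < N * (1 + ‖y‖) ^ p := lt_of_lt_of_le (sub_pos.2 hb.2) h2
        have hy1 : 0 < (1 + ‖y‖) ^ p := by positivity
        have hN0 : 0 < N := pos_of_mul_pos_left hNp hy1.le
        rw [inv_mul_le_iff₀ hUy, mul_div_assoc', le_div_iff₀ h.hc]
        nlinarith [mul_le_mul_of_nonneg_left (h.lower y) hN0.le,
          mul_le_mul_of_nonneg_right h2 h.hc.le]
      have hs : 0 < U y ^ (-q) := Real.rpow_pos_of_pos hUy _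
      have h4 : U y ^ (-q) - U (refl e l y) ^ (-q) ≤ N * (q / c) * U y ^ (-q) := by
        refine h1.trans ?_
        calc q * U y ^ (-q) * (U y)⁻¹ * (U (refl e l y) - U y)
            = (q * U y ^ (-q)) * ((U y)⁻¹ * (U (refl e l y) - U y)) := by ring
          _ ≤ (q * U y ^ (-q)) * (N / c) :=
              mul_le_mul_of_nonneg_left h3 (mul_nonneg h.hq.le hs.le)
          _ = _ := by ring
      calc _ ≤ (1 + ‖y‖ ^ 2) ^ (-a) * (N * (q / c) * U y ^ (-q)) :=
            mul_le_mul_of_nonneg_left h4 hw0.le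
        _ = _ := by unfold dens; ring
    have hNq : 0 ≤ N * (q / c) * dens a q U y := by
      have hNp : 0 < N * (1 + ‖y‖) ^ p := lt_of_lt_of_le (sub_pos.2 hb.2) (hN y hy)
      have hN0 : 0 < N := pos_of_mul_pos_left hNp (by positivity)
      have := h.dens_pos y
      have := h.hq
      have := h.hc
      positivity
    have hfin := mul_le_mul_of_nonneg_right hk2 hNq
    have hfin2 := mul_le_mul_of_nonneg_left hD (sub_nonneg.2 hk)
    unfold G
    nlinarith
  · rw [indicator_of_notMem hb, mul_zero, neg_zero]
    have hle : U (refl e l y) ≤ U y := by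
      by_contra hcon
      exact hb ⟨hy, not_le.1 hcon⟩
    have : U y ^ (-q) ≤ U (refl e l y) ^ (-q) :=
      Real.rpow_le_rpow_of_nonpos hUr hle (by linarith [h.hq])
    unfold G
    exact mul_nonneg_of_nonpos_of_nonpos (by linarith)
      (hd1.trans (mul_nonpos_of_nonneg_of_nonpos hw0.le (by linarith)))

/-- Improvement of the deficit bound by a factor that is small with the mass of the bad set. -/
lemma deficit_step (h : IsSol p a q c U) {e : E n} (he : ‖e‖ = 1) {l : ℝ} (hl : l ≤ 0) {N : ℝ}
    (hN0 : 0 ≤ N)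
    (hN : ∀ y, inner ℝ e y < l → U (refl e l y) - U y ≤ N * (1 + ‖y‖) ^ p)
    (hsmall : ∫ y, (bad U e l).indicator (fun y => (1 + ‖y‖) ^ p * dens a q U y) y ≤ c / (2 * q))
    {x : E n} (hx : inner ℝ e x < l) :
    U (refl e l x) - U x ≤ N / 2 * (1 + ‖x‖) ^ p := by
  set I : E n → ℝ := (bad U e l).indicator (fun y => (1 + ‖y‖) ^ p * dens a q U y) with hI
  have hI0 : ∀ y, 0 ≤ I y := fun y =>
    indicator_nonneg (fun z _ => mul_nonneg (by positivity) (h.dens_pos z).le) y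
  have hIi : Integrable I := h.int.indicator (h.measurableSet_bad e l)
  have hm := measurePreserving_refl he l
  have hem := measurableEmbedding_refl he l
  have hIi' : Integrable (I ∘ refl e l) := (hm.integrable_comp_emb hem).2 hIi
  have hIe : ∫ y, (I ∘ refl e l) y = ∫ y, I y := hm.integral_comp hem I
  obtain ⟨hGi, hGe⟩ := h.integrable_G he l x
  have hq := h.hq
  have hc := h.hc
  set A := N * (q / c) * (1 + ‖x‖) ^ p with hA
  have hA0 : 0 ≤ A := by positivity
  have hpt : ∀ y, -(A * (I y + (I ∘ refl e l) y)) ≤ G p a q U e l x y := by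
    intro y
    have h1 := mul_nonneg hA0 (hI0 y)
    have h2 := mul_nonneg hA0 (hI0 (refl e l y))
    simp only [Function.comp_apply, mul_add]
    rcases lt_trichotomy (inner ℝ e y) l with hy | hy | hy
    · have := h.G_lower he hl hN hx hy
      linarith
    · have : refl e l y = y := by simp [refl, hy]
      have : G p a q U e l x y = 0 := by simp [G, this]
      linarith
    · have := h.G_lower he hl hN hx (y := refl e l y) (by rw [inner_refl he]; linarith)
      rw [G_refl he] at this
      linarith
  have := integral_mono ((hIi.add hIi').const_mul A).neg hGi hpt
  rw [hGe] at this
  simp only [Pi.neg_apply, Pi.add_apply] at this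
  rw [integral_neg, integral_const_mul, integral_add hIi hIi', hIe] at this
  have h3 : A * ∫ y, I y ≤ A * (c / (2 * q)) := mul_le_mul_of_nonneg_left hsmall hA0
  have h4 : A * (c / (2 * q)) = N / 2 * (1 + ‖x‖) ^ p := by
    rw [hA]; field_simp
  linarith

/-- The comparison `U ∘ refl e l ≤ U` on the half-space `{⟪e, ·⟫ < l}`. -/
def Good (U : E n → ℝ) (e : E n) (l : ℝ) : Prop :=
  ∀ x, inner ℝ e x < l → U (refl e l x) ≤ U x

/-- Integral form of the narrow region principle. -/
lemma good_of_small (h : IsSol p a q c U) {e : E n} (he : ‖e‖ = 1) {l : ℝ} (hl : l ≤ 0)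
    (hsmall : ∫ y, (bad U e l).indicator (fun y => (1 + ‖y‖) ^ p * dens a q U y) y
      ≤ c / (2 * q)) : Good U e l := by
  set C := ∫ y, (1 + ‖y‖) ^ p * dens a q U y with hC
  have hC0 : 0 ≤ C := integral_nonneg fun y => mul_nonneg (by positivity) (h.dens_pos y).le
  have hk : ∀ k : ℕ, ∀ y, inner ℝ e y < l →
      U (refl e l y) - U y ≤ C * (1 / 2) ^ k * (1 + ‖y‖) ^ p := by
    intro k
    induction k with
    | zero =>
      intro y hy
      have h1 := h.upper (refl e l y)
      have h2 : (1 + ‖refl e l y‖) ^ p ≤ (1 + ‖y‖) ^ p :=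
        Real.rpow_le_rpow (by positivity) (by linarith [norm_refl_le he hl hy.le]) h.hp.le
      have h3 := mul_le_mul_of_nonneg_left h2 hC0
      have := h.pos y
      simp only [pow_zero, mul_one]
      linarith
    | succ k ih =>
      intro y hy
      have hN0 : 0 ≤ C * (1 / 2 : ℝ) ^ k := mul_nonneg hC0 (by positivity)
      have := h.deficit_step he hl hN0 ih hsmall hy
      calc _ ≤ _ := this
        _ = _ := by rw [pow_succ]; ring
  intro x hx
  have hlim : Tendsto (fun k : ℕ => C * (1 / 2 : ℝ) ^ k * (1 + ‖x‖) ^ p) atTop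
      (𝓝 (C * 0 * (1 + ‖x‖) ^ p)) :=
    ((tendsto_pow_atTop_nhds_zero_of_lt_one (by norm_num) (by norm_num)).const_mul C).mul_const _
  have := ge_of_tendsto' hlim fun k => hk k x hx
  simp only [mul_zero, zero_mul] at this
  linarith

/-! ### Moving the planes -/

/-- If each point (up to a null set) eventually leaves the bad sets along a filter of levels, then
the comparison holds eventually. -/
lemma eventually_good (h : IsSol p a q c U) {e : E n} (he : ‖e‖ = 1) {f : Filter ℝ}
    [f.IsCountablyGenerated] (hf : ∀ᶠ l in f, l ≤ 0)
    (hb : ∀ᵐ y : E n, ∀ᶠ l in f, y ∉ bad U e l) : ∀ᶠ l in f, Good U e l := by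
  have hlim : Tendsto (fun l => ∫ y, (bad U e l).indicator
      (fun y => (1 + ‖y‖) ^ p * dens a q U y) y) f (𝓝 (∫ _ : E n, (0 : ℝ))) := by
    refine tendsto_integral_filter_of_dominated_convergence
      (fun y => (1 + ‖y‖) ^ p * dens a q U y) ?_ ?_ h.int ?_
    · exact Eventually.of_forall fun l =>
        (h.int.indicator (h.measurableSet_bad e l)).aestronglyMeasurable
    · refine Eventually.of_forall fun l => ae_of_all _ fun y => ?_
      have h0 : 0 ≤ (1 + ‖y‖) ^ p * dens a q U y :=
        mul_nonneg (by positivity) (h.dens_pos y).le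
      refine (norm_indicator_le_norm_self _ _).trans (le_of_eq ?_)
      exact Real.norm_of_nonneg h0
    · filter_upwards [hb] with y hy
      refine tendsto_const_nhds.congr' ?_
      filter_upwards [hy] with l hl
      rw [indicator_of_notMem hl]
  rw [integral_zero] at hlim
  have hpos : 0 < c / (2 * q) := div_pos h.hc (by linarith [h.hq])
  filter_upwards [hf, hlim.eventually (gt_mem_nhds hpos)] with l h1 h2
  exact h.good_of_small he h1 h2.le

/-- At a negative level, the comparison self-improves to a strict one, because the weight
`(1 + |y|²)^{-a}` is strictly radially decreasing. -/
lemma strict_of_good (h : IsSol p a q c U) {e : E n} (he : ‖e‖ = 1) {l : ℝ} (hl : l < 0)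
    (hg : Good U e l) {x : E n} (hx : inner ℝ e x < l) : U (refl e l x) < U x := by
  obtain ⟨hGi, hGe⟩ := h.integrable_G he l x
  have hpos : ∀ y, inner ℝ e y < l → 0 < G p a q U e l x y := by
    intro y hy
    have hk : ‖x - y‖ ^ p < ‖refl e l x - y‖ ^ p :=
      Real.rpow_lt_rpow (norm_nonneg _) (norm_sub_lt_refl he hx hy) h.hp
    have hw := weight_lt (y := y) h.ha he hl hy
    have hU : U y ^ (-q) ≤ U (refl e l y) ^ (-q) :=
      Real.rpow_le_rpow_of_nonpos (h.pos _) (hg y hy) (by linarith [h.hq])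
    have hd : dens a q U y < dens a q U (refl e l y) :=
      mul_lt_mul hw hU (Real.rpow_pos_of_pos (h.pos y) _) (by positivity)
    exact mul_pos_of_neg_of_neg (sub_neg.2 hk) (sub_neg.2 hd)
  have hnn : ∀ y, 0 ≤ G p a q U e l x y := by
    intro y
    rcases lt_trichotomy (inner ℝ e y) l with hy | hy | hy
    · exact (hpos y hy).le
    · have : refl e l y = y := by simp [refl, hy]
      simp [G, this]
    · rw [← G_refl he]
      exact (hpos _ (by rw [inner_refl he]; linarith)).le
  have hint : 0 < ∫ y, G p a q U e l x y := by
    rw [integral_pos_iff_support_of_nonneg hnn hGi]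
    have hopen : IsOpen {y : E n | inner ℝ e y < l} := isOpen_lt (by fun_prop) continuous_const
    refine lt_of_lt_of_le (hopen.measure_pos volume ⟨x, hx⟩) (measure_mono fun y hy => ?_)
    exact (hpos y hy).ne'
  linarith

/-- The moving plane argument: the comparison holds at every level `l ≤ 0`. -/
lemma good (h : IsSol p a q c U) {e : E n} (he : ‖e‖ = 1) {l : ℝ} (hl : l ≤ 0) :
    Good U e l := by
  have hstart : ∀ᶠ l in atBot, Good U e l := by
    refine h.eventually_good he (eventually_le_atBot 0) (ae_of_all _ fun y => ?_)
    filter_upwards [eventually_le_atBot (inner ℝ e y)] with l hl hb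
    exact absurd hb.1 (not_lt.2 hl)
  obtain ⟨m, hm⟩ := eventually_atBot.1 hstart
  rcases le_total l m with hlm | hlm
  · exact hm l hlm
  suffices hsub : Icc m 0 ⊆ {l | Good U e l} from hsub ⟨hlm, hl⟩
  refine IsClosed.Icc_subset_of_forall_mem_nhdsWithin ?_ (hm m le_rfl) ?_
  · refine IsSeqClosed.isClosed fun s t hs hst => ⟨fun x hx => ?_, ?_⟩
    · have hc : Tendsto (fun k => U (refl e (s k) x)) atTop (𝓝 (U (refl e t x))) :=
        ((h.cont.comp (continuous_refl_uncurry e)).comp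
          (continuous_id.prodMk continuous_const)).continuousAt.tendsto.comp hst
      refine le_of_tendsto hc ?_
      filter_upwards [hst.eventually (lt_mem_nhds hx)] with k hk
      exact (hs k).1 x hk
    · exact isClosed_Icc.mem_of_tendsto hst (Eventually.of_forall fun k => (hs k).2)
  · rintro l₀ ⟨hg, hl₀⟩
    have : ∀ᶠ l in 𝓝 l₀, Good U e l := by
      refine h.eventually_good he ((gt_mem_nhds hl₀.2).mono fun _ => le_of_lt) ?_
      have hnull : ∀ᵐ y : E n, inner ℝ e y ≠ l₀ := by
        rw [ae_iff]
        simpa using hyperplane_null he l₀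
      filter_upwards [hnull] with y hy
      rcases hy.lt_or_gt with hy | hy
      · have hs := h.strict_of_good he hl₀.2 hg hy
        have hc : Continuous fun l => U (refl e l y) :=
          (h.cont.comp (continuous_refl_uncurry e)).comp (continuous_id.prodMk continuous_const)
        filter_upwards [hc.continuousAt.eventually (gt_mem_nhds hs)] with l hl hb
        exact absurd hb.2 (not_lt.2 hl.le)
      · filter_upwards [gt_mem_nhds hy] with l hl hb
        exact absurd hb.1 (not_lt.2 hl.le)
    exact mem_nhdsWithin_of_mem_nhds this

/-- The hyperplane through the origin orthogonal to `z - y` exchanges `y` and `z`. -/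
lemma le_of_norm_eq (h : IsSol p a q c U) {y z : E n} (hyz : ‖y‖ = ‖z‖) : U z ≤ U y := by
  by_cases hne : y = z
  · rw [hne]
  have hd : 0 < ‖z - y‖ := norm_pos_iff.2 (sub_ne_zero.2 (Ne.symm hne))
  have he : ‖(‖z - y‖⁻¹ • (z - y))‖ = 1 := by
    rw [norm_smul, norm_inv, norm_norm, inv_mul_cancel₀ hd.ne']
  have hsq : 2 * inner ℝ (z - y) y = -‖z - y‖ ^ 2 := by
    have := norm_sub_sq_real z y
    rw [inner_sub_left, real_inner_self_eq_norm_sq]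
    rw [hyz] at *
    linarith
  have hin : inner ℝ (‖z - y‖⁻¹ • (z - y)) y = -‖z - y‖ / 2 := by
    rw [real_inner_smul_left]
    field_simp
    linarith
  have := h.good he le_rfl y (by rw [hin]; linarith)
  rw [refl, hin, smul_smul] at this
  have h2 : 2 * (0 - -‖z - y‖ / 2) * ‖z - y‖⁻¹ = 1 := by field_simp; ring
  rw [h2, one_smul, add_sub_cancel] at this
  exact this

lemma mono (h : IsSol p a q c U) {e : E n} (he : ‖e‖ = 1) {s t : ℝ} (hs : 0 < s) (hst : s ≤ t) :
    U (s • e) ≤ U (t • e) := by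
  rcases hst.eq_or_lt with rfl | hst
  · rfl
  -- the reflection in `{⟪-e, ·⟫ = -(s + t) / 2}` exchanges `t • e` and `s • e`
  have he' : ‖-e‖ = 1 := by rwa [norm_neg]
  have hin : inner ℝ (-e) (t • e) = -t := by
    rw [inner_neg_left, inner_smul_right, real_inner_self_eq_norm_sq, he]; ring
  have := h.good he' (l := -(s + t) / 2) (by linarith) (t • e) (by rw [hin]; linarith)
  rw [refl, hin, smul_neg, ← neg_smul, ← add_smul] at this
  ring_nf at this
  simpa using this

end IsSol

/-! ### Extending the solution across the origin -/

/-- A nonnegative, almost everywhere positive density `g` of finite `p`-th moment has a continuous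
potential `∫ |x - y|^p g(y) dy`, comparable from below to `(1 + |x|)^p`. -/
lemma potential_props {p : ℝ} (hp : 0 < p) (hn : 1 ≤ n) {g : E n → ℝ} (hg0 : ∀ y, 0 ≤ g y)
    (hgpos : ∀ y, y ≠ 0 → 0 < g y) (hgm : AEStronglyMeasurable g volume)
    (hgi : Integrable fun y => (1 + ‖y‖) ^ p * g y) :
    Continuous (fun x => ∫ y, ‖x - y‖ ^ p * g y) ∧
    ∃ c > 0, ∀ x, c * (1 + ‖x‖) ^ p ≤ ∫ y, ‖x - y‖ ^ p * g y := by
  have : Nonempty (Fin n) := ⟨⟨0, hn⟩⟩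
  have hmeas : ∀ x : E n, AEStronglyMeasurable (fun y => ‖x - y‖ ^ p * g y) volume := fun x =>
    (((continuous_const.sub continuous_id).norm.rpow_const
      fun _ => Or.inr hp.le).aestronglyMeasurable).mul hgm
  have hbd : ∀ x y : E n, ‖‖x - y‖ ^ p * g y‖ ≤ (1 + ‖x‖) ^ p * ((1 + ‖y‖) ^ p * g y) := by
    intro x y
    rw [Real.norm_of_nonneg (mul_nonneg (by positivity) (hg0 y)), ← mul_assoc]
    exact mul_le_mul_of_nonneg_right (rpow_norm_sub_le hp x y) (hg0 y)
  have hint : ∀ x : E n, Integrable fun y => ‖x - y‖ ^ p * g y := fun x =>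
    (hgi.const_mul _).mono' (hmeas x) (ae_of_all _ (hbd x))
  have hcont : Continuous (fun x => ∫ y, ‖x - y‖ ^ p * g y) := by
    refine continuous_iff_continuousAt.2 fun x₀ => ?_
    refine continuousAt_of_dominated (bound := fun y => (2 + ‖x₀‖) ^ p * ((1 + ‖y‖) ^ p * g y))
      (Eventually.of_forall hmeas) ?_ (hgi.const_mul _) (ae_of_all _ fun y => ?_)
    · have : ∀ᶠ x in 𝓝 x₀, ‖x‖ < 1 + ‖x₀‖ :=
        continuous_norm.continuousAt.eventually (gt_mem_nhds (by linarith))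
      filter_upwards [this] with x hx
      refine ae_of_all _ fun y => (hbd x y).trans ?_
      refine mul_le_mul_of_nonneg_right ?_ (mul_nonneg (by positivity) (hg0 y))
      exact Real.rpow_le_rpow (by positivity) (by linarith) hp.le
    · exact (((continuous_id.sub continuous_const).norm.rpow_const
        fun _ => Or.inr hp.le).mul continuous_const).continuousAt
  refine ⟨hcont, ?_⟩
  have hpos : ∀ x : E n, 0 < ∫ y, ‖x - y‖ ^ p * g y := by
    intro x
    rw [integral_pos_iff_support_of_nonneg (fun y => mul_nonneg (by positivity) (hg0 y)) (hint x)]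
    have hopen : IsOpen ({x}ᶜ ∩ {0}ᶜ : Set (E n)) :=
      isOpen_compl_singleton.inter isOpen_compl_singleton
    have hne : ({x}ᶜ ∩ {0}ᶜ : Set (E n)).Nonempty := by
      rw [← compl_union, nonempty_compl]
      intro hu
      exact (infinite_univ (α := E n)) (hu ▸ (finite_singleton x).union (finite_singleton 0))
    refine lt_of_lt_of_le (hopen.measure_pos volume hne) (measure_mono fun y hy => ?_)
    have h1 : 0 < ‖x - y‖ := norm_pos_iff.2 (sub_ne_zero.2 fun h => hy.1 h.symm)
    exact (mul_pos (Real.rpow_pos_of_pos h1 p) (hgpos y hy.2)).ne'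
  -- near the origin the bound comes from compactness, away from it from the mass of the unit ball
  obtain ⟨x₁, -, hx₁⟩ := (isCompact_closedBall (0 : E n) 2).exists_isMinOn
    ⟨0, by simp⟩ hcont.continuousOn
  set m := ∫ y, ‖x₁ - y‖ ^ p * g y with hm
  have hm0 : 0 < m := hpos x₁
  set B := Metric.ball (0 : E n) 1 with hB
  have hgB : IntegrableOn g B := by
    refine (hgi.integrableOn (s := B)).mono' hgm.restrict (ae_of_all _ fun y => ?_)
    rw [Real.norm_of_nonneg (hg0 y)]
    refine le_mul_of_one_le_left (hg0 y) (Real.one_le_rpow (by linarith [norm_nonneg y]) hp.le)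
  set b := ∫ y in B, g y with hb
  have hb0 : 0 < b := by
    rw [hb, setIntegral_pos_iff_support_of_nonneg_ae (ae_of_all _ hg0) hgB]
    have hopen : IsOpen ({0}ᶜ ∩ B : Set (E n)) :=
      isOpen_compl_singleton.inter Metric.isOpen_ball
    have hne : ({0}ᶜ ∩ B : Set (E n)).Nonempty := by
      obtain ⟨v, hv⟩ := exists_norm_eq (E n) (c := 1 / 2) (by norm_num)
      refine ⟨v, fun h0 => ?_, by rw [hB, mem_ball_zero_iff, hv]; norm_num⟩
      rw [mem_singleton_iff.1 h0, norm_zero] at hv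
      norm_num at hv
    refine lt_of_lt_of_le (hopen.measure_pos volume hne) (measure_mono ?_)
    exact inter_subset_inter_left _ fun y hy => (hgpos y hy).ne'
  refine ⟨min (m * (3 ^ p)⁻¹) (b * (4 ^ p)⁻¹), by positivity, fun x => ?_⟩
  have h1p : 0 ≤ (1 + ‖x‖) ^ p := by positivity
  rcases le_total ‖x‖ 2 with hx | hx
  · have h1 : m ≤ ∫ y, ‖x - y‖ ^ p * g y := hx₁ (by simpa using hx)
    refine le_trans ?_ h1
    refine (mul_le_mul_of_nonneg_right (min_le_left _ _) h1p).trans ?_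
    rw [mul_assoc]
    refine mul_le_of_le_one_right hm0.le ?_
    rw [inv_mul_le_iff₀ (by positivity), mul_one]
    exact Real.rpow_le_rpow (by positivity) (by linarith) hp.le
  · refine (mul_le_mul_of_nonneg_right (min_le_right _ _) h1p).trans ?_
    calc b * (4 ^ p)⁻¹ * (1 + ‖x‖) ^ p = ∫ y in B, ((1 + ‖x‖) / 4) ^ p * g y := by
          rw [integral_const_mul, Real.div_rpow (by positivity) (by norm_num)]
          ring
      _ ≤ ∫ y in B, ‖x - y‖ ^ p * g y := by
          refine setIntegral_mono_on (hgB.const_mul _) (hint x).integrableOn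
            Metric.isOpen_ball.measurableSet fun y hy => ?_
          refine mul_le_mul_of_nonneg_right ?_ (hg0 y)
          refine Real.rpow_le_rpow (by positivity) ?_ hp.le
          have := norm_sub_norm_le x y
          rw [hB, mem_ball_zero_iff] at hy
          linarith
      _ ≤ ∫ y, ‖x - y‖ ^ p * g y :=
          setIntegral_le_integral (hint x)
            (ae_of_all _ fun y => mul_nonneg (by positivity) (hg0 y))

/-- A solution on the punctured space agrees there with a continuous solution on the whole space,
namely the potential on the right-hand side of the equation. -/
lemma exists_isSol (hn : 1 ≤ n) {p a q : ℝ} (hp : 0 < p) (ha : 0 < a) (hq : 0 < q) {u : E n → ℝ}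
    (hu_pos : ∀ x : E n, x ≠ 0 → 0 < u x)
    (hu_cont : ContinuousOn u {(0 : E n)}ᶜ)
    (hIE : ∀ x : E n, x ≠ 0 → u x = ∫ y : E n, ‖x - y‖ ^ p * dens a q u y) :
    ∃ c U, IsSol p a q c U ∧ ∀ x, x ≠ 0 → U x = u x := by
  have : Nonempty (Fin n) := ⟨⟨0, hn⟩⟩
  have hne0 : ∀ᵐ y : E n, y ≠ 0 := by simp [ae_iff]
  set g : E n → ℝ := indicator {0}ᶜ (dens a q u) with hg
  have hgne : ∀ y, y ≠ 0 → g y = dens a q u y := fun y hy => indicator_of_mem hy _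
  have hgpos : ∀ y, y ≠ 0 → 0 < g y := by
    intro y hy
    rw [hgne y hy]
    exact mul_pos (by positivity) (Real.rpow_pos_of_pos (hu_pos y hy) _)
  have hg0 : ∀ y, 0 ≤ g y := by
    intro y
    by_cases hy : y = 0
    · rw [hg, indicator_of_notMem (by simpa using hy)]
    · exact (hgpos y hy).le
  have hgm : AEStronglyMeasurable g volume := by
    have hms : MeasurableSet ({0}ᶜ : Set (E n)) := (measurableSet_singleton 0).compl
    refine (aestronglyMeasurable_indicator_iff hms).2 (ContinuousOn.aestronglyMeasurable ?_ hms)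
    unfold dens
    refine ContinuousOn.mul ?_ (hu_cont.rpow_const fun y hy => Or.inl (hu_pos y hy).ne')
    exact (Continuous.rpow_const (by fun_prop) fun x => Or.inl (by positivity)).continuousOn
  have hcongr : ∀ x : E n, (fun y => ‖x - y‖ ^ p * g y) =ᵐ[volume]
      fun y => ‖x - y‖ ^ p * dens a q u y := by
    intro x
    filter_upwards [hne0] with y hy
    rw [hgne y hy]
  have hint : ∀ x : E n, x ≠ 0 → Integrable fun y => ‖x - y‖ ^ p * g y := by
    intro x hx
    refine Integrable.congr ?_ (hcongr x).symm
    -- otherwise the integral would be `0` by convention, whereas `u x > 0`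
    by_contra hcon
    have := hIE x hx
    rw [integral_undef hcon] at this
    exact (hu_pos x hx).ne' this
  have hgi : Integrable fun y => (1 + ‖y‖) ^ p * g y := by
    obtain ⟨e, he⟩ := exists_norm_eq (E n) (c := 1) zero_le_one
    have he0 : e ≠ 0 := by
      rintro rfl
      simp at he
    refine (((hint e he0).add (hint (-e) (neg_ne_zero.2 he0))).const_mul (2 ^ p)).mono'
      ?_ (ae_of_all _ fun y => ?_)
    · exact (((continuous_const.add continuous_norm).rpow_const
        fun _ => Or.inr hp.le).aestronglyMeasurable).mul hgm
    · rw [Real.norm_of_nonneg (mul_nonneg (by positivity) (hg0 y))]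
      simp only [Pi.add_apply]
      rw [← add_mul, ← mul_assoc]
      refine mul_le_mul_of_nonneg_right ?_ (hg0 y)
      -- one of `|e - y|`, `|e + y|` is at least `max 1 |y| ≥ (1 + |y|) / 2`
      have h1 : 2 ≤ ‖e - y‖ + ‖-e - y‖ := by
        have := norm_sub_le (e - y) (-e - y)
        rw [show e - y - (-e - y) = (2 : ℝ) • e by module, norm_smul, he] at this
        simpa using this
      have h2 : 2 * ‖y‖ ≤ ‖e - y‖ + ‖-e - y‖ := by
        have := norm_add_le (e - y) (-e - y)
        rw [show e - y + (-e - y) = (-2 : ℝ) • y by module, norm_smul] at this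
        simpa using this
      have hpow : ∀ r : ℝ, 0 ≤ r → (1 + ‖y‖) ≤ 2 * r → (1 + ‖y‖) ^ p ≤ 2 ^ p * r ^ p := by
        intro r hr h
        rw [← Real.mul_rpow (by norm_num) hr]
        exact Real.rpow_le_rpow (by positivity) h hp.le
      have hA : 0 ≤ (2 : ℝ) ^ p * ‖e - y‖ ^ p := by positivity
      have hB : 0 ≤ (2 : ℝ) ^ p * ‖-e - y‖ ^ p := by positivity
      rw [mul_add]
      rcases le_total ‖e - y‖ ‖-e - y‖ with h | h
      · linarith [hpow _ (norm_nonneg (-e - y)) (by linarith)]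
      · linarith [hpow _ (norm_nonneg (e - y)) (by linarith)]
  obtain ⟨hcont, c, hc, hlow⟩ := potential_props hp hn hg0 hgpos hgm hgi
  set U : E n → ℝ := fun x => ∫ y, ‖x - y‖ ^ p * g y with hU
  have hUu : ∀ x, x ≠ 0 → U x = u x := fun x hx => by
    rw [hIE x hx, hU]
    exact integral_congr_ae (hcongr x)
  have hd : ∀ᵐ y : E n, g y = dens a q U y := by
    filter_upwards [hne0] with y hy
    rw [hgne y hy, dens, dens, hUu y hy]
  refine ⟨c, U, ⟨hp, ha, hq, hc, hcont, hlow, hgi.congr ?_, fun x => integral_congr_ae ?_⟩, hUu⟩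
  · filter_upwards [hd] with y hy
    rw [hy]
  · filter_upwards [hd] with y hy
    rw [hy]

end MovingPlane

theorem stmt_1 {n : ℕ} (hn : 2 ≤ n) (p q : ℝ) (hp : 0 < p) (hq : 0 < q)
    (hq' : q < (p + 2 * (n : ℝ)) / p)
    (u : EuclideanSpace ℝ (Fin n) → ℝ)
    (hu_pos : ∀ x : EuclideanSpace ℝ (Fin n), x ≠ 0 → 0 < u x)
    (hu_C1 : ContDiffOn ℝ 1 u {(0 : EuclideanSpace ℝ (Fin n))}ᶜ)
    (hIE : ∀ x : EuclideanSpace ℝ (Fin n), x ≠ 0 →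
      u x = ∫ y : EuclideanSpace ℝ (Fin n),
        ‖x - y‖ ^ p * (1 + ‖y‖ ^ 2) ^ ((p * q - p - 2 * (n : ℝ)) / 2) * u y ^ (-q)) :
    (∀ y z : EuclideanSpace ℝ (Fin n), y ≠ 0 → z ≠ 0 → ‖y‖ = ‖z‖ → u y = u z) ∧
    (∀ e : EuclideanSpace ℝ (Fin n), ‖e‖ = 1 →
      ∀ s t : ℝ, 0 < s → s ≤ t → u (s • e) ≤ u (t • e)) := by
  have ha : 0 < (p + 2 * (n : ℝ) - p * q) / 2 := by
    rw [lt_div_iff₀ hp] at hq'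
    linarith
  have hIE' : ∀ x : EuclideanSpace ℝ (Fin n), x ≠ 0 → u x = ∫ y : EuclideanSpace ℝ (Fin n),
      ‖x - y‖ ^ p * MovingPlane.dens ((p + 2 * (n : ℝ) - p * q) / 2) q u y := by
    intro x hx
    rw [hIE x hx]
    refine integral_congr_ae (ae_of_all _ fun y => ?_)
    have : (p * q - p - 2 * (n : ℝ)) / 2 = -((p + 2 * (n : ℝ) - p * q) / 2) := by ring
    simp only [MovingPlane.dens, this, mul_assoc]
  obtain ⟨c, U, hU, hUu⟩ := MovingPlane.exists_isSol (by linarith) hp ha hq hu_pos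
    hu_C1.continuousOn hIE'
  refine ⟨fun y z hy hz hyz => ?_, fun e he s t hs hst => ?_⟩
  · rw [← hUu y hy, ← hUu z hz]
    exact le_antisymm (hU.le_of_norm_eq hyz.symm) (hU.le_of_norm_eq hyz)
  · have he0 : e ≠ 0 := by
      rintro rfl
      simp at he
    rw [← hUu _ (smul_ne_zero hs.ne' he0), ← hUu _ (smul_ne_zero (hs.trans_le hst).ne' he0)]
    exact hU.mono he hs hst
end
end

section
/- Let n ≥ 2 be an integer and p > 0. Let f : [0,∞) × (0,∞) → (0,∞) be continuous and satisfy Condition (F), and let u be a positive C¹ solution of the integral equation (IE). Then for every x ∈ ℝⁿ ∖ {0}, every λ with 0 < λ < |x|, and every y ∈ ℝⁿ ∖ {0} with |y−x| ≥ λ, one has u_{x,λ}(y) ≥ u(y), i.e. (|y−x|/λ)^p u(x + λ²(y−x)/|y−x|²) ≥ u(y). (Equivalently, the moving-spheres critical radius λ̄(x) satisfies λ̄(x) ≥ |x| for every x ≠ 0.) -/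
/-!
Let `h y = f |y| (u y)`, and let `U x = ∫ |x - y| ^ p h(y) dy` be its potential. Positivity of `u`
makes the integrand integrable at two distinct centers, hence at every center, so `U` is continuous
on all of `ℝⁿ` and agrees with `u` off the origin.

Fix `x ≠ 0`. Folding the integral with the inversion about the sphere of radius `l` centered at
`x`, whose Jacobian is `(l / |z - x|) ^ (2 n)`, gives
`U_{x,l}(ξ) - U(ξ) = ∫_{|z-x|>l} K(ξ, z) (h(z) - (l / |z-x|) ^ (p + 2n) h(z^{x,l})) dz`,
where `K(ξ, z) > 0` for `ξ`, `z` outside the sphere (`integral_fold`, `kern_pos`). Condition (F)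
makes the bracket positive as soon as `U ≤ U_{x,l}` outside the sphere, so for `l < |x|` this weak
inequality improves itself in three ways:

* it is strict at every exterior point (`pot_lt_kelvin`);
* it is strict at infinity, where `U(y) / |y - x| ^ p` tends to `∫ h < l ^ (-p) U(x)`
  (`tendsto_pot_div`, `mass_lt`);
* the gap grows at least linearly away from the sphere (`exists_hopf_bound`), so
  `r ^ (-p / 2) U(x + r θ)` has negative radial derivative on the sphere (`radial_neg_of_hopf`).

Together with compactness these show that the inequality persists for slightly larger radii
(`eventually_dominates`). It holds for some arbitrarily small radius, because
`r ^ (-p / 2) U(x + r θ)` decreases for small `r` and `U` grows at most like `|y - x| ^ p`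
(`exists_dominates`), and the set of radii for which it holds is closed in `(0, ∞)`
(`isClosed_dominates`). Hence it holds for all radii below `|x|`.
-/

open MeasureTheory

noncomputable section

/-- Kelvin-type transform of `u` about the sphere of radius `l` centered at `x`. -/
def kelvin {n : ℕ} (p : ℝ) (u : EuclideanSpace ℝ (Fin n) → ℝ)
    (x : EuclideanSpace ℝ (Fin n)) (l : ℝ) (ξ : EuclideanSpace ℝ (Fin n)) : ℝ :=
  (‖ξ - x‖ / l) ^ p * u (inversion x l ξ)

open Set Filter Topology

/-! ### Geometry of the inversion and change of variables -/

theorem inversion_eq_mathlib {n : ℕ} (x : EuclideanSpace ℝ (Fin n)) (l : ℝ)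
    (z : EuclideanSpace ℝ (Fin n)) :
    inversion x l z = EuclideanGeometry.inversion x l z := by
  simp [inversion, EuclideanGeometry.inversion, dist_eq_norm, div_pow, add_comm]

section InversionGeometry

variable {n : ℕ} {x ξ z : EuclideanSpace ℝ (Fin n)} {l p : ℝ}

theorem norm_inversion_sub_center (x z : EuclideanSpace ℝ (Fin n)) (l : ℝ) :
    ‖inversion x l z - x‖ = l ^ 2 / ‖z - x‖ := by
  rw [inversion_eq_mathlib, ← dist_eq_norm, ← dist_eq_norm,
    EuclideanGeometry.dist_inversion_center]

theorem inversion_inversion (hl : 0 < l) (x z : EuclideanSpace ℝ (Fin n)) :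
    inversion x l (inversion x l z) = z := by
  rw [inversion_eq_mathlib, inversion_eq_mathlib, EuclideanGeometry.inversion_inversion _ hl.ne']

theorem inversion_ne_center (hl : 0 < l) (hz : z ≠ x) : inversion x l z ≠ x := by
  rw [inversion_eq_mathlib, Ne, EuclideanGeometry.inversion_eq_center hl.ne']
  exact hz

theorem norm_inversion_sub_inversion (l : ℝ) (hξ : ξ ≠ x) (hz : z ≠ x) :
    ‖inversion x l ξ - inversion x l z‖ = l ^ 2 / (‖ξ - x‖ * ‖z - x‖) * ‖ξ - z‖ := by
  rw [inversion_eq_mathlib, inversion_eq_mathlib, ← dist_eq_norm,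
    EuclideanGeometry.dist_inversion_inversion hξ hz, dist_eq_norm, dist_eq_norm, dist_eq_norm]

theorem norm_sub_inversion (hl : 0 < l) (hξ : ξ ≠ x) (hz : z ≠ x) :
    ‖ξ - inversion x l z‖ = l / ‖z - x‖ * (‖ξ - x‖ / l * ‖inversion x l ξ - z‖) := by
  have h := norm_inversion_sub_inversion l hξ (inversion_ne_center hl hz)
  rw [inversion_inversion hl, norm_inversion_sub_center] at h
  have h1 : ‖ξ - x‖ ≠ 0 := norm_ne_zero_iff.2 (sub_ne_zero.2 hξ)
  have h2 : ‖z - x‖ ≠ 0 := norm_ne_zero_iff.2 (sub_ne_zero.2 hz)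
  rw [h]
  field_simp

/-- The algebraic identity behind the positivity of the moving-spheres kernel. -/
theorem sq_sub_sq_kernel (hl : 0 < l) (hξ : ξ ≠ x) (z : EuclideanSpace ℝ (Fin n)) :
    (‖ξ - x‖ / l * ‖inversion x l ξ - z‖) ^ 2 - ‖ξ - z‖ ^ 2 =
      (‖ξ - x‖ ^ 2 - l ^ 2) * (‖z - x‖ ^ 2 - l ^ 2) / l ^ 2 := by
  have h1 : ‖ξ - x‖ ≠ 0 := norm_ne_zero_iff.2 (sub_ne_zero.2 hξ)
  have e1 : ξ - z = (ξ - x) - (z - x) := by abel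
  have e2 : inversion x l ξ - z = (l ^ 2 / ‖ξ - x‖ ^ 2) • (ξ - x) - (z - x) := by
    unfold inversion; abel
  rw [mul_pow, e2, e1]
  generalize ξ - x = a at *
  generalize z - x = b at *
  rw [@norm_sub_sq_real, @norm_sub_sq_real, norm_smul, inner_smul_left, mul_pow,
    Real.norm_eq_abs, sq_abs]
  simp only [conj_trivial]
  field_simp
  ring

theorem continuousAt_inversion (hz : z ≠ x) :
    ContinuousAt (fun q : ℝ × EuclideanSpace ℝ (Fin n) => inversion x q.1 q.2) (l, z) := by
  have h1 : ‖z - x‖ ^ 2 ≠ 0 := pow_ne_zero _ (norm_ne_zero_iff.2 (sub_ne_zero.2 hz))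
  unfold inversion
  fun_prop (disch := exact h1)

theorem image_inversion_exterior (hl : 0 < l) (x : EuclideanSpace ℝ (Fin n)) :
    inversion x l '' {z | l < ‖z - x‖} = Metric.ball x l \ {x} := by
  ext w
  constructor
  · rintro ⟨z, hz, rfl⟩
    have hz' : l < ‖z - x‖ := hz
    refine ⟨?_, ?_⟩
    · rw [mem_ball_iff_norm, norm_inversion_sub_center, div_lt_iff₀ (hl.trans hz')]
      nlinarith
    · refine inversion_ne_center hl ?_
      rintro rfl
      simp at hz'
      linarith
  · rintro ⟨h1, h2⟩
    refine ⟨inversion x l w, ?_, inversion_inversion hl _ _⟩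
    have h3 : 0 < ‖w - x‖ := norm_pos_iff.2 (sub_ne_zero.2 h2)
    rw [mem_ball_iff_norm] at h1
    simp only [mem_ofPred_eq, norm_inversion_sub_center]
    rw [lt_div_iff₀ h3]
    nlinarith

theorem abs_det_reflection {F : Type*} [NormedAddCommGroup F] [InnerProductSpace ℝ F]
    [FiniteDimensional ℝ F] (K : Submodule ℝ F) :
    |(K.reflection : F →L[ℝ] F).det| = 1 := by
  have h : ((K.reflection : F →L[ℝ] F).comp (K.reflection : F →L[ℝ] F)) =
      ContinuousLinearMap.id ℝ F := by
    ext v; simp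
  have h2 : (K.reflection : F →L[ℝ] F).det * (K.reflection : F →L[ℝ] F).det = 1 := by
    have := congrArg ContinuousLinearMap.det h
    rwa [ContinuousLinearMap.det, ContinuousLinearMap.toLinearMap_comp, LinearMap.det_comp,
      ContinuousLinearMap.det, ContinuousLinearMap.coe_id, LinearMap.det_id] at this
  rcases mul_self_eq_one_iff.1 h2 with h3 | h3 <;> rw [h3] <;> simp

theorem hasFDerivAt_inversion_abs_det (hz : z ≠ x) :
    ∃ A : EuclideanSpace ℝ (Fin n) →L[ℝ] EuclideanSpace ℝ (Fin n),
      HasFDerivAt (inversion x l) A z ∧ |A.det| = (l / ‖z - x‖) ^ (2 * n) := by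
  refine ⟨(l / dist z x) ^ 2 • (((Submodule.span ℝ {z - x})ᗮ).reflection :
    EuclideanSpace ℝ (Fin n) →L[ℝ] EuclideanSpace ℝ (Fin n)), ?_, ?_⟩
  · have : inversion x l = EuclideanGeometry.inversion x l :=
      funext fun z => inversion_eq_mathlib x l z
    rw [this]
    exact EuclideanGeometry.hasFDerivAt_inversion hz
  · have := abs_det_reflection ((Submodule.span ℝ {z - x})ᗮ)
    rw [ContinuousLinearMap.det] at this ⊢
    rw [ContinuousLinearMap.toLinearMap_smul, LinearMap.det_smul, abs_mul, this, mul_one,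
      finrank_euclideanSpace_fin, dist_eq_norm, ← pow_mul, abs_of_nonneg]
    exact (even_two_mul n).pow_nonneg _

/-- Change of variables under the inversion, which swaps the exterior and the interior. -/
theorem changeOfVariables_inversion (hl : 0 < l) (x : EuclideanSpace ℝ (Fin n))
    {g : EuclideanSpace ℝ (Fin n) → ℝ} (hg : Integrable g) :
    IntegrableOn (fun z => (l / ‖z - x‖) ^ (2 * n) * g (inversion x l z)) {z | l < ‖z - x‖} ∧
    ∫ z in Metric.ball x l \ {x}, g z =
      ∫ z in {z | l < ‖z - x‖}, (l / ‖z - x‖) ^ (2 * n) * g (inversion x l z) := by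
  have hms : MeasurableSet {z : EuclideanSpace ℝ (Fin n) | l < ‖z - x‖} :=
    (isOpen_lt continuous_const (by fun_prop)).measurableSet
  have hne : ∀ z ∈ {z : EuclideanSpace ℝ (Fin n) | l < ‖z - x‖}, z ≠ x := by
    rintro z hz rfl
    simp at hz
    linarith
  have hex : ∀ z : EuclideanSpace ℝ (Fin n),
      ∃ A : EuclideanSpace ℝ (Fin n) →L[ℝ] EuclideanSpace ℝ (Fin n),
        z ≠ x → HasFDerivAt (inversion x l) A z ∧ |A.det| = (l / ‖z - x‖) ^ (2 * n) := by
    intro z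
    by_cases hz : z = x
    · exact ⟨0, fun h => absurd hz h⟩
    · obtain ⟨A, hA⟩ := hasFDerivAt_inversion_abs_det (l := l) hz
      exact ⟨A, fun _ => hA⟩
  choose A hA using hex
  have hd : ∀ z ∈ {z : EuclideanSpace ℝ (Fin n) | l < ‖z - x‖},
      HasFDerivWithinAt (inversion x l) (A z) {z | l < ‖z - x‖} z :=
    fun z hz => (hA z (hne z hz)).1.hasFDerivWithinAt
  have hinj : InjOn (inversion x l) {z : EuclideanSpace ℝ (Fin n) | l < ‖z - x‖} :=
    (Function.LeftInverse.injective (inversion_inversion hl x)).injOn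
  have hcongr : EqOn (fun z => |(A z).det| • g (inversion x l z))
      (fun z => (l / ‖z - x‖) ^ (2 * n) * g (inversion x l z)) {z | l < ‖z - x‖} := by
    intro z hz
    simp only [(hA z (hne z hz)).2, smul_eq_mul]
  rw [← image_inversion_exterior hl x]
  constructor
  · refine IntegrableOn.congr_fun ?_ hcongr hms
    exact (integrableOn_image_iff_integrableOn_abs_det_fderiv_smul volume hms hd hinj g).1
      hg.integrableOn
  · rw [integral_image_eq_integral_abs_det_fderiv_smul volume hms hd hinj g]
    exact setIntegral_congr_fun hms hcongr

/-- The part of a kernel integral inside the sphere is folded onto the exterior, for a kernel that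
is anti-invariant under the inversion with conformal weight `p`. -/
theorem integral_fold (hn : n ≠ 0) (hl : 0 < l) (x : EuclideanSpace ℝ (Fin n))
    {k h : EuclideanSpace ℝ (Fin n) → ℝ} (hkh : Integrable fun z => k z * h z)
    (hk : ∀ z, l < ‖z - x‖ → k (inversion x l z) = -((l / ‖z - x‖) ^ p * k z)) :
    IntegrableOn (fun z => k z * (h z - (l / ‖z - x‖) ^ (p + 2 * (n : ℝ)) * h (inversion x l z)))
      {z | l < ‖z - x‖} ∧
    ∫ z, k z * h z = ∫ z in {z | l < ‖z - x‖},
      k z * (h z - (l / ‖z - x‖) ^ (p + 2 * (n : ℝ)) * h (inversion x l z)) := by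
  have hms : MeasurableSet {z : EuclideanSpace ℝ (Fin n) | l < ‖z - x‖} :=
    (isOpen_lt continuous_const (by fun_prop)).measurableSet
  obtain ⟨hi, he⟩ := changeOfVariables_inversion hl x hkh
  have hcongr : EqOn (fun z => k z * h z +
        (l / ‖z - x‖) ^ (2 * n) * (k (inversion x l z) * h (inversion x l z)))
      (fun z => k z * (h z - (l / ‖z - x‖) ^ (p + 2 * (n : ℝ)) * h (inversion x l z)))
      {z | l < ‖z - x‖} := by
    intro z hz
    have hz' : l < ‖z - x‖ := hz
    have hpos : 0 < l / ‖z - x‖ := div_pos hl (hl.trans hz')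
    simp only [hk z hz']
    rw [Real.rpow_add hpos, show (2 * (n : ℝ)) = ((2 * n : ℕ) : ℝ) by push_cast; ring,
      Real.rpow_natCast]
    ring
  refine ⟨IntegrableOn.congr_fun (hkh.integrableOn.add hi) hcongr hms, ?_⟩
  rw [← setIntegral_congr_fun hms hcongr, integral_add hkh.integrableOn hi, ← he,
    ← integral_add_compl hms hkh]
  congr 1
  refine setIntegral_congr_set ?_
  have : Nonempty (Fin n) := ⟨⟨0, Nat.pos_of_ne_zero hn⟩⟩
  have hs : volume (Metric.sphere x l) = 0 := Measure.addHaar_sphere_of_ne_zero _ _ hl.ne'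
  have hx : volume ({x} : Set (EuclideanSpace ℝ (Fin n))) = 0 := measure_singleton x
  filter_upwards [measure_eq_zero_iff_ae_notMem.1 hs, measure_eq_zero_iff_ae_notMem.1 hx]
    with z hz1 hz2
  rw [mem_sphere_iff_norm] at hz1
  rw [eq_iff_iff]
  change z ∈ {z | l < ‖z - x‖}ᶜ ↔ z ∈ Metric.ball x l \ {x}
  simp only [mem_compl_iff, mem_ofPred_eq, not_lt, Set.mem_sdiff, mem_ball_iff_norm, hz2,
    not_false_iff, and_true]
  exact ⟨fun h => lt_of_le_of_ne h hz1, le_of_lt⟩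

end InversionGeometry

/-! ### Potentials, kernels and the Hopf bound -/

section Potential

variable {n : ℕ} {p l : ℝ} {x ξ z : EuclideanSpace ℝ (Fin n)} {h : EuclideanSpace ℝ (Fin n) → ℝ}

/-- The potential `∫ |x - y|^p h(y) dy` of the density `h`. -/
def pot (p : ℝ) (h : EuclideanSpace ℝ (Fin n) → ℝ) (x : EuclideanSpace ℝ (Fin n)) : ℝ :=
  ∫ y, ‖x - y‖ ^ p * h y

/-- The kernel `(|ξ - x| / l)^p |ξ^{x,l} - z|^p - |ξ - z|^p`, which represents the difference
between the Kelvin transform of a potential and the potential. -/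
def kern (p : ℝ) (x : EuclideanSpace ℝ (Fin n)) (l : ℝ) (ξ z : EuclideanSpace ℝ (Fin n)) : ℝ :=
  (‖ξ - x‖ / l) ^ p * ‖inversion x l ξ - z‖ ^ p - ‖ξ - z‖ ^ p

/-- The difference between the density `h` and its conformal reflection in the sphere. -/
def defect (p : ℝ) (h : EuclideanSpace ℝ (Fin n) → ℝ) (x : EuclideanSpace ℝ (Fin n)) (l : ℝ)
    (z : EuclideanSpace ℝ (Fin n)) : ℝ :=
  h z - (l / ‖z - x‖) ^ (p + 2 * (n : ℝ)) * h (inversion x l z)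

theorem ne_center (hl : 0 < l) (hz : l < ‖z - x‖) : z ≠ x := by
  rintro rfl
  simp at hz
  linarith

theorem add_rpow_le_two {a b : ℝ} (ha : 0 ≤ a) (hb : 0 ≤ b) (hp : 0 < p) :
    (a + b) ^ p ≤ 2 ^ p * (a ^ p + b ^ p) := by
  have h1 : ∀ {a b : ℝ}, 0 ≤ a → 0 ≤ b → a ≤ b → (a + b) ^ p ≤ 2 ^ p * (a ^ p + b ^ p) := by
    intro a b ha hb hab
    calc (a + b) ^ p ≤ (2 * b) ^ p := by gcongr; linarith
      _ = 2 ^ p * b ^ p := Real.mul_rpow (by norm_num) hb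
      _ ≤ 2 ^ p * (a ^ p + b ^ p) := by
        gcongr
        linarith [Real.rpow_nonneg ha p]
  rcases le_total a b with hab | hab
  · exact h1 ha hb hab
  · rw [add_comm a, add_comm (a ^ p)]
    exact h1 hb ha hab

theorem rpow_sub_rpow_lower_bound {m M : ℝ} (hp : 0 < p) (hm : 0 < m) (hmM : m ≤ M) :
    ∃ c > 0, ∀ a b : ℝ, m ≤ b → b ≤ a → a ≤ M → c * (a - b) ≤ a ^ p - b ^ p := by
  have hM : 0 < M := hm.trans_le hmM
  refine ⟨p * min (m ^ (p - 1)) (M ^ (p - 1)), by positivity, fun a b hb hab ha => ?_⟩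
  refine (convex_Icc m M).mul_sub_le_image_sub_of_le_deriv (f := fun t : ℝ => t ^ p) ?_ ?_ ?_
    b ⟨hb, hab.trans ha⟩ a ⟨hb.trans hab, ha⟩ hab
  · exact fun t ht => (Real.continuousAt_rpow_const t p (Or.inr hp.le)).continuousWithinAt
  · intro t ht
    rw [interior_Icc] at ht
    exact (Real.hasDerivAt_rpow_const
      (Or.inl (hm.trans ht.1).ne')).differentiableAt.differentiableWithinAt
  · intro t ht
    rw [interior_Icc] at ht
    have ht0 : 0 < t := hm.trans ht.1
    rw [(Real.hasDerivAt_rpow_const (p := p) (Or.inl ht0.ne')).deriv]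
    refine mul_le_mul_of_nonneg_left ?_ hp.le
    rcases le_total 1 p with h1 | h1
    · exact (min_le_left _ _).trans (Real.rpow_le_rpow hm.le ht.1.le (by linarith))
    · exact (min_le_right _ _).trans
        (Real.rpow_le_rpow_of_nonpos ht0 ht.2.le (by linarith))

/-- Integrability against the kernel at two distinct centers controls the density both near each
center and at infinity, hence gives integrability against the kernel at every center. -/
theorem integrable_of_two_centers (hp : 0 < p) {x₁ x₂ : EuclideanSpace ℝ (Fin n)} (hne : x₁ ≠ x₂)
    (h1 : Integrable fun y => ‖x₁ - y‖ ^ p * h y) (h2 : Integrable fun y => ‖x₂ - y‖ ^ p * h y) :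
    Integrable h ∧ ∀ x, Integrable fun y => ‖x - y‖ ^ p * h y := by
  have hd : 0 < ‖x₁ - x₂‖ := norm_pos_iff.2 (sub_ne_zero.2 hne)
  have hmeas : AEStronglyMeasurable h volume := by
    have hm1 : AEStronglyMeasurable (fun y => (‖x₁ - y‖ ^ p)⁻¹ * (‖x₁ - y‖ ^ p * h y)) volume :=
      AEStronglyMeasurable.mul (Measurable.aestronglyMeasurable (by fun_prop))
        h1.aestronglyMeasurable
    have hm2 : AEStronglyMeasurable (fun y => (‖x₂ - y‖ ^ p)⁻¹ * (‖x₂ - y‖ ^ p * h y)) volume :=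
      AEStronglyMeasurable.mul (Measurable.aestronglyMeasurable (by fun_prop))
        h2.aestronglyMeasurable
    have : h = ({x₁} : Set (EuclideanSpace ℝ (Fin n))).piecewise
        (fun y => (‖x₂ - y‖ ^ p)⁻¹ * (‖x₂ - y‖ ^ p * h y))
        (fun y => (‖x₁ - y‖ ^ p)⁻¹ * (‖x₁ - y‖ ^ p * h y)) := by
      ext y
      by_cases hy : y = x₁
      · subst hy
        have : ‖x₂ - y‖ ^ p ≠ 0 :=
          (Real.rpow_pos_of_pos (norm_pos_iff.2 (sub_ne_zero.2 hne.symm)) p).ne'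
        simp [this]
      · have : ‖x₁ - y‖ ^ p ≠ 0 :=
          (Real.rpow_pos_of_pos (norm_pos_iff.2 (sub_ne_zero.2 (Ne.symm hy))) p).ne'
        simp [hy, this]
    rw [this]
    exact AEStronglyMeasurable.piecewise (measurableSet_singleton _) hm2.restrict hm1.restrict
  have hi : Integrable h := by
    refine ((h1.norm.add h2.norm).const_mul (2 ^ p / ‖x₁ - x₂‖ ^ p)).mono' hmeas
      (Eventually.of_forall fun y => ?_)
    have hb : ‖x₁ - x₂‖ ^ p ≤ 2 ^ p * (‖x₁ - y‖ ^ p + ‖x₂ - y‖ ^ p) := by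
      refine le_trans (Real.rpow_le_rpow hd.le ?_ hp.le)
        (add_rpow_le_two (norm_nonneg (x₁ - y)) (norm_nonneg (x₂ - y)) hp)
      calc ‖x₁ - x₂‖ = ‖(x₁ - y) - (x₂ - y)‖ := by congr 1; abel
        _ ≤ _ := norm_sub_le _ _
    simp only [Pi.add_apply, norm_mul, Real.norm_of_nonneg (Real.rpow_nonneg (norm_nonneg _) p)]
    rw [← add_mul, ← mul_assoc]
    refine le_mul_of_one_le_left (norm_nonneg _) ?_
    rw [div_mul_eq_mul_div, one_le_div (Real.rpow_pos_of_pos hd p)]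
    exact hb
  refine ⟨hi, fun x => ?_⟩
  refine ((h1.norm.const_mul (2 ^ p)).add
    (hi.norm.const_mul (2 ^ p * ‖x - x₁‖ ^ p))).mono' ?_ (Eventually.of_forall fun y => ?_)
  · exact AEStronglyMeasurable.mul (Measurable.aestronglyMeasurable (by fun_prop)) hmeas
  · have hb : ‖x - y‖ ^ p ≤ 2 ^ p * (‖x - x₁‖ ^ p + ‖x₁ - y‖ ^ p) := by
      refine le_trans (Real.rpow_le_rpow (norm_nonneg _) ?_ hp.le)
        (add_rpow_le_two (norm_nonneg (x - x₁)) (norm_nonneg (x₁ - y)) hp)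
      calc ‖x - y‖ = ‖(x - x₁) + (x₁ - y)‖ := by congr 1; abel
        _ ≤ _ := norm_add_le _ _
    simp only [Pi.add_apply, norm_mul, Real.norm_of_nonneg (Real.rpow_nonneg (norm_nonneg _) p)]
    calc ‖x - y‖ ^ p * ‖h y‖ ≤ 2 ^ p * (‖x - x₁‖ ^ p + ‖x₁ - y‖ ^ p) * ‖h y‖ := by gcongr
      _ = _ := by ring

theorem continuous_pot (hp : 0 < p) (hi : Integrable h)
    (hh : ∀ x, Integrable fun y => ‖x - y‖ ^ p * h y) : Continuous (pot p h) := by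
  rw [continuous_iff_continuousAt]
  intro x
  refine continuousAt_of_dominated
    (bound := fun y => 2 ^ p * ‖‖x - y‖ ^ p * h y‖ + 2 ^ p * ‖h y‖)
    (Eventually.of_forall fun y => (hh y).aestronglyMeasurable) ?_
    (((hh x).norm.const_mul _).add (hi.norm.const_mul _)) (Eventually.of_forall fun y => ?_)
  · filter_upwards [Metric.ball_mem_nhds x one_pos] with w hw
    refine Eventually.of_forall fun y => ?_
    rw [mem_ball_iff_norm] at hw
    have hb : ‖w - y‖ ^ p ≤ 2 ^ p * (‖x - y‖ ^ p + 1 ^ p) := by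
      refine le_trans (Real.rpow_le_rpow (norm_nonneg _) ?_ hp.le)
        (add_rpow_le_two (norm_nonneg (x - y)) zero_le_one hp)
      calc ‖w - y‖ = ‖(x - y) + (w - x)‖ := by congr 1; abel
        _ ≤ ‖x - y‖ + ‖w - x‖ := norm_add_le _ _
        _ ≤ _ := by linarith
    simp only [norm_mul, Real.norm_of_nonneg (Real.rpow_nonneg (norm_nonneg _) p)]
    calc ‖w - y‖ ^ p * ‖h y‖ ≤ 2 ^ p * (‖x - y‖ ^ p + 1 ^ p) * ‖h y‖ := by gcongr
      _ = _ := by rw [Real.one_rpow]; ring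
  · refine ContinuousAt.mul (ContinuousAt.rpow_const (by fun_prop) (Or.inr hp.le)) (by fun_prop)

/-- Away from `x`, the potential grows at most like `|y - x|^p`. -/
theorem pot_le (hp : 0 < p) (hi : Integrable h) (hh : ∀ x, Integrable fun y => ‖x - y‖ ^ p * h y)
    (h0 : ∀ᵐ y, 0 ≤ h y) {r : ℝ} (hr : 0 < r) (x : EuclideanSpace ℝ (Fin n)) :
    ∃ C, ∀ y, r ≤ ‖y - x‖ → pot p h y ≤ C * ‖y - x‖ ^ p := by
  refine ⟨∫ z, 2 ^ p * h z + 2 ^ p / r ^ p * (‖x - z‖ ^ p * h z), fun y hy => ?_⟩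
  rw [← integral_mul_const]
  refine integral_mono_ae (hh y) (((hi.const_mul _).add ((hh x).const_mul _)).mul_const _) ?_
  filter_upwards [h0] with z hz
  have hb : ‖y - z‖ ^ p ≤ 2 ^ p * (‖y - x‖ ^ p + ‖x - z‖ ^ p) := by
    refine le_trans (Real.rpow_le_rpow (norm_nonneg _) ?_ hp.le)
      (add_rpow_le_two (norm_nonneg (y - x)) (norm_nonneg (x - z)) hp)
    calc ‖y - z‖ = ‖(y - x) + (x - z)‖ := by congr 1; abel
      _ ≤ _ := norm_add_le _ _
  have h1 : 1 ≤ ‖y - x‖ ^ p / r ^ p := by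
    rw [one_le_div (by positivity)]
    gcongr
  have h2 : ‖x - z‖ ^ p ≤ ‖y - x‖ ^ p / r ^ p * ‖x - z‖ ^ p :=
    le_mul_of_one_le_left (by positivity) h1
  calc ‖y - z‖ ^ p * h z ≤ 2 ^ p * (‖y - x‖ ^ p + ‖y - x‖ ^ p / r ^ p * ‖x - z‖ ^ p) * h z := by
        gcongr
        exact hb.trans (by gcongr)
    _ = _ := by ring

/-- At infinity, the potential is asymptotic to `|y - x|^p` times the total mass. -/
theorem tendsto_pot_div (hp : 0 < p) (hi : Integrable h)
    (hh : ∀ x, Integrable fun y => ‖x - y‖ ^ p * h y) (x : EuclideanSpace ℝ (Fin n)) :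
    Tendsto (fun y => pot p h y / ‖y - x‖ ^ p) (Bornology.cobounded _) (𝓝 (∫ z, h z)) := by
  have hcg : (Bornology.cobounded (EuclideanSpace ℝ (Fin n))).IsCountablyGenerated := by
    rw [← comap_norm_atTop]; infer_instance
  have hnorm : Tendsto (fun y : EuclideanSpace ℝ (Fin n) => ‖y - x‖)
      (Bornology.cobounded _) atTop := by
    simp only [← dist_eq_norm]
    exact Metric.tendsto_dist_right_cobounded_atTop x
  have he : (fun y => pot p h y / ‖y - x‖ ^ p) =
      fun y => ∫ z, (‖y - z‖ / ‖y - x‖) ^ p * h z := by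
    ext y
    rw [pot, ← integral_div]
    refine integral_congr_ae (Eventually.of_forall fun z => ?_)
    simp only
    rw [Real.div_rpow (norm_nonneg _) (norm_nonneg _)]
    ring
  rw [he]
  refine tendsto_integral_filter_of_dominated_convergence
    (bound := fun z => 2 ^ p * ‖h z‖ + 2 ^ p * ‖‖x - z‖ ^ p * h z‖) ?_ ?_
    ((hi.norm.const_mul _).add ((hh x).norm.const_mul _)) ?_
  · exact Eventually.of_forall fun y => AEStronglyMeasurable.mul
      (Measurable.aestronglyMeasurable (by fun_prop)) hi.aestronglyMeasurable
  · filter_upwards [hnorm.eventually_ge_atTop 1] with y hy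
    refine Eventually.of_forall fun z => ?_
    have hb : (‖y - z‖ / ‖y - x‖) ^ p ≤ 2 ^ p * (1 ^ p + ‖x - z‖ ^ p) := by
      refine le_trans (Real.rpow_le_rpow (by positivity) ?_ hp.le)
        (add_rpow_le_two zero_le_one (norm_nonneg (x - z)) hp)
      rw [div_le_iff₀ (by linarith)]
      calc ‖y - z‖ = ‖(y - x) + (x - z)‖ := by congr 1; abel
        _ ≤ ‖y - x‖ + ‖x - z‖ := norm_add_le _ _
        _ ≤ _ := by nlinarith [norm_nonneg (x - z)]
    simp only [norm_mul, Real.norm_of_nonneg (Real.rpow_nonneg (norm_nonneg (x - z)) p),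
      Real.norm_of_nonneg (Real.rpow_nonneg (div_nonneg (norm_nonneg (y - z))
        (norm_nonneg (y - x))) p)]
    calc (‖y - z‖ / ‖y - x‖) ^ p * ‖h z‖ ≤ 2 ^ p * (1 ^ p + ‖x - z‖ ^ p) * ‖h z‖ := by gcongr
      _ = _ := by rw [Real.one_rpow]; ring
  · refine Eventually.of_forall fun z => ?_
    have hq : Tendsto (fun y => ‖y - z‖ / ‖y - x‖) (Bornology.cobounded _) (𝓝 1) := by
      rw [tendsto_iff_dist_tendsto_zero]
      refine squeeze_zero' (g := fun y => ‖x - z‖ / ‖y - x‖)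
        (Eventually.of_forall fun y => dist_nonneg) ?_
        (hnorm.const_div_atTop _)
      filter_upwards [hnorm.eventually_gt_atTop 0] with y hy
      rw [Real.dist_eq, div_sub_one hy.ne', abs_div, abs_of_pos hy]
      gcongr
      calc |‖y - z‖ - ‖y - x‖| ≤ ‖(y - z) - (y - x)‖ := abs_norm_sub_norm_le _ _
        _ = _ := by congr 1; abel
    simpa using (hq.rpow_const (Or.inr hp.le)).mul_const (h z)

theorem kern_inversion (hl : 0 < l) (hξ : ξ ≠ x) (hz : z ≠ x) :
    kern p x l ξ (inversion x l z) = -((l / ‖z - x‖) ^ p * kern p x l ξ z) := by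
  have h1 : 0 < ‖ξ - x‖ := norm_pos_iff.2 (sub_ne_zero.2 hξ)
  have h2 : 0 < ‖z - x‖ := norm_pos_iff.2 (sub_ne_zero.2 hz)
  have e1 : (‖ξ - x‖ / l) ^ p * ‖inversion x l ξ - inversion x l z‖ ^ p =
      (l / ‖z - x‖) ^ p * ‖ξ - z‖ ^ p := by
    rw [← Real.mul_rpow (by positivity) (by positivity),
      ← Real.mul_rpow (by positivity) (by positivity), norm_inversion_sub_inversion l hξ hz]
    congr 1
    field_simp
  rw [kern, kern, e1, norm_sub_inversion hl hξ hz, Real.mul_rpow (by positivity) (by positivity),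
    Real.mul_rpow (x := ‖ξ - x‖ / l) (by positivity) (by positivity)]
  ring

theorem norm_sub_lt_kernel (hl : 0 < l) (hξ : l < ‖ξ - x‖) (hz : l < ‖z - x‖) :
    ‖ξ - z‖ < ‖ξ - x‖ / l * ‖inversion x l ξ - z‖ := by
  have h := sq_sub_sq_kernel hl (ne_center hl hξ) z
  have h1 : 0 < ‖ξ - x‖ ^ 2 - l ^ 2 := by nlinarith
  have h2 : 0 < ‖z - x‖ ^ 2 - l ^ 2 := by nlinarith
  have h3 : 0 < (‖ξ - x‖ ^ 2 - l ^ 2) * (‖z - x‖ ^ 2 - l ^ 2) / l ^ 2 := by positivity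
  exact lt_of_pow_lt_pow_left₀ 2 (by positivity) (by linarith)

theorem kern_pos (hp : 0 < p) (hl : 0 < l) (hξ : l < ‖ξ - x‖) (hz : l < ‖z - x‖) :
    0 < kern p x l ξ z := by
  have h1 : 0 < ‖ξ - x‖ := hl.trans hξ
  rw [kern, ← Real.mul_rpow (by positivity) (by positivity), sub_pos]
  exact Real.rpow_lt_rpow (norm_nonneg _) (norm_sub_lt_kernel hl hξ hz) hp

theorem kern_mul_integrable (hh : ∀ x, Integrable fun y => ‖x - y‖ ^ p * h y) :
    Integrable fun z => kern p x l ξ z * h z := by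
  refine (((hh (inversion x l ξ)).const_mul ((‖ξ - x‖ / l) ^ p)).sub (hh ξ)).congr
    (Eventually.of_forall fun z => ?_)
  simp only [Pi.sub_apply, kern]
  ring

theorem kelvin_pot_sub_pot (hh : ∀ x, Integrable fun y => ‖x - y‖ ^ p * h y) :
    kelvin p (pot p h) x l ξ - pot p h ξ = ∫ z, kern p x l ξ z * h z := by
  rw [kelvin, pot, pot, ← integral_const_mul,
    ← integral_sub ((hh (inversion x l ξ)).const_mul _) (hh ξ)]
  congr 1
  ext z
  rw [kern]
  ring

/-- The kernel `(|z - x| / l)^p - 1` obtained from `kern` when `ξ` tends to infinity. -/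
def kernInfty (p : ℝ) (x : EuclideanSpace ℝ (Fin n)) (l : ℝ) (z : EuclideanSpace ℝ (Fin n)) : ℝ :=
  (‖z - x‖ / l) ^ p - 1

theorem kernInfty_inversion (hl : 0 < l) (hz : z ≠ x) :
    kernInfty p x l (inversion x l z) = -((l / ‖z - x‖) ^ p * kernInfty p x l z) := by
  have h2 : 0 < ‖z - x‖ := norm_pos_iff.2 (sub_ne_zero.2 hz)
  have e : l ^ 2 / ‖z - x‖ / l = l / ‖z - x‖ := by field_simp
  have e2 : l / ‖z - x‖ * (‖z - x‖ / l) = 1 := by field_simp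
  rw [kernInfty, kernInfty, norm_inversion_sub_center, e, mul_sub,
    ← Real.mul_rpow (by positivity) (by positivity), e2, Real.one_rpow]
  ring

theorem kernInfty_pos (hp : 0 < p) (hl : 0 < l) (hz : l < ‖z - x‖) : 0 < kernInfty p x l z := by
  rw [kernInfty, sub_pos]
  exact Real.one_lt_rpow ((one_lt_div hl).2 hz) hp

theorem kernInfty_mul_integrable (hl : 0 < l) (hi : Integrable h)
    (hh : ∀ x, Integrable fun y => ‖x - y‖ ^ p * h y) :
    Integrable fun z => kernInfty p x l z * h z := by
  refine (((hh x).const_mul ((l ^ p)⁻¹)).sub hi).congr (Eventually.of_forall fun z => ?_)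
  simp only [Pi.sub_apply, kernInfty]
  rw [Real.div_rpow (norm_nonneg _) hl.le, norm_sub_rev]
  ring

theorem integral_kernInfty (hl : 0 < l) (hi : Integrable h)
    (hh : ∀ x, Integrable fun y => ‖x - y‖ ^ p * h y) :
    ∫ z, kernInfty p x l z * h z = (l ^ p)⁻¹ * pot p h x - ∫ z, h z := by
  rw [pot, ← integral_const_mul, ← integral_sub ((hh x).const_mul _) hi]
  congr 1
  ext z
  rw [kernInfty, Real.div_rpow (norm_nonneg _) hl.le, norm_sub_rev]
  ring

theorem isOpen_shell (x : EuclideanSpace ℝ (Fin n)) (l : ℝ) :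
    IsOpen {z : EuclideanSpace ℝ (Fin n) | 2 * l < ‖z - x‖ ∧ ‖z - x‖ < 3 * l} :=
  IsOpen.and (isOpen_lt continuous_const (by fun_prop)) (isOpen_lt (by fun_prop) continuous_const)

theorem volume_shell_pos (hx : x ≠ 0) (hl : 0 < l) :
    0 < volume {z : EuclideanSpace ℝ (Fin n) | 2 * l < ‖z - x‖ ∧ ‖z - x‖ < 3 * l} := by
  refine (isOpen_shell x l).measure_pos _ ⟨x + (5 / 2 * l / ‖x‖) • x, ?_⟩
  have hx' : 0 < ‖x‖ := norm_pos_iff.2 hx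
  have : ‖x + (5 / 2 * l / ‖x‖) • x - x‖ = 5 / 2 * l := by
    rw [add_sub_cancel_left, norm_smul, Real.norm_of_nonneg (by positivity)]
    field_simp
  rw [mem_ofPred_eq, this]
  constructor <;> linarith

/-- The folded integral of a kernel which is positive outside the sphere dominates its part on the
shell `2 l < |z - x| < 3 l`, and the latter is positive. -/
theorem integral_fold_pos (hx : x ≠ 0) (hl : 0 < l)
    (hG : ∀ᵐ z, l < ‖z - x‖ → 0 < defect p h x l z)
    {k : EuclideanSpace ℝ (Fin n) → ℝ} (hkh : Integrable fun z => k z * h z)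
    (hk : ∀ z, l < ‖z - x‖ → k (inversion x l z) = -((l / ‖z - x‖) ^ p * k z))
    (hkpos : ∀ z, l < ‖z - x‖ → 0 < k z) :
    IntegrableOn (fun z => k z * defect p h x l z) {z | 2 * l < ‖z - x‖ ∧ ‖z - x‖ < 3 * l} ∧
    0 < ∫ z in {z | 2 * l < ‖z - x‖ ∧ ‖z - x‖ < 3 * l}, k z * defect p h x l z ∧
    ∫ z in {z | 2 * l < ‖z - x‖ ∧ ‖z - x‖ < 3 * l}, k z * defect p h x l z ≤
      ∫ z, k z * h z := by
  have hn : n ≠ 0 := by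
    rintro rfl
    exact hx (Subsingleton.elim _ _)
  obtain ⟨hi, he⟩ : IntegrableOn (fun z => k z * defect p h x l z) {z | l < ‖z - x‖} volume ∧
      ∫ z, k z * h z = ∫ z in {z | l < ‖z - x‖}, k z * defect p h x l z :=
    integral_fold hn hl x hkh hk
  have hms : MeasurableSet {z : EuclideanSpace ℝ (Fin n) | l < ‖z - x‖} :=
    (isOpen_lt continuous_const (by fun_prop)).measurableSet
  have hsub : {z : EuclideanSpace ℝ (Fin n) | 2 * l < ‖z - x‖ ∧ ‖z - x‖ < 3 * l} ⊆
      {z | l < ‖z - x‖} := by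
    rintro z ⟨h1, -⟩
    rw [mem_ofPred_eq]
    linarith
  have hpos : ∀ᵐ z ∂(volume.restrict {z : EuclideanSpace ℝ (Fin n) | l < ‖z - x‖}),
      0 < k z * defect p h x l z := by
    rw [ae_restrict_iff' hms]
    filter_upwards [hG] with z hz hz'
    exact mul_pos (hkpos z hz') (hz hz')
  have hpos' : ∀ᵐ z ∂(volume.restrict
      {z : EuclideanSpace ℝ (Fin n) | 2 * l < ‖z - x‖ ∧ ‖z - x‖ < 3 * l}),
      0 < k z * defect p h x l z := ae_mono (Measure.restrict_mono hsub le_rfl) hpos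
  refine ⟨hi.mono_set hsub, ?_, ?_⟩
  · refine (integral_pos_iff_support_of_nonneg_ae (hpos'.mono fun z hz => hz.le)
      (hi.mono_set hsub)).2 ?_
    have : (Function.support fun z => k z * defect p h x l z) =ᵐ[volume.restrict
        {z : EuclideanSpace ℝ (Fin n) | 2 * l < ‖z - x‖ ∧ ‖z - x‖ < 3 * l}] univ := by
      filter_upwards [hpos'] with z hz
      rw [eq_iff_iff]
      exact ⟨fun _ => trivial, fun _ => hz.ne'⟩
    rw [measure_congr this, Measure.restrict_apply_univ]
    exact volume_shell_pos hx hl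
  · rw [he]
    exact setIntegral_mono_set hi (hpos.mono fun z hz => hz.le) hsub.eventuallyLE

theorem pot_lt_kelvin (hp : 0 < p) (hx : x ≠ 0) (hl : 0 < l)
    (hh : ∀ x, Integrable fun y => ‖x - y‖ ^ p * h y)
    (hG : ∀ᵐ z, l < ‖z - x‖ → 0 < defect p h x l z) (hξ : l < ‖ξ - x‖) :
    pot p h ξ < kelvin p (pot p h) x l ξ := by
  obtain ⟨-, h2, h3⟩ := integral_fold_pos hx hl hG (kern_mul_integrable (x := x) (l := l) hh)
    (fun z hz => kern_inversion hl (ne_center hl hξ) (ne_center hl hz))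
    (fun z hz => kern_pos hp hl hξ hz)
  rw [← sub_pos, kelvin_pot_sub_pot hh]
  exact h2.trans_le h3

theorem mass_lt (hp : 0 < p) (hx : x ≠ 0) (hl : 0 < l) (hi : Integrable h)
    (hh : ∀ x, Integrable fun y => ‖x - y‖ ^ p * h y)
    (hG : ∀ᵐ z, l < ‖z - x‖ → 0 < defect p h x l z) :
    ∫ z, h z < (l ^ p)⁻¹ * pot p h x := by
  obtain ⟨-, h2, h3⟩ := integral_fold_pos hx hl hG (kernInfty_mul_integrable (x := x) hl hi hh)
    (fun z hz => kernInfty_inversion hl (ne_center hl hz))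
    (fun z hz => kernInfty_pos hp hl hz)
  rw [← sub_pos, ← integral_kernInfty hl hi hh]
  exact h2.trans_le h3

/-- On the shell, `kern` is bounded below by a multiple of `kernInfty` that vanishes only to first
order as `ξ` approaches the sphere. -/
theorem exists_kern_ge (hp : 0 < p) (hl : 0 < l) (x : EuclideanSpace ℝ (Fin n)) :
    ∃ c > 0, ∀ ξ z : EuclideanSpace ℝ (Fin n), l < ‖ξ - x‖ → ‖ξ - x‖ < 3 / 2 * l →
      2 * l < ‖z - x‖ → ‖z - x‖ < 3 * l →
      c * (‖ξ - x‖ ^ 2 - l ^ 2) * kernInfty p x l z ≤ kern p x l ξ z := by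
  obtain ⟨c, hc, hb⟩ := rpow_sub_rpow_lower_bound (m := l / 2) (M := 6 * l) hp (by linarith)
    (by linarith)
  refine ⟨c / (4 * l) / 3 ^ p, by positivity, fun ξ z h1 h2 h3 h4 => ?_⟩
  have hz : l < ‖z - x‖ := by linarith
  have hξ0 : 0 < ‖ξ - x‖ := hl.trans h1
  have hlt := norm_sub_lt_kernel hl h1 hz
  have hsq := sq_sub_sq_kernel hl (ne_center hl h1) z
  have hB : l / 2 ≤ ‖ξ - z‖ := by
    have : ‖z - x‖ ≤ ‖ξ - x‖ + ‖ξ - z‖ := by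
      calc ‖z - x‖ = ‖(ξ - x) - (ξ - z)‖ := by congr 1; abel
        _ ≤ _ := norm_sub_le _ _
    linarith
  have hA : ‖ξ - x‖ / l * ‖inversion x l ξ - z‖ ≤ 6 * l := by
    have e1 : ‖inversion x l ξ - z‖ ≤ 4 * l := by
      have e2 : ‖inversion x l ξ - x‖ ≤ l := by
        rw [norm_inversion_sub_center, div_le_iff₀ hξ0]
        nlinarith
      calc ‖inversion x l ξ - z‖ = ‖(inversion x l ξ - x) - (z - x)‖ := by congr 1; abel
        _ ≤ ‖inversion x l ξ - x‖ + ‖z - x‖ := norm_sub_le _ _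
        _ ≤ _ := by linarith
    have e3 : ‖ξ - x‖ / l ≤ 3 / 2 := by
      rw [div_le_iff₀ hl]; linarith
    calc _ ≤ 3 / 2 * (4 * l) := by gcongr
      _ = _ := by ring
  have hmain := hb _ _ hB hlt.le hA
  rw [Real.mul_rpow (by positivity) (by positivity)] at hmain
  change _ ≤ kern p x l ξ z at hmain
  refine le_trans ?_ hmain
  generalize ‖ξ - x‖ / l * ‖inversion x l ξ - z‖ = A at *
  have hd : (‖ξ - x‖ ^ 2 - l ^ 2) / (4 * l) ≤ A - ‖ξ - z‖ := by
    have hr : 0 < ‖ξ - x‖ ^ 2 - l ^ 2 := by nlinarith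
    have e4 : 3 * (‖ξ - x‖ ^ 2 - l ^ 2) ≤ A ^ 2 - ‖ξ - z‖ ^ 2 := by
      rw [hsq, le_div_iff₀ (by positivity)]
      nlinarith [mul_le_mul_of_nonneg_left
        (show 3 * l ^ 2 ≤ ‖z - x‖ ^ 2 - l ^ 2 by nlinarith) hr.le]
    rw [div_le_iff₀ (by positivity)]
    nlinarith
  have hk : kernInfty p x l z ≤ 3 ^ p := by
    rw [kernInfty]
    have : (‖z - x‖ / l) ^ p ≤ 3 ^ p := by
      gcongr
      rw [div_le_iff₀ hl]; exact h4.le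
    linarith
  have hr : 0 < ‖ξ - x‖ ^ 2 - l ^ 2 := by nlinarith
  calc c / (4 * l) / 3 ^ p * (‖ξ - x‖ ^ 2 - l ^ 2) * kernInfty p x l z
      ≤ c / (4 * l) / 3 ^ p * (‖ξ - x‖ ^ 2 - l ^ 2) * 3 ^ p := by gcongr
    _ = c * ((‖ξ - x‖ ^ 2 - l ^ 2) / (4 * l)) := by field_simp
    _ ≤ _ := by gcongr

/-- A quantitative Hopf lemma: the gap between the Kelvin transform and the potential grows at
least linearly with the distance to the sphere. -/
theorem exists_hopf_bound (hp : 0 < p) (hx : x ≠ 0) (hl : 0 < l) (hi : Integrable h)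
    (hh : ∀ x, Integrable fun y => ‖x - y‖ ^ p * h y)
    (hG : ∀ᵐ z, l < ‖z - x‖ → 0 < defect p h x l z) :
    ∃ c > 0, ∀ ξ, l < ‖ξ - x‖ → ‖ξ - x‖ < 3 / 2 * l →
      c * (‖ξ - x‖ ^ 2 - l ^ 2) ≤ kelvin p (pot p h) x l ξ - pot p h ξ := by
  obtain ⟨c, hc, hk⟩ := exists_kern_ge hp hl x
  obtain ⟨g1, g2, -⟩ := integral_fold_pos hx hl hG (kernInfty_mul_integrable (x := x) hl hi hh)
    (fun z hz => kernInfty_inversion hl (ne_center hl hz))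
    (fun z hz => kernInfty_pos hp hl hz)
  refine ⟨c * ∫ z in {z | 2 * l < ‖z - x‖ ∧ ‖z - x‖ < 3 * l},
    kernInfty p x l z * defect p h x l z, mul_pos hc g2, fun ξ h1 h2 => ?_⟩
  obtain ⟨i1, -, i3⟩ := integral_fold_pos hx hl hG (kern_mul_integrable (x := x) (l := l) hh)
    (fun z hz => kern_inversion hl (ne_center hl h1) (ne_center hl hz))
    (fun z hz => kern_pos hp hl h1 hz)
  rw [kelvin_pot_sub_pot hh]
  refine le_trans ?_ i3
  rw [mul_right_comm, ← integral_const_mul]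
  refine integral_mono_ae (g1.const_mul _) i1 ?_
  rw [EventuallyLE, ae_restrict_iff' (isOpen_shell x l).measurableSet]
  filter_upwards [hG] with z hz hz'
  have := hk ξ z h1 h2 hz'.1 hz'.2
  have hd : 0 < defect p h x l z := hz (by linarith [hz'.1])
  calc c * (‖ξ - x‖ ^ 2 - l ^ 2) * (kernInfty p x l z * defect p h x l z)
      = c * (‖ξ - x‖ ^ 2 - l ^ 2) * kernInfty p x l z * defect p h x l z := by ring
    _ ≤ _ := by gcongr

end Potential

/-! ### The moving spheres -/

section MovingSpheres

variable {n : ℕ} {p l : ℝ} {x y : EuclideanSpace ℝ (Fin n)} {U : EuclideanSpace ℝ (Fin n) → ℝ}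

/-- Up to a positive factor, the radial derivative at `y` of `r ↦ r ^ (-p / 2) * U (x + r θ)`,
where `r = |y - x|`. -/
def radial (p : ℝ) (U : EuclideanSpace ℝ (Fin n) → ℝ) (x y : EuclideanSpace ℝ (Fin n)) : ℝ :=
  fderiv ℝ U y (y - x) - p / 2 * U y

/-- The moving-spheres inequality at radius `l`: outside the sphere of radius `l` centered at `x`,
and off the origin, `U` is at most its Kelvin transform. -/
def Dominates (p : ℝ) (U : EuclideanSpace ℝ (Fin n) → ℝ) (x : EuclideanSpace ℝ (Fin n))
    (l : ℝ) : Prop :=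
  ∀ y, y ≠ 0 → l < ‖y - x‖ → U y ≤ kelvin p U x l y

theorem ne_zero_of_norm_sub_lt (hy : ‖y - x‖ < ‖x‖) : y ≠ 0 := by
  rintro rfl
  simp at hy

theorem differentiableAt_of_contDiffOn (hU : ContDiffOn ℝ 1 U {0}ᶜ) (hy : y ≠ 0) :
    DifferentiableAt ℝ U y :=
  (hU.contDiffAt (isOpen_compl_singleton.mem_nhds hy)).differentiableAt (by norm_num)

theorem continuousAt_radial (hU : ContDiffOn ℝ 1 U {0}ᶜ) (hy : y ≠ 0) :
    ContinuousAt (radial p U x) y := by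
  have h1 : ContinuousAt U y := (differentiableAt_of_contDiffOn hU hy).continuousAt
  have h2 : ContinuousAt (fderiv ℝ U) y :=
    (hU.contDiffAt (isOpen_compl_singleton.mem_nhds hy)).continuousAt_fderiv (by norm_num)
  unfold radial
  exact (h2.clm_apply (by fun_prop)).sub (continuousAt_const.mul h1)

/-- If `r ^ (-p / 2) * U (x + r θ)` decreases between a point and its reflection, the
moving-spheres inequality holds at that point. -/
theorem le_kelvin_of_radial_neg (hU : ContDiffOn ℝ 1 U {0}ᶜ) (hl : 0 < l) (hy : l < ‖y - x‖)
    (hD : ∀ w, l ^ 2 / ‖y - x‖ ≤ ‖w - x‖ → ‖w - x‖ ≤ ‖y - x‖ → w ≠ 0 ∧ radial p U x w < 0) :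
    U y ≤ kelvin p U x l y := by
  set r := ‖y - x‖ with hr
  have hr0 : 0 < r := hl.trans hy
  set θ : EuclideanSpace ℝ (Fin n) := r⁻¹ • (y - x) with hθ
  have hθ1 : ‖θ‖ = 1 := by
    rw [hθ, norm_smul, norm_inv, Real.norm_of_nonneg hr0.le, ← hr, inv_mul_cancel₀ hr0.ne']
  have hs0 : 0 < l ^ 2 / r := by positivity
  have hle : l ^ 2 / r ≤ r := by
    rw [div_le_iff₀ hr0]; nlinarith
  have hder : ∀ s ∈ Icc (l ^ 2 / r) r, ∃ d ≤ 0,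
      HasDerivAt (fun s : ℝ => s ^ (-p / 2) * U (x + s • θ)) d s := by
    intro s hs
    have hs' : 0 < s := hs0.trans_le hs.1
    have hw : ‖x + s • θ - x‖ = s := by
      rw [add_sub_cancel_left, norm_smul, hθ1, mul_one, Real.norm_of_nonneg hs'.le]
    obtain ⟨hw0, hrad⟩ := hD (x + s • θ) (by rw [hw]; exact hs.1) (by rw [hw]; exact hs.2)
    have h1 : HasDerivAt (fun s : ℝ => x + s • θ) θ s := by
      simpa using ((hasDerivAt_id s).smul_const θ).const_add x
    have h2 := (differentiableAt_of_contDiffOn hU hw0).hasFDerivAt.comp_hasDerivAt s h1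
    have h3 := (Real.hasDerivAt_rpow_const (p := -p / 2) (Or.inl hs'.ne')).mul h2
    refine ⟨_, ?_, h3⟩
    have e : s ^ (-p / 2) = s ^ (-p / 2 - 1) * s := by
      rw [← Real.rpow_add_one hs'.ne']; congr 1; ring
    have hrad' : s * fderiv ℝ U (x + s • θ) θ - p / 2 * U (x + s • θ) < 0 := by
      have := hrad
      rwa [radial, add_sub_cancel_left, map_smul, smul_eq_mul] at this
    simp only [Function.comp_apply]
    rw [e]
    have := Real.rpow_pos_of_pos hs' (-p / 2 - 1)
    nlinarith
  have hanti : AntitoneOn (fun s : ℝ => s ^ (-p / 2) * U (x + s • θ)) (Icc (l ^ 2 / r) r) := by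
    refine antitoneOn_of_deriv_nonpos (convex_Icc _ _) ?_ ?_ ?_
    · intro s hs
      obtain ⟨d, -, hd⟩ := hder s hs
      exact hd.continuousAt.continuousWithinAt
    · intro s hs
      obtain ⟨d, -, hd⟩ := hder s (interior_subset hs)
      exact hd.differentiableAt.differentiableWithinAt
    · intro s hs
      obtain ⟨d, hd0, hd⟩ := hder s (interior_subset hs)
      rw [hd.deriv]
      exact hd0
  have hfin := hanti (left_mem_Icc.2 hle) (right_mem_Icc.2 hle) hle
  have e1 : x + r • θ = y := by
    rw [hθ, smul_inv_smul₀ hr0.ne']; abel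
  have e2 : x + (l ^ 2 / r) • θ = inversion x l y := by
    rw [inversion, hθ, smul_smul, ← hr]
    congr 2
    field_simp
  simp only [e1, e2] at hfin
  have e3 : r ^ (p / 2) * (l ^ 2 / r) ^ (-p / 2) = (r / l) ^ p := by
    rw [neg_div, Real.rpow_neg hs0.le, ← Real.inv_rpow hs0.le,
      ← Real.mul_rpow hr0.le (inv_nonneg.2 hs0.le)]
    have : r * (l ^ 2 / r)⁻¹ = (r / l) ^ (2 : ℝ) := by
      rw [Real.rpow_two]; field_simp
    rw [this, ← Real.rpow_mul (by positivity)]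
    congr 1; ring
  have e4 : r ^ (p / 2) * r ^ (-p / 2) = 1 := by
    rw [← Real.rpow_add hr0]; simp [neg_div]
  calc U y = r ^ (p / 2) * (r ^ (-p / 2) * U y) := by rw [← mul_assoc, e4, one_mul]
    _ ≤ r ^ (p / 2) * ((l ^ 2 / r) ^ (-p / 2) * U (inversion x l y)) := by gcongr
    _ = kelvin p U x l y := by rw [← mul_assoc, e3, kelvin, ← hr]

/-- The Hopf bound forces the radial quantity to be negative on the sphere itself. -/
theorem radial_neg_of_hopf (hU : ContDiffOn ℝ 1 U {0}ᶜ) (hl : 0 < l) (hy0 : y ≠ 0)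
    (hy : ‖y - x‖ = l) {c : ℝ} (hc : 0 < c)
    (hb : ∀ ξ, l < ‖ξ - x‖ → ‖ξ - x‖ < 3 / 2 * l →
      c * (‖ξ - x‖ ^ 2 - l ^ 2) ≤ kelvin p U x l ξ - U ξ) :
    radial p U x y < 0 := by
  set θ : EuclideanSpace ℝ (Fin n) := l⁻¹ • (y - x) with hθ
  have hlθ : y - x = l • θ := by rw [hθ, smul_inv_smul₀ hl.ne']
  have hθ1 : ‖θ‖ = 1 := by
    rw [hθ, norm_smul, norm_inv, Real.norm_of_nonneg hl.le, hy, inv_mul_cancel₀ hl.ne']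
  have hyθ : x + l • θ = y := by rw [← hlθ]; abel
  have hdiff := (differentiableAt_of_contDiffOn hU hy0).hasFDerivAt
  have hyθ' : x + (l ^ 2 / l) • θ = y := by
    rw [pow_two, mul_div_cancel_right₀ _ hl.ne', hyθ]
  have d1 : HasDerivAt (fun s : ℝ => U (x + s • θ)) (fderiv ℝ U y θ) l := by
    have h1 : HasDerivAt (fun s : ℝ => x + s • θ) θ l := by
      simpa using ((hasDerivAt_id l).smul_const θ).const_add x
    exact HasFDerivAt.comp_hasDerivAt (l := U) l (by simpa only [hyθ] using hdiff) h1
  have d2 : HasDerivAt (fun s : ℝ => U (x + (l ^ 2 / s) • θ)) (-fderiv ℝ U y θ) l := by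
    have h0 : HasDerivAt (fun s : ℝ => l ^ 2 / s) (-1) l := by
      have := (hasDerivAt_inv hl.ne').const_mul (l ^ 2)
      have e : l ^ 2 * -(l ^ 2)⁻¹ = -1 := by field_simp
      rw [e] at this
      simpa only [div_eq_mul_inv] using this
    have h1 : HasDerivAt (fun s : ℝ => x + (l ^ 2 / s) • θ) (-θ) l := by
      simpa using (h0.smul_const θ).const_add x
    have := HasFDerivAt.comp_hasDerivAt (l := U) (l' := fderiv ℝ U y) l
      (by simpa only [hyθ'] using hdiff) h1
    rw [map_neg] at this
    exact this
  have d3 : HasDerivAt (fun s : ℝ => (s / l) ^ p) (p / l) l := by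
    have h0 : HasDerivAt (fun s : ℝ => s / l) (1 / l) l := (hasDerivAt_id l).div_const l
    have := h0.rpow_const (p := p) (Or.inl (by rw [div_self hl.ne']; exact one_ne_zero))
    convert this using 1
    rw [div_self hl.ne', Real.one_rpow]
    ring
  have d4 : HasDerivAt (fun s : ℝ => c * (s ^ 2 - l ^ 2)) (c * (2 * l)) l := by
    simpa using (((hasDerivAt_id l).pow 2).sub_const (l ^ 2)).const_mul c
  have d5 := ((d3.mul d2).sub d1).sub d4
  set g : ℝ → ℝ := fun s => (s / l) ^ p * U (x + (l ^ 2 / s) • θ) - U (x + s • θ) -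
    c * (s ^ 2 - l ^ 2) with hg
  have hgl : g l = 0 := by
    simp only [hg, hyθ', hyθ, div_self hl.ne', Real.one_rpow]
    ring
  have hgs : ∀ s, l < s → s < 3 / 2 * l → 0 ≤ g s := by
    intro s h1 h2
    have hs0 : 0 < s := hl.trans h1
    have hw : ‖x + s • θ - x‖ = s := by
      rw [add_sub_cancel_left, norm_smul, hθ1, mul_one, Real.norm_of_nonneg hs0.le]
    have hinv : inversion x l (x + s • θ) = x + (l ^ 2 / s) • θ := by
      rw [inversion, hw, add_sub_cancel_left, smul_smul]
      congr 2
      field_simp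
    have := hb (x + s • θ) (by rw [hw]; exact h1) (by rw [hw]; exact h2)
    rw [kelvin, hinv, hw] at this
    simp only [hg]
    linarith
  have hge : 0 ≤ p / l * U (x + (l ^ 2 / l) • θ) + (l / l) ^ p * -fderiv ℝ U y θ -
      fderiv ℝ U y θ - c * (2 * l) := by
    have ht := (hasDerivAt_iff_tendsto_slope.1 d5).mono_left
      (nhdsWithin_mono l (fun s (hs : s ∈ Ioi l) => ne_of_gt hs))
    refine ge_of_tendsto ht ?_
    filter_upwards [Ioo_mem_nhdsGT (show l < 3 / 2 * l by linarith)] with s hs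
    change 0 ≤ slope g l s
    rw [slope_def_field, hgl, sub_zero]
    exact div_nonneg (hgs s hs.1 hs.2) (by linarith [hs.1])
  rw [hyθ', div_self hl.ne', Real.one_rpow] at hge
  rw [radial, hlθ, map_smul, smul_eq_mul]
  have e : l * (p / l * U y + 1 * -fderiv ℝ U y θ - fderiv ℝ U y θ - c * (2 * l)) =
      p * U y - 2 * (l * fderiv ℝ U y θ) - 2 * (c * l ^ 2) := by
    field_simp
    ring
  have h1 : 0 ≤ p * U y - 2 * (l * fderiv ℝ U y θ) - 2 * (c * l ^ 2) := by
    rw [← e]; exact mul_nonneg hl.le hge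
  have h2 : 0 < c * l ^ 2 := by positivity
  linarith

theorem continuousAt_kelvin (hU : Continuous U) (hl : 0 < l) (hy : y ≠ x) :
    ContinuousAt (fun q : ℝ × EuclideanSpace ℝ (Fin n) => kelvin p U x q.1 q.2) (l, y) := by
  have h1 : 0 < ‖y - x‖ := norm_pos_iff.2 (sub_ne_zero.2 hy)
  unfold kelvin
  refine ContinuousAt.mul (ContinuousAt.rpow_const ?_ (Or.inl (by positivity)))
    (ContinuousAt.comp (f := fun q : ℝ × EuclideanSpace ℝ (Fin n) => inversion x q.1 q.2)
      hU.continuousAt (continuousAt_inversion hy))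
  exact ContinuousAt.div (by fun_prop) (by fun_prop) hl.ne'

/-- The moving-spheres procedure can start: for small radii, radial monotonicity gives the
inequality near `x`, and the growth bound gives it elsewhere. -/
theorem exists_dominates (hp : 0 < p) (hUc : Continuous U) (hU : ContDiffOn ℝ 1 U {0}ᶜ)
    (hx : x ≠ 0) (hUx : 0 < U x)
    (hgrow : ∀ r > 0, ∃ C, ∀ y, r ≤ ‖y - x‖ → U y ≤ C * ‖y - x‖ ^ p) {lam : ℝ}
    (hlam : 0 < lam) : ∃ l, 0 < l ∧ l ≤ lam ∧ Dominates p U x l := by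
  have hx' : 0 < ‖x‖ := norm_pos_iff.2 hx
  have hrad : radial p U x x < 0 := by
    rw [radial, sub_self, map_zero]
    nlinarith
  have ev : ∀ᶠ w in 𝓝 x, (radial p U x w < 0 ∧ U x / 2 < U w) ∧ w ≠ 0 :=
    (((continuousAt_radial hU hx).eventually_lt continuousAt_const hrad).and
      (continuousAt_const.eventually_lt hUc.continuousAt (by linarith))).and
      (isOpen_compl_singleton.mem_nhds hx)
  obtain ⟨r₀, hr₀, hball⟩ := Metric.eventually_nhds_iff.1 ev
  set r := r₀ / 2 with hr
  have hr0 : 0 < r := by positivity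
  have hball' : ∀ w, ‖w - x‖ ≤ r → (radial p U x w < 0 ∧ U x / 2 < U w) ∧ w ≠ 0 := by
    intro w hw
    exact hball (by rw [dist_eq_norm]; linarith)
  obtain ⟨C, hC⟩ := hgrow r hr0
  have hsmall : ∀ᶠ l : ℝ in 𝓝[>] 0, C < l ^ (-p) * (U x / 2) :=
    ((tendsto_rpow_neg_nhdsGT_zero (neg_lt_zero.2 hp)).atTop_mul_const (by positivity)).eventually_gt_atTop C
  have hsmall2 : ∀ᶠ l : ℝ in 𝓝[>] 0, l ∈ Ioo 0 (min lam r) :=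
    Ioo_mem_nhdsGT (lt_min hlam hr0)
  obtain ⟨l, hl1, hl2, hl3⟩ := (hsmall.and hsmall2).exists
  refine ⟨l, hl2, hl3.le.trans (min_le_left _ _), fun y hy0 hy => ?_⟩
  have hlr : l < r := hl3.trans_le (min_le_right _ _)
  rcases le_total ‖y - x‖ r with h1 | h1
  · refine le_kelvin_of_radial_neg hU hl2 hy fun w _ hw => ?_
    have := hball' w (hw.trans h1)
    exact ⟨this.2, this.1.1⟩
  · have hy1 : 0 < ‖y - x‖ := hl2.trans hy
    have hin : U x / 2 < U (inversion x l y) := by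
      refine (hball' _ ?_).1.2
      rw [norm_inversion_sub_center, div_le_iff₀ hy1]
      nlinarith
    calc U y ≤ C * ‖y - x‖ ^ p := hC y h1
      _ ≤ l ^ (-p) * (U x / 2) * ‖y - x‖ ^ p := by gcongr
      _ ≤ l ^ (-p) * U (inversion x l y) * ‖y - x‖ ^ p := by
        have := Real.rpow_pos_of_pos hl2 (-p)
        gcongr
      _ = kelvin p U x l y := by
        rw [kelvin, Real.div_rpow hy1.le hl2.le, Real.rpow_neg hl2.le]
        ring

/-- Away from the sphere, strict inequality at radius `l`, including at infinity, persists for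
nearby radii. -/
theorem eventually_dominates_away (hUc : Continuous U) (hl : 0 < l) {M : ℝ}
    (hinf : Tendsto (fun y => U y / ‖y - x‖ ^ p) (Bornology.cobounded _) (𝓝 M))
    (hM : M < (l ^ p)⁻¹ * U x) (hlt : ∀ y, l < ‖y - x‖ → U y < kelvin p U x l y)
    {δ : ℝ} (hδ : 0 < δ) :
    ∀ᶠ μ in 𝓝 l, ∀ y, l + δ ≤ ‖y - x‖ → U y ≤ kelvin p U x μ y := by
  obtain ⟨m, hm1, hm2⟩ := exists_between hM
  have hnorm : Tendsto (fun y : EuclideanSpace ℝ (Fin n) => ‖y - x‖)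
      (Bornology.cobounded _) atTop := by
    simp only [← dist_eq_norm]
    exact Metric.tendsto_dist_right_cobounded_atTop x
  have hfst : Tendsto (fun q : ℝ × EuclideanSpace ℝ (Fin n) => q.1)
      (𝓝 l ×ˢ Bornology.cobounded _) (𝓝 l) := tendsto_fst
  have hinvt : Tendsto (fun q : ℝ × EuclideanSpace ℝ (Fin n) => inversion x q.1 q.2)
      (𝓝 l ×ˢ Bornology.cobounded _) (𝓝 x) := by
    rw [tendsto_iff_norm_sub_tendsto_zero]
    simp only [norm_inversion_sub_center]
    exact (hfst.pow 2).div_atTop (hnorm.comp tendsto_snd)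
  have hlim : Tendsto (fun q : ℝ × EuclideanSpace ℝ (Fin n) =>
      (q.1 ^ p)⁻¹ * U (inversion x q.1 q.2)) (𝓝 l ×ˢ Bornology.cobounded _)
      (𝓝 ((l ^ p)⁻¹ * U x)) :=
    ((hfst.rpow_const (Or.inl hl.ne')).inv₀ (Real.rpow_pos_of_pos hl p).ne').mul
      (hUc.continuousAt.tendsto.comp hinvt)
  have ev1 := hlim.eventually_const_lt hm2
  obtain ⟨pa, hpa, pb, hpb, hab⟩ := eventually_prod_iff.1 ev1
  have ev2 : ∀ᶠ y in Bornology.cobounded (EuclideanSpace ℝ (Fin n)),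
      pb y ∧ U y / ‖y - x‖ ^ p < m := hpb.and (hinf.eventually_lt_const hm1)
  obtain ⟨R, -, hR⟩ := (Metric.hasBasis_cobounded_compl_closedBall x).eventually_iff.1 ev2
  set K : Set (EuclideanSpace ℝ (Fin n)) := Metric.closedBall x R ∩ {y | l + δ ≤ ‖y - x‖} with hK
  have hKc : IsCompact K :=
    (isCompact_closedBall x R).inter_right (isClosed_le continuous_const (by fun_prop))
  have ev3 : ∀ᶠ μ in 𝓝 l, ∀ y ∈ K, U y < kelvin p U x μ y := by
    refine hKc.eventually_forall_of_forall_eventually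
      (P := fun μ y => U y < kelvin p U x μ y) fun y hy => ?_
    have hy' : l < ‖y - x‖ := by
      have : l + δ ≤ ‖y - x‖ := hy.2
      linarith
    exact ContinuousAt.eventually_lt (f := fun q : ℝ × EuclideanSpace ℝ (Fin n) => U q.2)
      (hUc.comp continuous_snd).continuousAt
      (continuousAt_kelvin hUc hl (ne_center hl hy')) (hlt y hy')
  filter_upwards [ev3, hpa, lt_mem_nhds hl] with μ h1 h2 h3 y hy
  by_cases hyR : y ∈ Metric.closedBall x R
  · exact (h1 y ⟨hyR, hy⟩).le
  · obtain ⟨h4, h5⟩ := hR hyR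
    have h6 := hab h2 h4
    have hy1 : 0 < ‖y - x‖ := by linarith
    rw [div_lt_iff₀ (Real.rpow_pos_of_pos hy1 p)] at h5
    rw [kelvin, Real.div_rpow hy1.le h3.le]
    calc U y ≤ m * ‖y - x‖ ^ p := h5.le
      _ ≤ (μ ^ p)⁻¹ * U (inversion x μ y) * ‖y - x‖ ^ p := by gcongr
      _ = _ := by ring

/-- The moving-spheres procedure can continue past a radius `l < |x|`: near the sphere the radial
quantity is negative, and elsewhere the strict inequality persists. -/
theorem eventually_dominates (hUc : Continuous U) (hU : ContDiffOn ℝ 1 U {0}ᶜ)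
    (hl : 0 < l) (hlx : l < ‖x‖) {M : ℝ}
    (hinf : Tendsto (fun y => U y / ‖y - x‖ ^ p) (Bornology.cobounded _) (𝓝 M))
    (hM : M < (l ^ p)⁻¹ * U x) (hlt : ∀ y, l < ‖y - x‖ → U y < kelvin p U x l y)
    (hneg : ∀ y, ‖y - x‖ = l → radial p U x y < 0) :
    ∀ᶠ μ in 𝓝[>] l, Dominates p U x μ := by
  have hopen : IsOpen {w : EuclideanSpace ℝ (Fin n) | w ≠ 0 ∧ radial p U x w < 0} := by
    rw [isOpen_iff_mem_nhds]
    rintro w ⟨hw0, hw⟩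
    have h1 : ∀ᶠ v in 𝓝 w, v ≠ 0 := isOpen_compl_singleton.mem_nhds hw0
    exact h1.and
      ((continuousAt_radial hU hw0).eventually_lt continuousAt_const hw)
  have hsub : Metric.sphere x l ⊆ {w | w ≠ 0 ∧ radial p U x w < 0} := by
    intro w hw
    rw [mem_sphere_iff_norm] at hw
    exact ⟨ne_zero_of_norm_sub_lt (x := x) (by rw [hw]; exact hlx), hneg w hw⟩
  obtain ⟨δ, hδ, hthick⟩ := (isCompact_sphere x l).exists_thickening_subset_open hopen hsub
  -- every point of the annulus is moved onto the sphere by a radial displacement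
  have hann : ∀ w, 0 < ‖w - x‖ → |‖w - x‖ - l| < δ → w ≠ 0 ∧ radial p U x w < 0 := by
    intro w hw0 hw
    refine hthick (Metric.mem_thickening_iff.2 ⟨x + (l / ‖w - x‖) • (w - x), ?_, ?_⟩)
    · rw [mem_sphere_iff_norm, add_sub_cancel_left, norm_smul, Real.norm_of_nonneg (by positivity)]
      field_simp
    · rw [dist_eq_norm]
      have e : w - (x + (l / ‖w - x‖) • (w - x)) = (1 - l / ‖w - x‖) • (w - x) := by
        rw [sub_smul, one_smul]; abel
      rw [e, norm_smul, Real.norm_eq_abs]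
      calc |1 - l / ‖w - x‖| * ‖w - x‖ = |(1 - l / ‖w - x‖) * ‖w - x‖| := by
            rw [abs_mul, abs_of_pos hw0]
        _ = |‖w - x‖ - l| := by congr 1; field_simp
        _ < δ := hw
  have haway := eventually_dominates_away hUc hl hinf hM hlt hδ
  filter_upwards [haway.filter_mono nhdsWithin_le_nhds, self_mem_nhdsWithin] with μ h1 h2 y hy0 hy
  have h2' : l < μ := h2
  rcases le_or_gt (l + δ) ‖y - x‖ with h3 | h3
  · exact h1 y h3
  · have hμ : 0 < μ := hl.trans h2'
    have hy1 : 0 < ‖y - x‖ := hμ.trans hy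
    refine le_kelvin_of_radial_neg hU hμ hy fun w hw1 hw2 => ?_
    have hw0 : 0 < ‖w - x‖ := lt_of_lt_of_le (by positivity) hw1
    refine hann w hw0 (abs_lt.2 ⟨?_, by linarith⟩)
    -- the reflected radius `μ² / |y - x|` exceeds `l² / (l + δ) > l - δ`
    have : l - δ < μ ^ 2 / ‖y - x‖ := by
      rw [lt_div_iff₀ hy1]
      rcases le_or_gt l δ with h4 | h4
      · nlinarith [mul_nonneg (sub_nonneg.2 h4) hy1.le]
      · nlinarith [mul_le_mul_of_nonneg_left h3.le (sub_pos.2 h4).le]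
    linarith

/-- At a fixed exterior point, the inequality passes to the limit in the radius. -/
theorem isClosed_dominates (hUc : Continuous U) {a b : ℝ} (ha : 0 < a) :
    IsClosed ({l | Dominates p U x l} ∩ Icc a b) := by
  rw [isClosed_iff_frequently]
  intro l hl
  have hI : l ∈ Icc a b :=
    isClosed_iff_frequently.1 isClosed_Icc l (hl.mono fun μ hμ => hμ.2)
  have hl0 : 0 < l := ha.trans_le hI.1
  refine ⟨fun y hy0 hy => ?_, hI⟩
  by_contra! hcon
  have hk : ContinuousAt (fun μ => kelvin p U x μ y) l :=
    ContinuousAt.comp (f := fun μ : ℝ => (μ, y)) (x := l)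
      (g := fun q : ℝ × EuclideanSpace ℝ (Fin n) => kelvin p U x q.1 q.2)
      (continuousAt_kelvin hUc hl0 (ne_center hl0 hy)) (by fun_prop)
  have ev := (hk.eventually_lt continuousAt_const hcon).and (gt_mem_nhds hy)
  obtain ⟨μ, ⟨h1, -⟩, h2, h3⟩ := (hl.and_eventually ev).exists
  exact absurd (h1 y hy0 h3) (not_le.2 h2)

end MovingSpheres

/-! ### Conclusion -/

theorem stmt_4 {n : ℕ} (hn : 2 ≤ n) (p : ℝ) (hp : 0 < p)
    (f : ℝ → ℝ → ℝ)
    (hf_cont : ContinuousOn (fun q : ℝ × ℝ => f q.1 q.2) (Set.Ici 0 ×ˢ Set.Ioi 0))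
    (hf_pos : ∀ α : ℝ, 0 ≤ α → ∀ β : ℝ, 0 < β → 0 < f α β)
    (hF : ∀ x : EuclideanSpace ℝ (Fin n), x ≠ 0 → ∀ l : ℝ, 0 < l → l < ‖x‖ →
      ∀ z : EuclideanSpace ℝ (Fin n), l < ‖z - x‖ → ∀ a b : ℝ, 0 < a → a ≤ b →
      f ‖z‖ a >
        (l / ‖z - x‖) ^ (p + 2 * (n : ℝ)) *
          f ‖inversion x l z‖ ((l / ‖z - x‖) ^ p * b))
    (u : EuclideanSpace ℝ (Fin n) → ℝ)
    (hu_pos : ∀ x : EuclideanSpace ℝ (Fin n), x ≠ 0 → 0 < u x)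
    (hu_C1 : ContDiffOn ℝ 1 u {(0 : EuclideanSpace ℝ (Fin n))}ᶜ)
    (hIE : ∀ x : EuclideanSpace ℝ (Fin n), x ≠ 0 →
      u x = ∫ y : EuclideanSpace ℝ (Fin n), ‖x - y‖ ^ p * f ‖y‖ (u y)) :
    ∀ x : EuclideanSpace ℝ (Fin n), x ≠ 0 → ∀ lam : ℝ, 0 < lam → lam < ‖x‖ →
      ∀ y : EuclideanSpace ℝ (Fin n), y ≠ 0 → lam ≤ ‖y - x‖ →
        kelvin p u x lam y ≥ u y := by
  intro x hx lam hlam hlamx y hy hlamy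
  set h : EuclideanSpace ℝ (Fin n) → ℝ := fun y => f ‖y‖ (u y) with hh_def
  set U := pot p h with hU_def
  have hUu : ∀ w, w ≠ 0 → u w = U w := fun w hw => hIE w hw
  have hUpos : ∀ w, w ≠ 0 → 0 < U w := fun w hw => hUu w hw ▸ hu_pos w hw
  have hhpos : ∀ w, w ≠ 0 → 0 < h w := fun w hw => hf_pos _ (norm_nonneg w) _ (hu_pos w hw)
  have hne0 : ∀ᵐ w : EuclideanSpace ℝ (Fin n), w ≠ 0 := by
    have : Nonempty (Fin n) := ⟨⟨0, by omega⟩⟩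
    exact measure_eq_zero_iff_ae_notMem.1 (measure_singleton (0 : EuclideanSpace ℝ (Fin n)))
  -- a non-integrable integrand would give the junk value `0` for a positive quantity
  have hint0 : ∀ w, w ≠ 0 → Integrable fun y => ‖w - y‖ ^ p * h y := by
    intro w hw
    by_contra hcon
    exact (hUpos w hw).ne' (integral_undef hcon)
  have hxx : x ≠ -x := by
    intro he
    have h2 : (2 : ℝ) • x = 0 := by rw [two_smul]; exact add_eq_zero_iff_eq_neg.2 he
    exact hx ((smul_eq_zero.1 h2).resolve_left two_ne_zero)
  obtain ⟨hi, hh⟩ := integrable_of_two_centers hp hxx (hint0 x hx) (hint0 (-x) (neg_ne_zero.2 hx))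
  have hUc : Continuous U := continuous_pot hp hi hh
  have hUC1 : ContDiffOn ℝ 1 U {0}ᶜ := hu_C1.congr fun w hw => (hUu w hw).symm
  have hinf := tendsto_pot_div hp hi hh x
  have hinv_ne : ∀ l, 0 < l → l < ‖x‖ → ∀ z, l ≤ ‖z - x‖ → inversion x l z ≠ 0 := by
    intro l hl hlx z hz
    refine ne_zero_of_norm_sub_lt (x := x) (lt_of_le_of_lt ?_ hlx)
    rw [norm_inversion_sub_center, div_le_iff₀ (hl.trans_le hz)]
    nlinarith
  -- condition (F) turns the moving-spheres inequality into positivity of the density defect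
  have hG : ∀ l, 0 < l → l < ‖x‖ → Dominates p U x l →
      ∀ᵐ z, l < ‖z - x‖ → 0 < defect p h x l z := by
    intro l hl hlx hdom
    filter_upwards [hne0] with z hz0 hz
    have hzx : 0 < ‖z - x‖ := hl.trans hz
    have := hF x hx l hl hlx z hz (U z) (kelvin p U x l z) (hUpos z hz0) (hdom z hz0 hz)
    have e : (l / ‖z - x‖) ^ p * kelvin p U x l z = u (inversion x l z) := by
      rw [kelvin, hUu _ (hinv_ne l hl hlx z hz.le), ← mul_assoc,
        ← Real.mul_rpow (by positivity) (by positivity)]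
      have : l / ‖z - x‖ * (‖z - x‖ / l) = 1 := by field_simp
      rw [this, Real.one_rpow, one_mul]
    rw [e, ← hUu z hz0] at this
    exact sub_pos.2 this
  have hstep : ∀ l, 0 < l → l < ‖x‖ → Dominates p U x l →
      ∀ᶠ μ in 𝓝[>] l, Dominates p U x μ := by
    intro l hl hlx hdom
    have hGl := hG l hl hlx hdom
    obtain ⟨c, hc, hb⟩ := exists_hopf_bound hp hx hl hi hh hGl
    refine eventually_dominates hUc hUC1 hl hlx hinf (mass_lt hp hx hl hi hh hGl)
      (fun z hz => pot_lt_kelvin hp hx hl hh hGl hz) fun z hz => ?_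
    exact radial_neg_of_hopf hUC1 hl (ne_zero_of_norm_sub_lt (by rw [hz]; exact hlx)) hz hc hb
  obtain ⟨l₀, hl₀, hl₀lam, hstart⟩ := exists_dominates hp hUc hUC1 hx (hUpos x hx)
    (fun r hr => pot_le hp hi hh (hne0.mono fun w hw => (hhpos w hw).le) hr x) hlam
  have hall : Icc l₀ lam ⊆ {l | Dominates p U x l} :=
    (isClosed_dominates hUc hl₀).Icc_subset_of_forall_mem_nhdsWithin hstart
      fun l hl => hstep l (hl₀.trans_le hl.2.1) (hl.2.2.trans hlamx) hl.1
  have hdom : Dominates p U x lam := hall ⟨hl₀lam, le_rfl⟩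
  have ekel : kelvin p u x lam y = kelvin p U x lam y := by
    rw [kelvin, kelvin, hUu _ (hinv_ne lam hlam hlamx y hlamy)]
  rw [ekel, hUu y hy, ge_iff_le]
  rcases hlamy.eq_or_lt with heq | hlt
  · -- on the sphere itself both sides agree
    rw [kelvin, inversion, ← heq, div_self (pow_ne_zero 2 hlam.ne'), div_self hlam.ne',
      Real.one_rpow, one_mul, one_smul, add_sub_cancel]
  · exact hdom y hy hlt
end
end
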